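/- Let i ≠ j in I. For every graded left R^Λ(β+α_i)-module N there is an isomorphism of graded modules q^{−(α_i,α_j)} F_j^Λ E_i^Λ N ≅ E_i^Λ F_j^Λ N, natural in N; here the left-hand composite applies E_i^Λ over β (from modules over R^Λ(β+α_i) to modules over R^Λ(β)) followed by F_j^Λ over β (to modules over R^Λ(β+α_j)), and the right-hand composite applies F_j^Λ over β+α_i followed by E_i^Λ over β+α_j. -/

import Mathlib

/- ## Scaffold: Khovanov–Lauda–Rouquier algebras -/

open scoped TensorProduct

/-- A symmetrizable Cartan datum together with the structure constants of the
family of polynomials `Q`. -/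
structure CartanDatum (k : Type) [Field k] (I : Type) [Fintype I] [DecidableEq I] : Type where
  a : I → I → ℤ
  d : I → ℤ
  t : I → I → ℕ → ℕ → k
  a_diag : ∀ i, a i i = 2
  a_nonpos : ∀ i j, i ≠ j → a i j ≤ 0
  a_zero_iff : ∀ i j, a i j = 0 ↔ a j i = 0
  d_pos : ∀ i, 0 < d i
  symmetrize : ∀ i j, d i * a i j = d j * a j i
  t_symm : ∀ i j p q, t i j p q = t j i q p
  t_lead : ∀ i j, i ≠ j → t i j (-(a i j)).toNat 0 ≠ 0

namespace KLR

variable {k : Type} [Field k] {I : Type} [Fintype I] [DecidableEq I]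

/-- The symmetric bilinear form `(α_i, α_j) = d_i a_{ij}`. -/
def B (C : CartanDatum k I) (i j : I) : ℤ := C.d i * C.a i j

/-- Generators of the KLR algebra `R(n)`. -/
inductive Gen (I : Type) (n : ℕ) : Type
  | e (ν : Fin n → I) : Gen I n
  | x (a : Fin n) : Gen I n
  | tau (l : ℕ) (h : l + 1 < n) : Gen I n

variable (k) in
/-- The free algebra on the generators. -/
abbrev FA (I : Type) (n : ℕ) : Type := FreeAlgebra k (Gen I n)

variable (k) in
def ge {n : ℕ} (ν : Fin n → I) : FA k I n := FreeAlgebra.ι k (Gen.e ν)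

variable (k) in
def gx {n : ℕ} (a : Fin n) : FA k I n := FreeAlgebra.ι k (Gen.x a)

variable (k) in
def gt {n : ℕ} (l : ℕ) (h : l + 1 < n) : FA k I n := FreeAlgebra.ι k (Gen.tau l h)

/-- The polynomial `Q_{ij}(u,v)` evaluated on two elements of an algebra. -/
def Qel (C : CartanDatum k I) {A : Type} [Ring A] [Algebra k A] (i j : I) (u v : A) : A :=
  if i = j then 0 else
    ∑ p ∈ Finset.range ((-(C.a i j)).toNat + 1), ∑ q ∈ Finset.range ((-(C.a j i)).toNat + 1),
      if C.d i * (p : ℤ) + C.d j * (q : ℤ) = -(C.d i * C.a i j) then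
        C.t i j p q • (u ^ p * v ^ q) else 0

/-- The divided difference `(Q_{ij}(u,v) - Q_{ij}(w,v))/(u - w)` evaluated on elements. -/
def Qdiff (C : CartanDatum k I) {A : Type} [Ring A] [Algebra k A] (i j : I) (u v w : A) : A :=
  if i = j then 0 else
    ∑ p ∈ Finset.range ((-(C.a i j)).toNat + 1), ∑ q ∈ Finset.range ((-(C.a j i)).toNat + 1),
      if C.d i * (p : ℤ) + C.d j * (q : ℤ) = -(C.d i * C.a i j) then
        C.t i j p q • ((∑ c ∈ Finset.range p, u ^ c * w ^ (p - 1 - c)) * v ^ q) else 0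

/-- The defining relations of the KLR algebra `R(n)`. -/
inductive Rel (C : CartanDatum k I) (n : ℕ) : FA k I n → FA k I n → Prop
  | ee : ∀ ν ν' : Fin n → I, Rel C n (ge k ν * ge k ν') (if ν = ν' then ge k ν else 0)
  | esum : Rel C n (∑ ν : Fin n → I, ge k ν) 1
  | xx : ∀ a b : Fin n, Rel C n (gx k a * gx k b) (gx k b * gx k a)
  | xe : ∀ (a : Fin n) (ν : Fin n → I), Rel C n (gx k a * ge k ν) (ge k ν * gx k a)
  | taue : ∀ (l : ℕ) (h : l + 1 < n) (ν : Fin n → I),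
      Rel C n (gt k l h * ge k ν)
        (ge k (ν ∘ Equiv.swap (⟨l, Nat.lt_of_succ_lt h⟩ : Fin n) ⟨l + 1, h⟩) * gt k l h)
  | tautau : ∀ (l : ℕ) (h : l + 1 < n) (l' : ℕ) (h' : l' + 1 < n),
      (l + 1 < l' ∨ l' + 1 < l) →
      Rel C n (gt k l h * gt k l' h') (gt k l' h' * gt k l h)
  | tausq : ∀ (l : ℕ) (h : l + 1 < n) (ν : Fin n → I),
      Rel C n (gt k l h ^ 2 * ge k ν)
        (Qel C (ν ⟨l, Nat.lt_of_succ_lt h⟩) (ν ⟨l + 1, h⟩)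
          (gx k ⟨l, Nat.lt_of_succ_lt h⟩) (gx k ⟨l + 1, h⟩) * ge k ν)
  | taux : ∀ (l : ℕ) (h : l + 1 < n) (m : Fin n) (ν : Fin n → I),
      Rel C n ((gt k l h * gx k m
          - gx k (Equiv.swap (⟨l, Nat.lt_of_succ_lt h⟩ : Fin n) ⟨l + 1, h⟩ m) * gt k l h) * ge k ν)
        (if m = ⟨l, Nat.lt_of_succ_lt h⟩ ∧ ν ⟨l, Nat.lt_of_succ_lt h⟩ = ν ⟨l + 1, h⟩ then
            -(ge k ν)
          else if m = (⟨l + 1, h⟩ : Fin n) ∧ ν ⟨l, Nat.lt_of_succ_lt h⟩ = ν ⟨l + 1, h⟩ then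
            ge k ν
          else 0)
  | braid : ∀ (l : ℕ) (h2 : l + 2 < n) (ν : Fin n → I),
      Rel C n ((gt k (l + 1) h2 * gt k l (Nat.lt_of_succ_lt h2) * gt k (l + 1) h2
          - gt k l (Nat.lt_of_succ_lt h2) * gt k (l + 1) h2 * gt k l (Nat.lt_of_succ_lt h2))
          * ge k ν)
        (if ν ⟨l, Nat.lt_of_succ_lt (Nat.lt_of_succ_lt h2)⟩ = ν ⟨l + 2, h2⟩ then
            Qdiff C (ν ⟨l, Nat.lt_of_succ_lt (Nat.lt_of_succ_lt h2)⟩)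
              (ν ⟨l + 1, Nat.lt_of_succ_lt h2⟩)
              (gx k ⟨l, Nat.lt_of_succ_lt (Nat.lt_of_succ_lt h2)⟩)
              (gx k ⟨l + 1, Nat.lt_of_succ_lt h2⟩)
              (gx k ⟨l + 2, h2⟩) * ge k ν
          else 0)

/-- The Khovanov–Lauda–Rouquier algebra `R(n)`. -/
abbrev Alg (C : CartanDatum k I) (n : ℕ) : Type := RingQuot (Rel C n)

variable (C : CartanDatum k I)

/-- The generator `e(ν)` of `R(n)`. -/
noncomputable def Ee {n : ℕ} (ν : Fin n → I) : Alg C n :=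
  RingQuot.mkAlgHom k (Rel C n) (ge k ν)

/-- The generator `x_a` of `R(n)`. -/
noncomputable def Xx {n : ℕ} (a : Fin n) : Alg C n :=
  RingQuot.mkAlgHom k (Rel C n) (gx k a)

/-- The generator `τ_l` of `R(n)`. -/
noncomputable def Tt {n : ℕ} (l : ℕ) (h : l + 1 < n) : Alg C n :=
  RingQuot.mkAlgHom k (Rel C n) (gt k l h)

variable (I) in
/-- The height of `β = Σ k_i α_i`. -/
def ht (β : I → ℕ) : ℕ := ∑ i, β i

/-- The content of a sequence `ν`. -/
def content {m : ℕ} (ν : Fin m → I) : I → ℕ :=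
  fun i => (Finset.univ.filter (fun a => ν a = i)).card

/-- The set `I^β` of sequences of length `m` with content `β`. -/
def seqs (β : I → ℕ) (m : ℕ) : Finset (Fin m → I) :=
  Finset.univ.filter (fun ν => content ν = β)

/-- The central idempotent `e(β)` in `R(n)`. -/
noncomputable def eIdem (n : ℕ) (β : I → ℕ) : Alg C n := ∑ ν ∈ seqs β n, Ee C ν

/-- `β + α_i`. -/
def addA (β : I → ℕ) (i : I) : I → ℕ := fun j => β j + if j = i then 1 else 0

/-- The idempotent `e(β, α_i)` of `R(n+1)` (sum over `ν ∈ I^{β+α_i}` with `ν_{n+1} = i`). -/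
noncomputable def eR (n : ℕ) (β : I → ℕ) (i : I) : Alg C (n + 1) :=
  ∑ ν ∈ (seqs (addA β i) (n + 1)).filter (fun ν => ν (Fin.last n) = i), Ee C ν

/-- The idempotent `e(α_i, β)` of `R(n+1)` (sum over `ν ∈ I^{β+α_i}` with `ν_1 = i`). -/
noncomputable def eL (n : ℕ) (β : I → ℕ) (i : I) : Alg C (n + 1) :=
  ∑ ν ∈ (seqs (addA β i) (n + 1)).filter (fun ν => ν 0 = i), Ee C ν

/-- The idempotent `e(β - α_i, α_i)` of `R(n)`: sum over `ν ∈ I^β` with last entry `i`;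
this is `0` when the coefficient of `α_i` in `β` is `0` or `n = 0`. -/
noncomputable def eD (n : ℕ) (β : I → ℕ) (i : I) : Alg C n :=
  ∑ ν ∈ (seqs β n).filter (fun ν => if h : 0 < n then ν ⟨n - 1, Nat.sub_lt h one_pos⟩ = i
      else False), Ee C ν

/-- The relations defining `R(β) = R(n)e(β)` (a unital ring with unit the image of
`e(β)`): the KLR relations together with the relation `e(β) = 1`. -/
inductive URel (n : ℕ) (β : I → ℕ) : FA k I n → FA k I n → Prop
  | base : ∀ {x y : FA k I n}, Rel C n x y → URel n β x y
  | unit : URel n β (∑ ν ∈ seqs β n, ge k ν) 1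

/-- The algebra `R(β)`, realized as the quotient of `R(n)` identifying `e(β)` with `1`. -/
abbrev bAlg (n : ℕ) (β : I → ℕ) : Type := RingQuot (URel C n β)

/-- The canonical projection `R(n) → R(β)`. -/
noncomputable def toB {n : ℕ} {β : I → ℕ} : Alg C n →ₐ[k] bAlg C n β :=
  RingQuot.liftAlgHom (S := k)
    ⟨RingQuot.mkAlgHom k (URel C n β),
      fun _ _ h => RingQuot.mkAlgHom_rel k (URel.base h)⟩

/-- The element `a^Λ(x_1)` at the level of the free algebra. -/
noncomputable def aLamF (Λ : I → ℕ) (n : ℕ) (β : I → ℕ) : FA k I n :=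
  if h : 0 < n then
    ∑ ν ∈ seqs β n, (gx k (⟨0, h⟩ : Fin n)) ^ (Λ (ν ⟨0, h⟩)) * ge k ν
  else 0

/-- The element `a^Λ(x_1)` of `R(β)`. -/
noncomputable def aLam (Λ : I → ℕ) (n : ℕ) (β : I → ℕ) : bAlg C n β :=
  RingQuot.mkAlgHom k (URel C n β) (aLamF Λ n β)

/-- The relations defining the cyclotomic quotient `R^Λ(β)`. -/
inductive CRel (Λ : I → ℕ) (n : ℕ) (β : I → ℕ) : FA k I n → FA k I n → Prop
  | base : ∀ {x y : FA k I n}, Rel C n x y → CRel Λ n β x y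
  | unit : CRel Λ n β (∑ ν ∈ seqs β n, ge k ν) 1
  | cyc : CRel Λ n β (aLamF Λ n β) 0

/-- The cyclotomic KLR algebra `R^Λ(β)`. -/
abbrev cAlg (Λ : I → ℕ) (n : ℕ) (β : I → ℕ) : Type := RingQuot (CRel C Λ n β)

/-- The canonical projection `R(β) → R^Λ(β)`. -/
noncomputable def toC {Λ : I → ℕ} {n : ℕ} {β : I → ℕ} : bAlg C n β →ₐ[k] cAlg C Λ n β :=
  RingQuot.liftAlgHom (S := k)
    ⟨RingQuot.mkAlgHom k (CRel C Λ n β),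
      fun _ _ h => by
        cases h with
        | base hb => exact RingQuot.mkAlgHom_rel k (CRel.base hb)
        | unit => exact RingQuot.mkAlgHom_rel k CRel.unit⟩

/-- The canonical projection `R(n) → R^Λ(β)`. -/
noncomputable def toCB (Λ : I → ℕ) {n : ℕ} {β : I → ℕ} : Alg C n →ₐ[k] cAlg C Λ n β :=
  (toC C).comp (toB C)

end KLR
namespace KLR

variable {k : Type} [Field k] {I : Type} [Fintype I] [DecidableEq I] (C : CartanDatum k I)

section Homs

/-- Characterization of the non-unital algebra homomorphism `R(n) → R(n+1)` adding `i`
on the right: `e(ν) ↦ e(ν∗(i))`, `x_a ↦ x_a e(…,α_i)`, `τ_l ↦ τ_l e(…,α_i)`,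
where the relevant idempotent is supplied as `e`. -/
def IsUpR {n : ℕ} (i : I) (e : Alg C (n + 1)) (φ : Alg C n →ₙₐ[k] Alg C (n + 1)) : Prop :=
  (∀ ν : Fin n → I, φ (Ee C ν) = Ee C (Fin.snoc ν i)) ∧
  (∀ a : Fin n, φ (Xx C a) = Xx C a.castSucc * e) ∧
  (∀ (l : ℕ) (h : l + 1 < n), φ (Tt C l h) = Tt C l (Nat.lt_succ_of_lt h) * e)

/-- Characterization of the non-unital algebra homomorphism `R(n) → R(n+1)` adding `i`
on the left: `e(ν) ↦ e((i)∗ν)`, `x_a ↦ x_{a+1} e(α_i,…)`, `τ_l ↦ τ_{l+1} e(α_i,…)`. -/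
def IsUpL {n : ℕ} (i : I) (e : Alg C (n + 1)) (φ : Alg C n →ₙₐ[k] Alg C (n + 1)) : Prop :=
  (∀ ν : Fin n → I, φ (Ee C ν) = Ee C (Fin.cons i ν)) ∧
  (∀ a : Fin n, φ (Xx C a) = Xx C a.succ * e) ∧
  (∀ (l : ℕ) (h : l + 1 < n), φ (Tt C l h) = Tt C (l + 1) (Nat.succ_lt_succ h) * e)

/-- Characterization of the non-unital homomorphism `R(β) → R(β+α_i)` (right version). -/
def IsUpRb {n : ℕ} {β γ' : I → ℕ} (i : I)
    (φ : bAlg C n β →ₙₐ[k] bAlg C (n + 1) γ') : Prop :=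
  (∀ ν : Fin n → I, φ (toB C (Ee C ν)) = toB C (Ee C (Fin.snoc ν i))) ∧
  (∀ a : Fin n, φ (toB C (Xx C a)) = toB C (Xx C a.castSucc * eR C n β i)) ∧
  (∀ (l : ℕ) (h : l + 1 < n),
    φ (toB C (Tt C l h)) = toB C (Tt C l (Nat.lt_succ_of_lt h) * eR C n β i))

/-- Characterization of the non-unital homomorphism `R(β) → R(β+α_i)` (left version). -/
def IsUpLb {n : ℕ} {β γ' : I → ℕ} (i : I)
    (φ : bAlg C n β →ₙₐ[k] bAlg C (n + 1) γ') : Prop :=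
  (∀ ν : Fin n → I, φ (toB C (Ee C ν)) = toB C (Ee C (Fin.cons i ν))) ∧
  (∀ a : Fin n, φ (toB C (Xx C a)) = toB C (Xx C a.succ * eL C n β i)) ∧
  (∀ (l : ℕ) (h : l + 1 < n),
    φ (toB C (Tt C l h)) = toB C (Tt C (l + 1) (Nat.succ_lt_succ h) * eL C n β i))

/-- Characterization of the non-unital homomorphism `R^Λ(β) → R^Λ(β+α_i)` (right version). -/
def IsUpRc (Λ : I → ℕ) {n : ℕ} {β γ' : I → ℕ} (i : I)
    (φ : cAlg C Λ n β →ₙₐ[k] cAlg C Λ (n + 1) γ') : Prop :=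
  (∀ ν : Fin n → I, φ (toCB C Λ (Ee C ν)) = toCB C Λ (Ee C (Fin.snoc ν i))) ∧
  (∀ a : Fin n, φ (toCB C Λ (Xx C a)) = toCB C Λ (Xx C a.castSucc * eR C n β i)) ∧
  (∀ (l : ℕ) (h : l + 1 < n),
    φ (toCB C Λ (Tt C l h)) = toCB C Λ (Tt C l (Nat.lt_succ_of_lt h) * eR C n β i))

end Homs

section Tensor

open scoped TensorProduct

variable (S B M : Type) [Ring S] [Algebra k S] [Ring B] [Algebra k B]
  [AddCommGroup M] [Module k M] [Module S M] [IsScalarTower k S M]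

variable (k) in
/-- The relation submodule defining the balanced tensor product `B ⊗_S M` where `S`
acts on `B` on the right through the (non-unital) homomorphism `φ : S → B`. -/
def TRel (φ : S →ₙₐ[k] B) : Submodule B (B ⊗[k] M) :=
  Submodule.span B {z | ∃ (b : B) (r : S) (m : M), z = (b * φ r) ⊗ₜ[k] m - b ⊗ₜ[k] (r • m)}

variable (k) in
/-- The balanced tensor product `B ⊗_S M` (over the homomorphism `φ : S → B`). -/
abbrev OT (φ : S →ₙₐ[k] B) : Type := (B ⊗[k] M) ⧸ TRel k S B M φ

variable (k) in
/-- The canonical projection onto the balanced tensor product. -/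
def OTmk (φ : S →ₙₐ[k] B) (z : B ⊗[k] M) : OT k S B M φ := Submodule.Quotient.mk z

end Tensor

section ESub

variable (A : Type) [Ring A] [Algebra k A] (N : Type) [AddCommGroup N] [Module k N]
  [Module A N] [IsScalarTower k A N]

variable (k) in
/-- Multiplication by `e` as a `k`-linear endomorphism of an `A`-module. -/
def eMap (e : A) : N →ₗ[k] N where
  toFun x := e • x
  map_add' x y := smul_add e x y
  map_smul' c x := by
    simp only [RingHom.id_apply]
    rw [← algebraMap_smul A c x, ← mul_smul, ← Algebra.commutes, mul_smul, algebraMap_smul]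

variable (k) in
/-- The `k`-submodule `eN` of an `A`-module `N`. -/
def eSub (e : A) : Submodule k N := LinearMap.range (eMap k A N e)

end ESub

section Grading

variable {A M : Type}

variable (k) in
/-- `𝒜` is an algebra grading of `A`. -/
def IsAlgGrading [Ring A] [Algebra k A] (𝒜 : ℤ → Submodule k A) : Prop :=
  (1 : A) ∈ 𝒜 0 ∧ (∀ {c₁ c₂ : ℤ} {a b : A}, a ∈ 𝒜 c₁ → b ∈ 𝒜 c₂ → a * b ∈ 𝒜 (c₁ + c₂)) ∧
    DirectSum.IsInternal 𝒜

variable (k) in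
/-- `gr` is a grading of the `A`-module `M` compatible with the algebra grading `𝒜`. -/
def IsModGrading [Ring A] [Algebra k A] [AddCommGroup M] [Module k M] [Module A M]
    (𝒜 : ℤ → Submodule k A) (gr : ℤ → Submodule k M) : Prop :=
  DirectSum.IsInternal gr ∧
    ∀ {c m : ℤ} {a : A} {x : M}, a ∈ 𝒜 c → x ∈ gr m → a • x ∈ gr (c + m)

end Grading

section KLRGrading

/-- The canonical grading property for `R(n)`-type quotients: images of `e(ν)` have degree 0,
`x_a e(ν)` has degree `(α_{ν_a}, α_{ν_a})`, and `τ_l e(ν)` has degree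
`-(α_{ν_l}, α_{ν_{l+1}})`.  Here `p : R(n) → A` is the canonical projection onto the
quotient under consideration. -/
def IsKLRGrading {n : ℕ} {A : Type} [Ring A] [Algebra k A] (p : Alg C n →ₐ[k] A)
    (𝒜 : ℤ → Submodule k A) : Prop :=
  IsAlgGrading k 𝒜 ∧
  (∀ ν : Fin n → I, p (Ee C ν) ∈ 𝒜 0) ∧
  (∀ (a : Fin n) (ν : Fin n → I), p (Xx C a * Ee C ν) ∈ 𝒜 (B C (ν a) (ν a))) ∧
  (∀ (l : ℕ) (h : l + 1 < n) (ν : Fin n → I),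
    p (Tt C l h * Ee C ν) ∈ 𝒜 (-(B C (ν ⟨l, Nat.lt_of_succ_lt h⟩) (ν ⟨l + 1, h⟩))))

end KLRGrading

end KLR
namespace KLR

open scoped TensorProduct

variable {k : Type} [Field k] {I : Type} [Fintype I] [DecidableEq I] (C : CartanDatum k I)

section IndGrading

variable (S B M : Type) [Ring S] [Algebra k S] [Ring B] [Algebra k B]
  [AddCommGroup M] [Module k M] [Module S M] [IsScalarTower k S M]

variable (k) in
/-- The induced grading on the balanced tensor product `B ⊗_S M`. -/
def otGr (φ : S →ₙₐ[k] B) (𝒜 : ℤ → Submodule k B) (gr : ℤ → Submodule k M)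
    (c : ℤ) : Submodule k (OT k S B M φ) :=
  Submodule.span k {z | ∃ (c₁ c₂ : ℤ) (b : B) (m : M),
    c₁ + c₂ = c ∧ b ∈ 𝒜 c₁ ∧ m ∈ gr c₂ ∧ z = OTmk k S B M φ (b ⊗ₜ[k] m)}

end IndGrading

section ESubGrading

variable (A N : Type) [Ring A] [Algebra k A] [AddCommGroup N] [Module k N]
  [Module A N] [IsScalarTower k A N]

variable (k) in
/-- The induced grading on the submodule `eN ⊆ N`. -/
def eSubGr (e : A) (gr : ℤ → Submodule k N) (c : ℤ) : Submodule k ↥(eSub k A N e) :=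
  (gr c).comap (eSub k A N e).subtype

end ESubGrading

section Instances

variable (n : ℕ) (β : I → ℕ) (Λ : I → ℕ)

noncomputable instance : Module (bAlg C n β) (cAlg C Λ n β) :=
  Module.compHom _ (toC C (Λ := Λ) (n := n) (β := β)).toRingHom

instance : IsScalarTower k (bAlg C n β) (cAlg C Λ n β) := by
  constructor
  intro c s m
  show (toC C (c • s)) * m = c • (toC C s * m)
  rw [map_smul, Algebra.smul_mul_assoc]

end Instances


end KLR
namespace KLR

open scoped TensorProduct

variable {k : Type} [Field k] {I : Type} [Fintype I] [DecidableEq I] (C : CartanDatum k I)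

/-- `⟨h_i, β⟩ = Σ_j k_j a_{ij}`. -/
def pairH (i : I) (β : I → ℕ) : ℤ := ∑ j, (β j : ℤ) * C.a i j

/-- `(α_i, β) = Σ_j k_j (α_i, α_j)`. -/
def pairB (i : I) (β : I → ℕ) : ℤ := ∑ j, (β j : ℤ) * B C i j

/-- The ordered product `τ_1 τ_2 ⋯ τ_n` in `R(β+α_i)`-type quotients. -/
noncomputable def tauProd (n : ℕ) (γ : I → ℕ) : bAlg C (n + 1) γ :=
  (List.ofFn (fun l : Fin n => toB C (Tt C l.val (Nat.succ_lt_succ l.isLt)))).prod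

/-- The right ideal `Ae` as a `k`-submodule. -/
noncomputable def rId {A : Type} [Ring A] [Algebra k A] (e : A) : Submodule k A :=
  LinearMap.range (LinearMap.mulRight k e)

/-- The left ideal `eA` as a `k`-submodule. -/
noncomputable def lId {A : Type} [Ring A] [Algebra k A] (e : A) : Submodule k A :=
  LinearMap.range (LinearMap.mulLeft k e)

variable (k) in
/-- Characterization of the module structure on `eN` over `S'` acting through
the (non-unital) homomorphism `φ : S' → A`. -/
def IsEAction {A N S' : Type} [Ring A] [Algebra k A] [AddCommGroup N] [Module k N]
    [Module A N] [IsScalarTower k A N] [Ring S'] [Algebra k S']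
    (e : A) (φ : S' →ₙₐ[k] A) (inst : Module S' ↥(eSub k A N e)) : Prop :=
  letI := inst
  ∀ (r : S') (x : ↥(eSub k A N e)), ((r • x : ↥(eSub k A N e)) : N) = φ r • (x : N)

end KLR

namespace KLR

variable {k : Type} [Field k] {I : Type} [Fintype I] [DecidableEq I] (C : CartanDatum k I)

/-- The image of `e(β,α_i)` in `R(β+α_i)`. -/
noncomputable def eRb (n : ℕ) (β : I → ℕ) (i : I) : bAlg C (n + 1) (addA β i) :=
  toB C (eR C n β i)

/-- The image of `e(α_i,β)` in `R(β+α_i)`. -/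
noncomputable def eLb (n : ℕ) (β : I → ℕ) (i : I) : bAlg C (n + 1) (addA β i) :=
  toB C (eL C n β i)

/-- The image of `e(β-α_i,α_i)` in `R(β)`. -/
noncomputable def eDb (n : ℕ) (β : I → ℕ) (i : I) : bAlg C n β :=
  toB C (eD C n β i)

/-- The image of `e(β,α_i)` in `R^Λ(β+α_i)`. -/
noncomputable def eRc (Λ : I → ℕ) (n : ℕ) (β : I → ℕ) (i : I) :
    cAlg C Λ (n + 1) (addA β i) :=
  toCB C Λ (eR C n β i)

/-- The image of `e(β-α_i,α_i)` in `R^Λ(β)`. -/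
noncomputable def eDc (Λ : I → ℕ) (n : ℕ) (β : I → ℕ) (i : I) : cAlg C Λ n β :=
  toCB C Λ (eD C n β i)

end KLR

namespace KLR

variable {k : Type} [Field k] {I : Type} [Fintype I] [DecidableEq I]

variable (k) in
/-- Bundled data of the canonical module structure on `eN` over `S'`, acting through
the non-unital homomorphism `φ : S' → A`, together with its scalar-tower property. -/
structure EData {A S' : Type} (N : Type) [Ring A] [Algebra k A] [AddCommGroup N]
    [Module k N] [Module A N] [IsScalarTower k A N] [Ring S'] [Algebra k S']
    (e : A) (φ : S' →ₙₐ[k] A) : Type where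
  inst : Module S' ↥(eSub k A N e)
  compat : IsEAction k e φ inst
  tower : letI := inst; IsScalarTower k S' ↥(eSub k A N e)

end KLR


namespace KLR

section Tower

variable {k : Type} [Field k] {I : Type} [Fintype I] [DecidableEq I] (C : CartanDatum k I)

theorem map_Qel {A A' : Type} [Ring A] [Algebra k A] [Ring A'] [Algebra k A']
    (f : A →ₐ[k] A') (i j : I) (u v : A) :
    f (Qel C i j u v) = Qel C i j (f u) (f v) := by
  unfold Qel
  split_ifs
  · simp
  · simp only [map_sum]
    refine Finset.sum_congr rfl fun p _ => Finset.sum_congr rfl fun q _ => ?_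
    split_ifs <;> simp

theorem map_Qdiff {A A' : Type} [Ring A] [Algebra k A] [Ring A'] [Algebra k A']
    (f : A →ₐ[k] A') (i j : I) (u v w : A) :
    f (Qdiff C i j u v w) = Qdiff C i j (f u) (f v) (f w) := by
  unfold Qdiff
  split_ifs
  · simp
  · simp only [map_sum]
    refine Finset.sum_congr rfl fun p _ => Finset.sum_congr rfl fun q _ => ?_
    split_ifs <;> simp [map_sum]

/-- Elements of an algebra satisfying the KLR relations. -/
structure RepData (n : ℕ) (A : Type) [Ring A] [Algebra k A] : Type where
  e : (Fin n → I) → A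
  x : Fin n → A
  t : (l : ℕ) → l + 1 < n → A
  ee : ∀ ν ν' : Fin n → I, e ν * e ν' = if ν = ν' then e ν else 0
  esum : ∑ ν : Fin n → I, e ν = 1
  xx : ∀ a b : Fin n, x a * x b = x b * x a
  xe : ∀ (a : Fin n) (ν : Fin n → I), x a * e ν = e ν * x a
  taue : ∀ (l : ℕ) (h : l + 1 < n) (ν : Fin n → I),
      t l h * e ν = e (ν ∘ Equiv.swap (⟨l, Nat.lt_of_succ_lt h⟩ : Fin n) ⟨l + 1, h⟩) * t l h
  tautau : ∀ (l : ℕ) (h : l + 1 < n) (l' : ℕ) (h' : l' + 1 < n),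
      (l + 1 < l' ∨ l' + 1 < l) → t l h * t l' h' = t l' h' * t l h
  tausq : ∀ (l : ℕ) (h : l + 1 < n) (ν : Fin n → I),
      t l h ^ 2 * e ν =
        Qel C (ν ⟨l, Nat.lt_of_succ_lt h⟩) (ν ⟨l + 1, h⟩)
          (x ⟨l, Nat.lt_of_succ_lt h⟩) (x ⟨l + 1, h⟩) * e ν
  taux : ∀ (l : ℕ) (h : l + 1 < n) (m : Fin n) (ν : Fin n → I),
      (t l h * x m - x (Equiv.swap (⟨l, Nat.lt_of_succ_lt h⟩ : Fin n) ⟨l + 1, h⟩ m) * t l h) * e ν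
        = (if m = ⟨l, Nat.lt_of_succ_lt h⟩ ∧ ν ⟨l, Nat.lt_of_succ_lt h⟩ = ν ⟨l + 1, h⟩ then
            -(e ν)
          else if m = (⟨l + 1, h⟩ : Fin n) ∧ ν ⟨l, Nat.lt_of_succ_lt h⟩ = ν ⟨l + 1, h⟩ then
            e ν
          else 0)
  braid : ∀ (l : ℕ) (h2 : l + 2 < n) (ν : Fin n → I),
      (t (l + 1) h2 * t l (Nat.lt_of_succ_lt h2) * t (l + 1) h2
          - t l (Nat.lt_of_succ_lt h2) * t (l + 1) h2 * t l (Nat.lt_of_succ_lt h2)) * e ν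
        = (if ν ⟨l, Nat.lt_of_succ_lt (Nat.lt_of_succ_lt h2)⟩ = ν ⟨l + 2, h2⟩ then
            Qdiff C (ν ⟨l, Nat.lt_of_succ_lt (Nat.lt_of_succ_lt h2)⟩)
              (ν ⟨l + 1, Nat.lt_of_succ_lt h2⟩)
              (x ⟨l, Nat.lt_of_succ_lt (Nat.lt_of_succ_lt h2)⟩)
              (x ⟨l + 1, Nat.lt_of_succ_lt h2⟩)
              (x ⟨l + 2, h2⟩) * e ν
          else 0)

/-- The tautological representation data. -/
noncomputable def tautData (n : ℕ) : RepData C n (Alg C n) where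
  e := Ee C
  x := Xx C
  t := Tt C
  ee ν ν' := by
    have := RingQuot.mkAlgHom_rel k (Rel.ee (C := C) ν ν')
    rw [map_mul] at this
    rw [Ee, Ee, this]; split_ifs <;> simp
  esum := by
    have := RingQuot.mkAlgHom_rel k (Rel.esum (C := C) (n := n))
    rw [map_sum, map_one] at this
    exact this
  xx a b := by
    have := RingQuot.mkAlgHom_rel k (Rel.xx (C := C) a b)
    simp only [map_mul] at this
    exact this
  xe a b := by
    have := RingQuot.mkAlgHom_rel k (Rel.xe (C := C) a b)
    simp only [map_mul] at this
    exact this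
  taue l h ν := by
    have := RingQuot.mkAlgHom_rel k (Rel.taue (C := C) l h ν)
    simp only [map_mul] at this
    exact this
  tautau l h l' h' H := by
    have := RingQuot.mkAlgHom_rel k (Rel.tautau (C := C) l h l' h' H)
    simp only [map_mul] at this
    exact this
  tausq l h ν := by
    have := RingQuot.mkAlgHom_rel k (Rel.tausq (C := C) l h ν)
    simp only [map_mul, map_pow, map_Qel] at this
    exact this
  taux l h m ν := by
    have := RingQuot.mkAlgHom_rel k (Rel.taux (C := C) l h m ν)
    simp only [map_mul, map_sub, apply_ite (RingQuot.mkAlgHom k (Rel C n)), map_zero, map_neg]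
      at this
    exact this
  braid l h ν := by
    have := RingQuot.mkAlgHom_rel k (Rel.braid (C := C) l h ν)
    simp only [map_mul, map_sub, apply_ite (RingQuot.mkAlgHom k (Rel C n)), map_zero, map_Qdiff]
      at this
    exact this

variable {C}

namespace RepData
variable {n : ℕ} {A : Type} [Ring A] [Algebra k A] (D : RepData C n A)

/-- The images of the generators. -/
def gen : Gen I n → A
  | Gen.e ν => D.e ν
  | Gen.x a => D.x a
  | Gen.tau l h => D.t l h

theorem rel {x y : FA k I n} (h : Rel C n x y) :
    FreeAlgebra.lift k D.gen x = FreeAlgebra.lift k D.gen y := by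
  have he : ∀ ν, FreeAlgebra.lift k D.gen (ge k ν) = D.e ν := fun ν => by
    rw [ge, FreeAlgebra.lift_ι_apply]; rfl
  have hx : ∀ ν, FreeAlgebra.lift k D.gen (gx k ν) = D.x ν := fun ν => by
    rw [gx, FreeAlgebra.lift_ι_apply]; rfl
  have ht : ∀ l h, FreeAlgebra.lift k D.gen (gt k l h) = D.t l h := fun ν h => by
    rw [gt, FreeAlgebra.lift_ι_apply]; rfl
  cases h with
  | ee ν ν' =>
    rw [map_mul, he, he, D.ee, apply_ite (FreeAlgebra.lift k D.gen), he, map_zero]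
  | esum => rw [map_sum, map_one, ← D.esum]; simp only [he]
  | xx a b => simp only [map_mul, hx, D.xx a b]
  | xe a b => simp only [map_mul, hx, he, D.xe a b]
  | taue l h ν => simp only [map_mul, ht, he, D.taue l h ν]
  | tautau l h l' h' H => simp only [map_mul, ht, D.tautau l h l' h' H]
  | tausq l h ν => simp only [map_mul, map_pow, map_Qel, ht, he, hx, D.tausq]
  | taux l h m ν =>
    simp only [map_mul, map_sub, apply_ite (FreeAlgebra.lift k D.gen), map_zero, map_neg,
      ht, hx, he, D.taux]
  | braid l h ν =>
    simp only [map_mul, map_sub, apply_ite (FreeAlgebra.lift k D.gen), map_zero,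
      map_Qdiff, ht, hx, he, D.braid]

/-- The algebra homomorphism out of `R(n)` determined by elements satisfying the relations. -/
noncomputable def lift : Alg C n →ₐ[k] A :=
  RingQuot.liftAlgHom (S := k) ⟨FreeAlgebra.lift k D.gen, fun _ _ h => D.rel h⟩

@[simp] theorem lift_Ee (ν : Fin n → I) : D.lift (Ee C ν) = D.e ν := by
  rw [lift, Ee, RingQuot.liftAlgHom_mkAlgHom_apply, ge, FreeAlgebra.lift_ι_apply]; rfl
@[simp] theorem lift_Xx (a : Fin n) : D.lift (Xx C a) = D.x a := by
  rw [lift, Xx, RingQuot.liftAlgHom_mkAlgHom_apply, gx, FreeAlgebra.lift_ι_apply]; rfl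
@[simp] theorem lift_Tt (l : ℕ) (h : l + 1 < n) : D.lift (Tt C l h) = D.t l h := by
  rw [lift, Tt, RingQuot.liftAlgHom_mkAlgHom_apply, gt, FreeAlgebra.lift_ι_apply]; rfl

end RepData

theorem Alg_induct {n : ℕ} {p : Alg C n → Prop} (hs : ∀ c : k, p (algebraMap k _ c))
    (he : ∀ ν, p (Ee C ν)) (hx : ∀ a, p (Xx C a)) (ht : ∀ l h, p (Tt C l h))
    (hadd : ∀ a b, p a → p b → p (a + b)) (hmul : ∀ a b, p a → p b → p (a * b))
    (r : Alg C n) : p r := by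
  obtain ⟨r, rfl⟩ := RingQuot.mkAlgHom_surjective k (Rel C n) r
  induction r using FreeAlgebra.induction with
  | grade0 c => rw [AlgHom.commutes]; exact hs c
  | grade1 g =>
    cases g with
    | e ν => exact he ν
    | x a => exact hx a
    | tau l h => exact ht l h
  | mul a b ha hb => rw [map_mul]; exact hmul _ _ ha hb
  | add a b ha hb => rw [map_add]; exact hadd _ _ ha hb

theorem Ee_mul {n : ℕ} (ν ν' : Fin n → I) :
    Ee C ν * Ee C ν' = if ν = ν' then Ee C ν else 0 := (tautData C n).ee ν ν'
theorem Ee_sum {n : ℕ} : ∑ ν : Fin n → I, Ee C ν = 1 := (tautData C n).esum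

theorem Ee_ext {n : ℕ} {a b : Alg C n} (h : ∀ ν, a * Ee C ν = b * Ee C ν) : a = b := by
  rw [← mul_one a, ← mul_one b, ← Ee_sum, Finset.mul_sum, Finset.mul_sum]
  exact Finset.sum_congr rfl fun ν _ => h ν

theorem snoc_lt {n : ℕ} {α : Type} (ν : Fin n → α) (i : α) (a : ℕ) (h : a < n + 1) (h' : a < n) :
    (Fin.snoc ν i : Fin (n + 1) → α) ⟨a, h⟩ = ν ⟨a, h'⟩ := by
  simp [Fin.snoc, h', Fin.castLT]

theorem snoc_swap {n : ℕ} {α : Type} (ν : Fin n → α) (i : α) (l : ℕ) (h : l + 1 < n) :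
    (Fin.snoc ν i : Fin (n + 1) → α) ∘ Equiv.swap (⟨l, by omega⟩ : Fin (n + 1)) ⟨l + 1, by omega⟩
      = Fin.snoc (ν ∘ Equiv.swap (⟨l, by omega⟩ : Fin n) ⟨l + 1, h⟩) i := by
  have e1 : (⟨l, by omega⟩ : Fin (n + 1)) = Fin.castSucc ⟨l, by omega⟩ := rfl
  have e2 : (⟨l + 1, by omega⟩ : Fin (n + 1)) = Fin.castSucc ⟨l + 1, h⟩ := rfl
  funext a
  rw [e1, e2]
  induction a using Fin.lastCases with
  | last =>
    rw [Function.comp_apply, Equiv.swap_apply_of_ne_of_ne (Fin.castSucc_lt_last _).ne'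
      (Fin.castSucc_lt_last _).ne']
    simp
  | cast a =>
    have := (Fin.castSucc_injective n).swap_apply ⟨l, by omega⟩ ⟨l + 1, h⟩ a
    rw [Function.comp_apply, this, Fin.snoc_castSucc, Fin.snoc_castSucc]; rfl

theorem snoc_ext_iff {n : ℕ} {α : Type} (ν ν' : Fin n → α) (i i' : α) :
    (Fin.snoc ν i : Fin (n + 1) → α) = Fin.snoc ν' i' ↔ ν = ν' ∧ i = i' := by
  constructor
  · intro h
    refine ⟨?_, ?_⟩
    · funext a
      have := congrFun h a.castSucc
      simpa using this
    · simpa using congrFun h (Fin.last n)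
  · rintro ⟨rfl, rfl⟩; rfl

variable (C) in
/-- Data for the unital embedding `R(n) → R(n+1)`. -/
noncomputable def iotaData (n : ℕ) : RepData C n (Alg C (n + 1)) where
  e ν := ∑ l : I, Ee C (Fin.snoc ν l)
  x a := Xx C a.castSucc
  t l h := Tt C l (Nat.lt_succ_of_lt h)
  ee ν ν' := by
    simp only [Finset.sum_mul_sum, Ee_mul, snoc_ext_iff]
    by_cases h : ν = ν'
    · simp [h]
    · simp [h]
  esum := by
    rw [← Ee_sum, ← Fintype.sum_prod_type']
    refine Fintype.sum_equiv ((Equiv.prodComm _ _).trans (Fin.snocEquiv fun _ => I)) _ _ ?_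
    intro x; rfl
  xx a b := (tautData C _).xx _ _
  xe a ν := by
    rw [Finset.mul_sum, Finset.sum_mul]
    exact Finset.sum_congr rfl fun l _ => (tautData C _).xe _ _
  taue l h ν := by
    rw [Finset.mul_sum, Finset.sum_mul]
    refine Finset.sum_congr rfl fun i _ => ?_
    rw [← snoc_swap]
    exact (tautData C _).taue _ _ _
  tautau l h l' h' H := (tautData C _).tautau _ _ _ _ H
  tausq l h ν := by
    rw [Finset.mul_sum, Finset.mul_sum]
    refine Finset.sum_congr rfl fun i _ => ?_
    have := (tautData C (n+1)).tausq l (by omega) (Fin.snoc ν i)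
    rw [snoc_lt _ _ _ _ h, snoc_lt _ _ _ _ (Nat.lt_of_succ_lt h)] at this
    exact this
  taux l h m ν := by
    rw [Finset.mul_sum]
    have e1 : (⟨l, by omega⟩ : Fin (n + 1)) = Fin.castSucc ⟨l, by omega⟩ := rfl
    have e2 : (⟨l + 1, by omega⟩ : Fin (n + 1)) = Fin.castSucc ⟨l + 1, h⟩ := rfl
    have key : ∀ i : I, _ := fun i =>
      (tautData C (n+1)).taux l (by omega) m.castSucc (Fin.snoc ν i)
    simp only [Fin.snoc_castSucc, e1, e2,
      (Fin.castSucc_injective n).swap_apply, Fin.castSucc_inj] at key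
    refine (Finset.sum_congr rfl fun i _ => key i).trans ?_
    split_ifs <;> simp [tautData]
  braid l h ν := by
    rw [Finset.mul_sum]
    have key : ∀ i : I, _ := fun i =>
      (tautData C (n+1)).braid l (by omega) (Fin.snoc ν i)
    simp only [snoc_lt _ _ _ _ h, snoc_lt _ _ _ _ (Nat.lt_of_succ_lt h),
      snoc_lt _ _ _ _ (Nat.lt_of_succ_lt (Nat.lt_of_succ_lt h))] at key
    refine (Finset.sum_congr rfl fun i _ => key i).trans ?_
    split_ifs
    · rw [Finset.mul_sum]; rfl
    · simp

variable (C) in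
/-- The unital embedding `R(n) → R(n+1)`. -/
noncomputable def iota (n : ℕ) : Alg C n →ₐ[k] Alg C (n + 1) := (iotaData C n).lift

@[simp] theorem iota_Ee {n : ℕ} (ν : Fin n → I) :
    iota C n (Ee C ν) = ∑ l : I, Ee C (Fin.snoc ν l) := (iotaData C n).lift_Ee ν
@[simp] theorem iota_Xx {n : ℕ} (a : Fin n) :
    iota C n (Xx C a) = Xx C a.castSucc := (iotaData C n).lift_Xx a
@[simp] theorem iota_Tt {n : ℕ} (l : ℕ) (h : l + 1 < n) :
    iota C n (Tt C l h) = Tt C l (Nat.lt_succ_of_lt h) := (iotaData C n).lift_Tt l h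

end Tower
end KLR


namespace KLR

section Tower2

variable {k : Type} [Field k] {I : Type} [Fintype I] [DecidableEq I] (C : CartanDatum k I)

/-- The last polynomial generator. -/
noncomputable def XL (n : ℕ) : Alg C (n + 1) := Xx C (Fin.last n)
/-- The idempotent fixing the last colour. -/
noncomputable def EL (n : ℕ) (l : I) : Alg C (n + 1) := ∑ ν : Fin n → I, Ee C (Fin.snoc ν l)
/-- The last `τ`. -/
noncomputable def TL (n : ℕ) : Alg C (n + 2) := Tt C n (Nat.lt_succ_self (n + 1))

variable {C}

theorem iota_Ee_Ee {n : ℕ} (μ : Fin n → I) (ν : Fin (n + 1) → I) :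
    iota C n (Ee C μ) * Ee C ν = if μ = Fin.init ν then Ee C ν else 0 := by
  rw [iota_Ee, Finset.sum_mul]
  simp only [Ee_mul]
  conv_lhs => rw [← Fin.snoc_init_self ν]
  simp only [snoc_ext_iff]
  by_cases h : μ = Fin.init ν
  · subst h
    simp [Fin.snoc_init_self]
  · simp [h]

theorem EL_Ee {n : ℕ} (l : I) (ν : Fin (n + 1) → I) :
    EL C n l * Ee C ν = if ν (Fin.last n) = l then Ee C ν else 0 := by
  rw [EL, Finset.sum_mul]
  simp only [Ee_mul]
  conv_lhs => rw [← Fin.snoc_init_self ν]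
  simp only [snoc_ext_iff]
  by_cases h : ν (Fin.last n) = l
  · subst h
    simp [Fin.snoc_init_self]
  · simp [h, Ne.symm h]

theorem iota_EL_Ee {n : ℕ} (l : I) (ν : Fin (n + 2) → I) :
    iota C (n + 1) (EL C n l) * Ee C ν = if ν (Fin.last n).castSucc = l then Ee C ν else 0 := by
  rw [EL, map_sum, Finset.sum_mul]
  simp only [iota_Ee_Ee]
  conv_lhs => rw [← Fin.snoc_init_self (Fin.init ν)]
  simp only [snoc_ext_iff]
  by_cases h : ν (Fin.last n).castSucc = l
  · subst h
    simp [Fin.init]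
  · simp [h, Ne.symm h, Fin.init]

theorem iota_iota_EL_Ee {n : ℕ} (l : I) (ν : Fin (n + 3) → I) :
    iota C (n + 2) (iota C (n + 1) (EL C n l)) * Ee C ν
      = if ν (Fin.last n).castSucc.castSucc = l then Ee C ν else 0 := by
  rw [EL, map_sum, map_sum, Finset.sum_mul]
  have : ∀ μ : Fin (n + 1) → I, iota C (n + 2) (iota C (n + 1) (Ee C μ)) * Ee C ν
    = if μ = Fin.init (Fin.init ν) then Ee C ν else 0 := by
    intro μ
    rw [iota_Ee, map_sum, Finset.sum_mul]
    simp only [iota_Ee_Ee]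
    conv_lhs => rw [← Fin.snoc_init_self (Fin.init ν)]
    simp only [snoc_ext_iff]
    by_cases h : μ = Fin.init (Fin.init ν)
    · subst h
      simp 
    · simp [h]
  simp only [this]
  conv_lhs => rw [← Fin.snoc_init_self (Fin.init (Fin.init ν))]
  simp only [snoc_ext_iff]
  by_cases h : ν (Fin.last n).castSucc.castSucc = l
  · subst h
    simp [Fin.init]
  · simp [h, Ne.symm h, Fin.init]

theorem iota_iota_Ee_Ee {n : ℕ} (μ : Fin n → I) (ν : Fin (n + 2) → I) :
    iota C (n + 1) (iota C n (Ee C μ)) * Ee C ν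
    = if μ = Fin.init (Fin.init ν) then Ee C ν else 0 := by
  rw [iota_Ee, map_sum, Finset.sum_mul]
  simp only [iota_Ee_Ee]
  conv_lhs => rw [← Fin.snoc_init_self (Fin.init ν)]
  simp only [snoc_ext_iff]
  by_cases h : μ = Fin.init (Fin.init ν)
  · subst h
    simp
  · simp [h]

theorem Xx_Ee {n : ℕ} (a : Fin n) (ν : Fin n → I) : Xx C a * Ee C ν = Ee C ν * Xx C a :=
  (tautData C n).xe a ν

theorem Tt_Ee {n : ℕ} (l : ℕ) (h : l + 1 < n) (ν : Fin n → I) : Tt C l h * Ee C ν =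
    Ee C (ν ∘ Equiv.swap (⟨l, Nat.lt_of_succ_lt h⟩ : Fin n) ⟨l + 1, h⟩) * Tt C l h :=
  (tautData C n).taue l h ν

/-- The sequence with last two entries swapped. -/
theorem TL_Ee {n : ℕ} (ν : Fin (n + 2) → I) : TL C n * Ee C ν =
    Ee C (ν ∘ Equiv.swap (Fin.last n).castSucc (Fin.last (n + 1))) * TL C n :=
  Tt_Ee _ _ _

theorem iota_comm_of {n : ℕ} {A : Type} [Ring A] [Algebra k A] (f : Alg C n →ₐ[k] A) (Y : A)
    (he : ∀ ν, Commute (f (Ee C ν)) Y) (hx : ∀ a, Commute (f (Xx C a)) Y)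
    (ht : ∀ l h, Commute (f (Tt C l h)) Y) (r : Alg C n) : Commute (f r) Y := by
  induction r using Alg_induct with
  | hs c => rw [AlgHom.commutes]; exact Algebra.commutes _ _
  | he ν => exact he ν
  | hx a => exact hx a
  | ht l h => exact ht l h
  | hadd a b ha hb => rw [map_add]; exact ha.add_left hb
  | hmul a b ha hb => rw [map_mul]; exact ha.mul_left hb

theorem Ee_EL {n : ℕ} (l : I) (ν : Fin (n + 1) → I) :
    Ee C ν * EL C n l = if ν (Fin.last n) = l then Ee C ν else 0 := by
  rw [EL, Finset.mul_sum]
  simp only [Ee_mul]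
  conv_lhs => rw [← Fin.snoc_init_self ν]
  simp only [snoc_ext_iff]
  by_cases h : ν (Fin.last n) = l
  · subst h
    simp [Fin.snoc_init_self]
  · simp [h]

theorem Ee_eq {n : ℕ} (ν : Fin (n + 1) → I) :
    Ee C ν = iota C n (Ee C (Fin.init ν)) * EL C n (ν (Fin.last n)) := by
  rw [iota_Ee, Finset.sum_mul]
  simp only [Ee_EL, Fin.snoc_last]
  simp [Fin.snoc_init_self]

theorem EL_comm {n : ℕ} (r : Alg C n) (l : I) : Commute (iota C n r) (EL C n l) := by
  apply iota_comm_of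
  · intro ν
    refine Ee_ext fun μ => ?_
    rw [mul_assoc, mul_assoc, EL_Ee, iota_Ee_Ee]
    split_ifs <;> simp [EL_Ee, iota_Ee_Ee, *, -iota_Ee]
  · intro a
    rw [iota_Xx, EL]
    exact Commute.sum_right _ _ _ fun ν _ => Xx_Ee _ _
  · intro m h
    rw [iota_Tt]
    refine Ee_ext fun μ => ?_
    rw [mul_assoc, mul_assoc, EL_Ee, Tt_Ee, ← mul_assoc, EL_Ee]
    have : (μ ∘ Equiv.swap (⟨m, by omega⟩ : Fin (n+1)) ⟨m + 1, by omega⟩) (Fin.last n)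
        = μ (Fin.last n) := by
      rw [Function.comp_apply, Equiv.swap_apply_of_ne_of_ne] <;>
      · simp [Fin.ext_iff]; omega
    rw [this]
    split_ifs
    · rw [Tt_Ee]
    · simp

theorem XL_comm {n : ℕ} (r : Alg C n) : Commute (iota C n r) (XL C n) := by
  apply iota_comm_of
  · intro ν
    rw [iota_Ee]
    exact Commute.sum_left _ _ _ fun ν _ => (Xx_Ee _ _).symm
  · intro a
    rw [iota_Xx]
    exact (tautData C (n+1)).xx _ _
  · intro m h
    rw [iota_Tt]
    refine Ee_ext fun μ => ?_
    have := (tautData C (n+1)).taux m (by omega) (Fin.last n) μ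
    rw [Equiv.swap_apply_of_ne_of_ne, if_neg, if_neg, sub_mul, sub_eq_zero] at this
    · exact this
    all_goals simp [Fin.ext_iff]; omega

theorem XL_EL_comm {n : ℕ} (l : I) : Commute (XL C n) (EL C n l) :=
  Commute.sum_right _ _ _ fun ν _ => Xx_Ee _ _

theorem EL_mul {n : ℕ} (l m : I) : EL C n l * EL C n m = if l = m then EL C n l else 0 := by
  refine Ee_ext fun ν => ?_
  rw [mul_assoc, EL_Ee]
  split_ifs <;> simp_all [EL_Ee]
  rintro rfl; simp_all

theorem EL_sum {n : ℕ} : ∑ l : I, EL C n l = 1 := by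
  refine Ee_ext fun ν => ?_
  simp [Finset.sum_mul, EL_Ee]

theorem TL_comm {n : ℕ} (r : Alg C n) : Commute (iota C (n + 1) (iota C n r)) (TL C n) := by
  refine iota_comm_of ((iota C (n + 1)).comp (iota C n)) _ ?_ ?_ ?_ r
  · intro ν
    refine Ee_ext fun μ => ?_
    simp only [AlgHom.comp_apply]
    rw [mul_assoc, mul_assoc, TL_Ee, ← mul_assoc, iota_iota_Ee_Ee, iota_iota_Ee_Ee]
    have : Fin.init (Fin.init (μ ∘ Equiv.swap (Fin.last n).castSucc (Fin.last (n + 1))))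
        = Fin.init (Fin.init μ) := by
      funext a
      simp only [Fin.init, Function.comp_apply]
      rw [Equiv.swap_apply_of_ne_of_ne] <;>
      · simp [Fin.ext_iff]; omega
    rw [this]
    split_ifs <;> simp [TL_Ee]
  · intro a
    simp only [AlgHom.comp_apply, iota_Xx]
    refine Ee_ext fun μ => ?_
    have := (tautData C (n+2)).taux n (by omega) a.castSucc.castSucc μ
    rw [Equiv.swap_apply_of_ne_of_ne, if_neg, if_neg, sub_mul, sub_eq_zero] at this
    · exact this.symm
    all_goals simp [Fin.ext_iff]; omega
  · intro l h
    simp only [AlgHom.comp_apply, iota_Tt]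
    exact (tautData C (n+2)).tautau _ _ _ _ (by omega)

theorem TL_EL {n : ℕ} (l : I) : TL C n * EL C (n + 1) l = iota C (n + 1) (EL C n l) * TL C n := by
  refine Ee_ext fun μ => ?_
  rw [mul_assoc, mul_assoc, EL_Ee, TL_Ee, ← mul_assoc, iota_EL_Ee]
  rw [Function.comp_apply, Equiv.swap_apply_left]
  split_ifs <;> simp [TL_Ee]

theorem EL_TL {n : ℕ} (l : I) : EL C (n + 1) l * TL C n = TL C n * iota C (n + 1) (EL C n l) := by
  refine Ee_ext fun μ => ?_
  rw [mul_assoc, mul_assoc, iota_EL_Ee, TL_Ee, ← mul_assoc, EL_Ee]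
  rw [Function.comp_apply, Equiv.swap_apply_right]
  split_ifs <;> simp [TL_Ee]

variable (C) in
/-- The sum of the idempotents whose last two colours agree. -/
noncomputable def Del (n : ℕ) : Alg C (n + 2) := ∑ a : I, iota C (n + 1) (EL C n a) * EL C (n + 1) a

theorem Del_Ee {n : ℕ} (ν : Fin (n + 2) → I) : Del C n * Ee C ν =
    if ν (Fin.last n).castSucc = ν (Fin.last (n + 1)) then Ee C ν else 0 := by
  simp only [Del, Finset.sum_mul, mul_assoc, EL_Ee]
  simp [mul_ite, iota_EL_Ee]

theorem TL_XL {n : ℕ} :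
    TL C n * XL C (n + 1) = iota C (n + 1) (XL C n) * TL C n + Del C n := by
  refine Ee_ext fun μ => ?_
  have := (tautData C (n+2)).taux n (by omega) (Fin.last (n + 1)) μ
  have h1 : Equiv.swap (⟨n, by omega⟩ : Fin (n + 2)) ⟨n + 1, by omega⟩ (Fin.last (n + 1)) =
    ⟨n, by omega⟩ := Equiv.swap_apply_right _ _
  rw [h1, if_neg (by simp [Fin.ext_iff]), sub_mul, sub_eq_iff_eq_add] at this
  rw [add_mul, Del_Ee]
  refine (this.trans (add_comm _ _)).trans ?_
  rw [XL, iota_Xx]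
  congr 1
  by_cases h : μ (Fin.last n).castSucc = μ (Fin.last (n + 1))
  · rw [if_pos h, if_pos]; · rfl
    exact ⟨rfl, h⟩
  · rw [if_neg h, if_neg]
    exact fun h' => h h'.2

theorem TL_iXL {n : ℕ} :
    XL C (n + 1) * TL C n = TL C n * iota C (n + 1) (XL C n) + Del C n := by
  refine Ee_ext fun μ => ?_
  have := (tautData C (n+2)).taux n (by omega) (Fin.last n).castSucc μ
  have h1 : Equiv.swap (⟨n, by omega⟩ : Fin (n + 2)) ⟨n + 1, by omega⟩ (Fin.last n).castSucc =
    ⟨n + 1, by omega⟩ := Equiv.swap_apply_left _ _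
  rw [h1, sub_mul, sub_eq_iff_eq_add] at this
  rw [add_mul, Del_Ee]
  rw [XL, XL, iota_Xx]
  refine Eq.trans ?_ (congrArg₂ (· + ·) this.symm rfl)
  by_cases h : μ (Fin.last n).castSucc = μ (Fin.last (n + 1))
  · rw [if_pos h, if_pos ⟨rfl, h⟩]
    change _ = -Ee C μ + _ + _
    have hh : ∀ a b : Alg C (n + 2), a = -b + a + b := fun a b => by abel
    exact hh _ _
  · rw [if_neg h, if_neg (fun h' => h h'.2), if_neg (fun h' => h h'.2)]
    rw [zero_add, add_zero]; rfl

theorem TL_sq {n : ℕ} :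
    TL C n * TL C n = ∑ a : I, ∑ b : I, Qel C a b (iota C (n + 1) (XL C n)) (XL C (n + 1)) *
      (iota C (n + 1) (EL C n a) * EL C (n + 1) b) := by
  refine Ee_ext fun μ => ?_
  have := (tautData C (n+2)).tausq n (by omega) μ
  rw [pow_two] at this
  refine this.trans ?_
  simp only [Finset.sum_mul, mul_assoc, EL_Ee, mul_ite, iota_EL_Ee, mul_zero]
  simp only [Finset.sum_ite_eq, Finset.mem_univ, if_true]
  rw [XL, XL, iota_Xx]; rfl

theorem TL_braid {n : ℕ} :
    TL C (n + 1) * iota C (n + 2) (TL C n) * TL C (n + 1)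
      - iota C (n + 2) (TL C n) * TL C (n + 1) * iota C (n + 2) (TL C n) =
    ∑ a : I, ∑ b : I, Qdiff C a b (iota C (n + 2) (iota C (n + 1) (XL C n)))
      (iota C (n + 2) (XL C (n + 1))) (XL C (n + 2)) *
      (iota C (n + 2) (iota C (n + 1) (EL C n a)) *
        (iota C (n + 2) (EL C (n + 1) b) * EL C (n + 2) a)) := by
  refine Ee_ext fun μ => ?_
  have := (tautData C (n+3)).braid n (by omega) μ
  rw [TL, TL, iota_Tt]
  refine this.trans ?_
  simp only [Finset.sum_mul, mul_assoc, EL_Ee, mul_ite, iota_EL_Ee, mul_zero, iota_iota_EL_Ee]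
  simp only [XL, iota_Xx]
  rw [Finset.sum_comm]
  simp only [Finset.sum_ite_eq, Finset.mem_univ, if_true]
  by_cases h : μ (Fin.last n).castSucc.castSucc = μ (Fin.last (n + 2))
  · rw [if_pos (by exact h), if_pos h, ← h]; rfl
  · rw [if_neg (by exact h), if_neg h]

end Tower2
end KLR


namespace KLR

section Spanning

variable {k : Type} [Field k] {I : Type} [Fintype I] [DecidableEq I] {C : CartanDatum k I}

theorem Qel_mem {A : Type} [Ring A] [Algebra k A] (S : Subalgebra k A) (i j : I) {u v : A}
    (hu : u ∈ S) (hv : v ∈ S) : Qel C i j u v ∈ S := by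
  unfold Qel
  split_ifs
  · exact S.zero_mem
  · refine S.sum_mem fun p _ => S.sum_mem fun q _ => ?_
    split_ifs
    · exact S.smul_mem (S.mul_mem (S.pow_mem hu _) (S.pow_mem hv _)) _
    · exact S.zero_mem

theorem Qdiff_mem {A : Type} [Ring A] [Algebra k A] (S : Subalgebra k A) (i j : I) {u v w : A}
    (hu : u ∈ S) (hv : v ∈ S) (hw : w ∈ S) : Qdiff C i j u v w ∈ S := by
  unfold Qdiff
  split_ifs
  · exact S.zero_mem
  · refine S.sum_mem fun p _ => S.sum_mem fun q _ => ?_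
    split_ifs
    · refine S.smul_mem (S.mul_mem (S.sum_mem fun c _ => ?_) (S.pow_mem hv _)) _
      exact S.mul_mem (S.pow_mem hu _) (S.pow_mem hw _)
    · exact S.zero_mem

/-- The left stabilizer of a subspace. -/
def LStab {A : Type} [Ring A] [Algebra k A] (T : Submodule k A) : Subalgebra k A where
  carrier := {y | ∀ t ∈ T, y * t ∈ T}
  mul_mem' := by
    intro a b ha hb t ht
    rw [mul_assoc]; exact ha _ (hb _ ht)
  add_mem' := by
    intro a b ha hb t ht
    rw [add_mul]; exact T.add_mem (ha _ ht) (hb _ ht)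
  algebraMap_mem' := by
    intro c t ht
    rw [← Algebra.smul_def]; exact T.smul_mem _ ht

theorem mem_LStab {A : Type} [Ring A] [Algebra k A] {T : Submodule k A} {y : A} :
    y ∈ LStab T ↔ ∀ t ∈ T, y * t ∈ T := Iff.rfl

/-- The algebra `R(n+1)` is generated by `R(n)` and the last generators. -/
theorem gen_top1 (S : Subalgebra k (Alg C 1)) (hi : ∀ r, iota C 0 r ∈ S) (hX : XL C 0 ∈ S)
    (hE : ∀ l, EL C 0 l ∈ S) (z : Alg C 1) : z ∈ S := by
  induction z using Alg_induct with
  | hs c => exact S.algebraMap_mem c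
  | he ν => rw [Ee_eq]; exact S.mul_mem (hi _) (hE _)
  | hx a => 
    obtain rfl : a = Fin.last 0 := Subsingleton.elim _ _
    exact hX
  | ht l h => omega
  | hadd a b ha hb => exact S.add_mem ha hb
  | hmul a b ha hb => exact S.mul_mem ha hb

theorem gen_top2 {n : ℕ} (S : Subalgebra k (Alg C (n + 2))) (hi : ∀ r, iota C (n + 1) r ∈ S)
    (hX : XL C (n + 1) ∈ S)
    (hE : ∀ l, EL C (n + 1) l ∈ S) (hT : TL C n ∈ S) (z : Alg C (n + 2)) : z ∈ S := by
  induction z using Alg_induct with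
  | hs c => exact S.algebraMap_mem c
  | he ν => rw [Ee_eq]; exact S.mul_mem (hi _) (hE _)
  | hx a => 
    induction a using Fin.lastCases with
    | last => exact hX
    | cast a => rw [← iota_Xx]; exact hi _
  | ht l h =>
    by_cases hl : l = n
    · subst hl; exact hT
    · have : l + 1 < n + 1 := by omega
      rw [← iota_Tt l this]; exact hi _
  | hadd a b ha hb => exact S.add_mem ha hb
  | hmul a b ha hb => exact S.mul_mem ha hb

variable (C) in
/-- Spanning set, part without `τ`. -/
def SA (n : ℕ) : Submodule k (Alg C (n + 1)) :=
  Submodule.span k {z | ∃ r a l, z = iota C n r * (XL C n ^ a * EL C n l)}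

variable (C) in
/-- Spanning set, part with `τ`. -/
def SB (n : ℕ) : Submodule k (Alg C (n + 2)) :=
  Submodule.span k {z | ∃ r r' l, z = iota C (n + 1) r * (TL C n * (iota C (n + 1) r'
    * EL C (n + 1) l))}

theorem mem_SA {n : ℕ} (r a l) : iota C n r * (XL C n ^ a * EL C n l) ∈ SA C n :=
  Submodule.subset_span ⟨r, a, l, rfl⟩

theorem mem_SB {n : ℕ} (r r' l) : iota C (n + 1) r * (TL C n * (iota C (n + 1) r'
    * EL C (n + 1) l)) ∈ SB C n :=
  Submodule.subset_span ⟨r, r', l, rfl⟩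

theorem iota_mem_SA {n : ℕ} (r) : iota C n r ∈ SA C n := by
  rw [← mul_one (iota C n r), ← EL_sum, Finset.mul_sum]
  refine Submodule.sum_mem _ fun l _ => ?_
  simpa using mem_SA r 0 l

theorem stab_of_span {A : Type} [Ring A] [Algebra k A] {s : Set A} {y : A} {T : Submodule k A}
    (h : ∀ z ∈ s, y * z ∈ T) : ∀ t ∈ Submodule.span k s, y * t ∈ T := by
  intro t ht
  induction ht using Submodule.span_induction with
  | mem x hx => exact h x hx
  | zero => rw [mul_zero]; exact T.zero_mem
  | add a b _ _ ha hb => rw [mul_add]; exact T.add_mem ha hb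
  | smul c a _ ha => rw [mul_smul_comm]; exact T.smul_mem _ ha

theorem rstab_of_span {A : Type} [Ring A] [Algebra k A] {s : Set A} {y : A} {T : Submodule k A}
    (h : ∀ z ∈ s, z * y ∈ T) : ∀ t ∈ Submodule.span k s, t * y ∈ T := by
  intro t ht
  induction ht using Submodule.span_induction with
  | mem x hx => exact h x hx
  | zero => rw [zero_mul]; exact T.zero_mem
  | add a b _ _ ha hb => rw [add_mul]; exact T.add_mem ha hb
  | smul c a _ ha => rw [smul_mul_assoc]; exact T.smul_mem _ ha

theorem SA_iota {n : ℕ} (r : Alg C n) : iota C n r ∈ LStab (SA C n) := by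
  refine stab_of_span ?_
  rintro _ ⟨s, a, l, rfl⟩
  rw [← mul_assoc, ← map_mul]; exact mem_SA _ _ _

theorem SA_XL {n : ℕ} : XL C n ∈ LStab (SA C n) := by
  refine stab_of_span ?_
  rintro _ ⟨s, a, l, rfl⟩
  rw [← mul_assoc, ← (XL_comm s).eq, mul_assoc, ← mul_assoc (XL C n), ← pow_succ']
  exact mem_SA _ _ _

theorem SA_EL {n : ℕ} (m : I) : EL C n m ∈ LStab (SA C n) := by
  refine stab_of_span ?_
  rintro _ ⟨s, a, l, rfl⟩
  rw [← mul_assoc, ← (EL_comm s m).eq, mul_assoc, ← mul_assoc (EL C n m),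
    ← ((XL_EL_comm m).pow_left a).eq, mul_assoc, EL_mul]
  split_ifs
  · exact mem_SA _ _ _
  · simp

theorem SA_top1 (z : Alg C 1) : z ∈ SA C 0 := by
  rw [← mul_one z]
  exact gen_top1 (LStab (SA C 0)) SA_iota SA_XL SA_EL z _ (by simpa using iota_mem_SA (C := C) 1)

theorem SB_iota {n : ℕ} (r : Alg C (n + 1)) : iota C (n + 1) r ∈ LStab (SB C n) := by
  refine stab_of_span ?_
  rintro _ ⟨s, r', l, rfl⟩
  rw [← mul_assoc, ← map_mul]; exact mem_SB _ _ _

theorem SB_EL {n : ℕ} (m : I) : EL C (n + 1) m ∈ LStab (SB C n) := by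
  refine stab_of_span ?_
  rintro _ ⟨s, r', l, rfl⟩
  rw [← mul_assoc, ← (EL_comm s m).eq, mul_assoc, ← mul_assoc (EL C (n + 1) m), EL_TL,
    mul_assoc (TL C n), ← mul_assoc (iota C (n + 1) (EL C n m)), ← map_mul]
  exact mem_SB _ _ _

variable (C) in
/-- The full spanning space. -/
def SAB (n : ℕ) : Submodule k (Alg C (n + 2)) := SA C (n + 1) ⊔ SB C n

theorem SAB_stab {n : ℕ} {y : Alg C (n + 2)} (h1 : ∀ t ∈ SA C (n + 1), y * t ∈ SAB C n)
    (h2 : ∀ t ∈ SB C n, y * t ∈ SAB C n) : y ∈ LStab (SAB C n) := by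
  intro t ht
  obtain ⟨a, ha, b, hb, rfl⟩ := Submodule.mem_sup.1 ht
  rw [mul_add]; exact Submodule.add_mem _ (h1 _ ha) (h2 _ hb)

theorem SA_le {n : ℕ} {z : Alg C (n + 2)} (h : z ∈ SA C (n + 1)) : z ∈ SAB C n :=
  (le_sup_left : SA C (n + 1) ≤ SAB C n) h
theorem SB_le {n : ℕ} {z : Alg C (n + 2)} (h : z ∈ SB C n) : z ∈ SAB C n :=
  (le_sup_right : SB C n ≤ SAB C n) h

theorem SAB_iota {n : ℕ} (r : Alg C (n + 1)) : iota C (n + 1) r ∈ LStab (SAB C n) :=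
  SAB_stab (fun _ h => SA_le (SA_iota r _ h)) fun _ h => SB_le (SB_iota r _ h)

theorem SAB_EL {n : ℕ} (m : I) : EL C (n + 1) m ∈ LStab (SAB C n) :=
  SAB_stab (fun _ h => SA_le (SA_EL m _ h)) fun _ h => SB_le (SB_EL m _ h)

theorem SAB_iota_mul {n : ℕ} (s : Alg C (n + 1)) : ∀ t ∈ SAB C n, t * iota C (n + 1) s ∈ SAB C n := by
  intro t ht
  obtain ⟨a, ha, b, hb, rfl⟩ := Submodule.mem_sup.1 ht
  rw [add_mul]
  refine Submodule.add_mem _ (SA_le (rstab_of_span ?_ _ ha)) (SB_le (rstab_of_span ?_ _ hb))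
  · rintro _ ⟨r, a, l, rfl⟩
    rw [mul_assoc, mul_assoc, ← (EL_comm s l).eq, ← mul_assoc (XL C (n + 1) ^ a),
      ← ((XL_comm s).pow_right a).eq, mul_assoc, ← mul_assoc, ← map_mul]
    exact mem_SA _ _ _
  · rintro _ ⟨r, r', l, rfl⟩
    rw [mul_assoc, mul_assoc, mul_assoc, ← (EL_comm s l).eq, ← mul_assoc (iota C (n + 1) r'),
      ← map_mul]
    exact mem_SB _ _ _

theorem SAB_EL_mul {n : ℕ} (m : I) : ∀ t ∈ SAB C n, t * EL C (n + 1) m ∈ SAB C n := by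
  intro t ht
  obtain ⟨a, ha, b, hb, rfl⟩ := Submodule.mem_sup.1 ht
  rw [add_mul]
  refine Submodule.add_mem _ (SA_le (rstab_of_span ?_ _ ha)) (SB_le (rstab_of_span ?_ _ hb))
  · rintro _ ⟨r, a, l, rfl⟩
    rw [mul_assoc, mul_assoc, EL_mul]
    split_ifs
    · exact mem_SA _ _ _
    · simp
  · rintro _ ⟨r, r', l, rfl⟩
    rw [mul_assoc, mul_assoc, mul_assoc, EL_mul]
    split_ifs
    · exact mem_SB _ _ _
    · simp

theorem one_SAB {n : ℕ} : (1 : Alg C (n + 2)) ∈ SAB C n :=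
  SA_le (by simpa using iota_mem_SA (C := C) (1 : Alg C (n + 1)))

theorem TL_SAB {n : ℕ} : TL C n ∈ SAB C n := by
  rw [← mul_one (TL C n), ← EL_sum, Finset.mul_sum]
  refine Submodule.sum_mem _ fun l _ => SB_le ?_
  simpa using mem_SB (C := C) (n := n) 1 1 l

theorem SAB_Del {n : ℕ} : Del C n ∈ LStab (SAB C n) :=
  Subalgebra.sum_mem _ fun a _ => Subalgebra.mul_mem _ (SAB_iota _) (SAB_EL a)

theorem SAB_XL {n : ℕ} : XL C (n + 1) ∈ LStab (SAB C n) := by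
  refine SAB_stab (fun _ h => SA_le (SA_XL _ h)) ?_
  refine stab_of_span ?_
  rintro _ ⟨r, r', l, rfl⟩
  have h1 : TL C n * iota C (n + 1) (XL C n) * (iota C (n + 1) r' * EL C (n + 1) l) ∈ SAB C n := by
    rw [mul_assoc, ← mul_assoc (iota C (n + 1) (XL C n)), ← map_mul, ← mul_assoc]
    exact SAB_EL_mul _ _ (SAB_iota_mul _ _ TL_SAB)
  have h2 : Del C n * (iota C (n + 1) r' * EL C (n + 1) l) ∈ SAB C n := by
    refine SAB_Del _ ?_
    have := SAB_EL_mul (n := n) l _ (SAB_iota_mul r' _ one_SAB)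
    rwa [one_mul] at this
  rw [← mul_assoc, ← (XL_comm r).eq, mul_assoc, ← mul_assoc (XL C (n + 1)), TL_iXL, add_mul]
  exact SAB_iota r _ (Submodule.add_mem _ h1 h2)

theorem TL_XL_pow {n : ℕ} (a : ℕ) : TL C n * XL C (n + 1) ^ a ∈ SAB C n := by
  induction a with
  | zero => simpa using TL_SAB
  | succ a ih =>
    rw [pow_succ', ← mul_assoc, TL_XL, add_mul, mul_assoc]
    refine Submodule.add_mem _ (SAB_iota _ _ ih) (SAB_Del _ ?_)
    have := Subalgebra.pow_mem _ (SAB_XL (C := C) (n := n)) a _ one_SAB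
    rwa [mul_one] at this

theorem TL_iXL_pow_TL {n : ℕ} (a : ℕ) :
    TL C n * (iota C (n + 1) (XL C n) ^ a * TL C n) ∈ SAB C n := by
  induction a with
  | zero =>
    rw [pow_zero, one_mul, TL_sq]
    refine Submodule.sum_mem _ fun a _ => Submodule.sum_mem _ fun b _ => ?_
    have : Qel C a b (iota C (n + 1) (XL C n)) (XL C (n + 1)) *
      (iota C (n + 1) (EL C n a) * EL C (n + 1) b) ∈ LStab (SAB C n) :=
      Subalgebra.mul_mem _ (Qel_mem _ _ _ (SAB_iota _) SAB_XL)
        (Subalgebra.mul_mem _ (SAB_iota _) (SAB_EL _))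
    have := this _ one_SAB
    rwa [mul_one] at this
  | succ a ih =>
    have h := (sub_eq_iff_eq_add.2 (TL_iXL (C := C) (n := n))).symm
    rw [pow_succ', mul_assoc, ← mul_assoc, h, sub_mul, mul_assoc]
    refine Submodule.sub_mem _ (SAB_XL _ ih) (SAB_Del _ ?_)
    rw [← map_pow]
    exact SAB_iota _ _ TL_SAB

/-- Closure under `τ` given a spanning statement one level down. -/
theorem SAB_TL_of {n : ℕ} (h : ∀ r : Alg C (n + 1),
    TL C n * (iota C (n + 1) r * TL C n) ∈ SAB C n) : TL C n ∈ LStab (SAB C n) := by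
  refine SAB_stab (stab_of_span ?_) (stab_of_span ?_)
  · rintro _ ⟨r, a, l, rfl⟩
    rw [← mul_assoc (iota C (n + 1) r), ((XL_comm r).pow_right a).eq, mul_assoc, ← mul_assoc,
      ← mul_assoc]
    exact SAB_EL_mul _ _ (SAB_iota_mul _ _ (TL_XL_pow _))
  · rintro _ ⟨r, r', l, rfl⟩
    have := SAB_EL_mul l _ (SAB_iota_mul r' _ (h r))
    simpa only [mul_assoc] using this

theorem TLTL_A {n : ℕ} (s : Alg C n) (a : ℕ) (m : I) : TL C n * (iota C (n + 1)
    (iota C n s * (XL C n ^ a * EL C n m)) * TL C n) ∈ SAB C n := by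
  rw [map_mul, map_mul, map_pow, mul_assoc, mul_assoc, ← TL_EL, ← mul_assoc, ← (TL_comm s).eq,
    mul_assoc]
  refine SAB_iota _ _ ?_
  have := SAB_EL_mul m _ (TL_iXL_pow_TL (C := C) (n := n) a)
  simpa only [mul_assoc] using this

theorem TLTL_B {n : ℕ} (s s' : Alg C (n + 1)) (m : I) : TL C (n + 1) * (iota C (n + 2)
    (iota C (n + 1) s * (TL C n * (iota C (n + 1) s' * EL C (n + 1) m))) * TL C (n + 1))
      ∈ SAB C (n + 1) := by
  have key : TL C (n + 1) * iota C (n + 2) (TL C n) * TL C (n + 1) ∈ SAB C (n + 1) := by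
    rw [sub_eq_iff_eq_add.1 (TL_braid (C := C) (n := n))]
    refine Submodule.add_mem _ (Submodule.sum_mem _ fun a _ => Submodule.sum_mem _ fun b _ => ?_) ?_
    · have : Qdiff C a b (iota C (n + 2) (iota C (n + 1) (XL C n)))
        (iota C (n + 2) (XL C (n + 1))) (XL C (n + 2)) *
        (iota C (n + 2) (iota C (n + 1) (EL C n a)) *
        (iota C (n + 2) (EL C (n + 1) b) * EL C (n + 2) a)) ∈ LStab (SAB C (n + 1)) :=
        Subalgebra.mul_mem _ (Qdiff_mem _ _ _ (SAB_iota _) (SAB_iota _) SAB_XL)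
        (Subalgebra.mul_mem _ (SAB_iota _) (Subalgebra.mul_mem _ (SAB_iota _) (SAB_EL _)))
      have := this _ one_SAB
      rwa [mul_one] at this
    · rw [mul_assoc]
      exact SAB_iota _ _ (SAB_iota_mul _ _ TL_SAB)
  have h2 := SAB_iota (iota C (n + 1) s) _ (SAB_EL_mul m _ (SAB_iota_mul (iota C (n + 1) s') _ key))
  have e : TL C (n + 1) * (iota C (n + 2)
    (iota C (n + 1) s * (TL C n * (iota C (n + 1) s' * EL C (n + 1) m))) * TL C (n + 1)) =
    iota C (n + 2) (iota C (n + 1) s) * (TL C (n + 1) * iota C (n + 2) (TL C n) * TL C (n + 1)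
      * iota C (n + 2) (iota C (n + 1) s') * EL C (n + 2) m) := by
    simp only [map_mul, mul_assoc]
    rw [← TL_EL, ← mul_assoc (iota C (n + 2) (iota C (n + 1) s')) (TL C (n + 1)),
      (TL_comm s').eq]
    simp only [← mul_assoc]
    rw [(TL_comm s).eq]
  rw [e]; exact h2

theorem TLTL_mem {n : ℕ} {T : Submodule k (Alg C (n + 2))} {s : Set (Alg C (n + 1))}
    (h : ∀ r ∈ s, TL C n * (iota C (n + 1) r * TL C n) ∈ T) :
    ∀ r ∈ Submodule.span k s, TL C n * (iota C (n + 1) r * TL C n) ∈ T := by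
  intro r hr
  induction hr using Submodule.span_induction with
  | mem x hx => exact h x hx
  | zero => simp
  | add a b _ _ ha hb => rw [map_add, add_mul, mul_add]; exact T.add_mem ha hb
  | smul c a _ ha => rw [map_smul, smul_mul_assoc, mul_smul_comm]; exact T.smul_mem _ ha

/-- Two-sided spanning. -/
theorem SAB_top (n : ℕ) : ∀ z : Alg C (n + 2), z ∈ SAB C n := by
  induction n with
  | zero =>
    intro z
    rw [← mul_one z]
    refine gen_top2 (LStab (SAB C 0)) SAB_iota SAB_XL SAB_EL (SAB_TL_of fun r => ?_) z _ one_SAB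
    refine TLTL_mem ?_ r (SA_top1 r)
    rintro _ ⟨s, a, l, rfl⟩
    exact TLTL_A _ _ _
  | succ n ih =>
    intro z
    rw [← mul_one z]
    refine gen_top2 (LStab (SAB C (n + 1))) SAB_iota SAB_XL SAB_EL
      (SAB_TL_of fun r => ?_) z _ one_SAB
    obtain ⟨a, ha, b, hb, rfl⟩ := Submodule.mem_sup.1 (ih r)
    rw [map_add, add_mul, mul_add]
    refine Submodule.add_mem _ (TLTL_mem ?_ a ha) (TLTL_mem ?_ b hb)
    · rintro _ ⟨s, a, l, rfl⟩
      exact TLTL_A _ _ _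
    · rintro _ ⟨s, s', l, rfl⟩
      exact TLTL_B _ _ _

variable (C) in
/-- Coset representatives `t(n,b) = τ_{n-1} ⋯ τ_b`. -/
noncomputable def tt : (n : ℕ) → ℕ → Alg C (n + 1)
  | 0, _ => 1
  | n + 1, b => if b = n + 1 then 1 else TL C n * iota C (n + 1) (tt n b)

theorem tt_self (n : ℕ) : tt C n n = 1 := by
  cases n <;> simp [tt]

theorem tt_succ {n b : ℕ} (h : b ≤ n) : tt C (n + 1) b = TL C n * iota C (n + 1) (tt C n b) := by
  rw [tt, if_neg (by omega)]

variable (C) in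
/-- The left spanning set. -/
def SL (n : ℕ) : Submodule k (Alg C (n + 1)) :=
  Submodule.span k {z | ∃ r a l, ∃ b ≤ n, z = iota C n r * (XL C n ^ a * (EL C n l * tt C n b))}

theorem mem_SL {n b : ℕ} (r a l) (hb : b ≤ n) :
    iota C n r * (XL C n ^ a * (EL C n l * tt C n b)) ∈ SL C n :=
  Submodule.subset_span ⟨r, a, l, b, hb, rfl⟩

theorem SL_iota {n : ℕ} (r : Alg C n) : iota C n r ∈ LStab (SL C n) := by
  refine stab_of_span ?_
  rintro _ ⟨s, a, l, b, hb, rfl⟩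
  rw [← mul_assoc, ← map_mul]; exact mem_SL _ _ _ hb

theorem SL_XL {n : ℕ} : XL C n ∈ LStab (SL C n) := by
  refine stab_of_span ?_
  rintro _ ⟨s, a, l, b, hb, rfl⟩
  rw [← mul_assoc, ← (XL_comm s).eq, mul_assoc, ← mul_assoc (XL C n), ← pow_succ']
  exact mem_SL _ _ _ hb

theorem SL_EL {n : ℕ} (m : I) : EL C n m ∈ LStab (SL C n) := by
  refine stab_of_span ?_
  rintro _ ⟨s, a, l, b, hb, rfl⟩
  rw [← mul_assoc, ← (EL_comm s m).eq, mul_assoc, ← mul_assoc (EL C n m),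
    ← ((XL_EL_comm m).pow_left a).eq, mul_assoc, ← mul_assoc (EL C n m), EL_mul]
  split_ifs
  · exact mem_SL _ _ _ hb
  · simp

theorem SA_le_SL {n : ℕ} {z : Alg C (n + 1)} (h : z ∈ SA C n) : z ∈ SL C n := by
  refine Submodule.span_le.2 ?_ h
  rintro _ ⟨r, a, l, rfl⟩
  have := mem_SL (C := C) r a l (le_refl n)
  rwa [tt_self, mul_one] at this

theorem TL_SL {n b : ℕ} (hb : b ≤ n) (m : I) (a : ℕ) :
    TL C n * iota C (n + 1) (XL C n ^ a * (EL C n m * tt C n b)) ∈ SL C (n + 1) := by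
  induction a with
  | zero =>
    rw [pow_zero, one_mul, map_mul, ← mul_assoc, ← EL_TL, mul_assoc, ← tt_succ hb]
    have := mem_SL (C := C) (n := n + 1) (b := b) 1 0 m (by omega)
    simpa using this
  | succ a ih =>
    have h := (sub_eq_iff_eq_add.2 (TL_iXL (C := C) (n := n))).symm
    rw [pow_succ', mul_assoc, map_mul, ← mul_assoc, h, sub_mul, mul_assoc]
    refine Submodule.sub_mem _ (SL_XL _ ih) ?_
    refine (Subalgebra.sum_mem (LStab (SL C (n + 1))) fun a _ => Subalgebra.mul_mem _ (SL_iota _) (SL_EL a)) _ ?_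
    exact SA_le_SL (iota_mem_SA _)

/-- Left spanning. -/
theorem SL_top (n : ℕ) : ∀ z : Alg C (n + 1), z ∈ SL C n := by
  induction n with
  | zero => exact fun z => SA_le_SL (SA_top1 z)
  | succ n ih =>
    intro z
    obtain ⟨a, ha, b, hb, rfl⟩ := Submodule.mem_sup.1 (SAB_top n z)
    refine Submodule.add_mem _ (SA_le_SL ha) (Submodule.span_le.2 ?_ hb)
    rintro _ ⟨r, r', l, rfl⟩
    refine SL_iota _ _ ?_
    rw [(EL_comm r' l).eq, ← mul_assoc, TL_EL, mul_assoc]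
    refine SL_iota _ _ ?_
    have := ih r'
    induction this using Submodule.span_induction with
    | mem x hx =>
      obtain ⟨s, a, l, b, hb, rfl⟩ := hx
      rw [map_mul, ← mul_assoc, ← (TL_comm s).eq, mul_assoc]
      exact SL_iota _ _ (TL_SL hb _ _)
    | zero => simp
    | add a b _ _ ha hb => rw [map_add, mul_add]; exact Submodule.add_mem _ ha hb
    | smul c a _ ha => rw [map_smul, mul_smul_comm]; exact Submodule.smul_mem _ _ ha

end Spanning
end KLR


namespace KLR

section Calib

set_option linter.unusedSectionVars false
set_option linter.unusedSimpArgs false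

variable {k : Type} [Field k] {I : Type} [Fintype I] [DecidableEq I] (C : CartanDatum k I)
variable (K : Type) [Field K] [Algebra k K]

theorem Qel_symm {A : Type} [CommRing A] [Algebra k A] (i j : I) (u v : A) :
    Qel C i j u v = Qel C j i v u := by
  unfold Qel
  by_cases h : i = j
  · rw [if_pos h, if_pos h.symm]
  · rw [if_neg h, if_neg (Ne.symm h), Finset.sum_comm]
    refine Finset.sum_congr rfl fun p _ => Finset.sum_congr rfl fun q _ => ?_
    rw [C.symmetrize i j, add_comm, C.t_symm, mul_comm (u ^ _)]

theorem Qdiff_mul {A : Type} [CommRing A] [Algebra k A] (i j : I) (u v w : A) :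
    Qdiff C i j u v w * (u - w) = Qel C i j u v - Qel C i j w v := by
  unfold Qel Qdiff
  by_cases h : i = j
  · simp [h]
  · simp only [if_neg h, Finset.sum_mul]
    rw [← Finset.sum_sub_distrib]
    refine Finset.sum_congr rfl fun p _ => ?_
    rw [← Finset.sum_sub_distrib]
    refine Finset.sum_congr rfl fun q _ => ?_
    split_ifs
    · rw [← smul_sub, ← sub_mul, smul_mul_assoc, ← geom_sum₂_mul u w p]
      congr 1; rw [← Finset.sum_mul]; ring
    · simp

variable {K}

/-- Diagonal coefficient. -/
def cA (p q : K × I) : K := if p.2 = q.2 then -(p.1 - q.1)⁻¹ else 0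
/-- Product of the off-diagonal coefficients. -/
def cD (p q : K × I) : K :=
  if p.2 = q.2 then -((p.1 - q.1)⁻¹ ^ 2) else Qel C p.2 q.2 p.1 q.1
open Classical in
/-- Off-diagonal coefficient. -/
noncomputable def cB (p q : K × I) : K := if WellOrderingRel p q then 1 else cD C p q

theorem cA_neg (p q : K × I) : cA q p = - cA p q := by
  unfold cA
  by_cases h : p.2 = q.2
  · rw [if_pos h, if_pos h.symm, ← neg_sub p.1, inv_neg]
  · rw [if_neg h, if_neg (Ne.symm h), neg_zero]

theorem cD_symm (p q : K × I) : cD C q p = cD C p q := by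
  unfold cD
  by_cases h : p.2 = q.2
  · rw [if_pos h, if_pos h.symm, ← neg_sub p.1, inv_neg, neg_sq]
  · rw [if_neg h, if_neg (Ne.symm h), Qel_symm]

theorem cB_mul {p q : K × I} (h : p ≠ q) : cB C p q * cB C q p = cD C p q := by
  unfold cB
  rcases trichotomous_of WellOrderingRel p q with h1 | h1 | h1
  · have h2 : ¬ WellOrderingRel q p := fun h2 => asymm_of WellOrderingRel h1 h2
    rw [if_pos h1, if_neg h2, one_mul, cD_symm]
  · exact absurd h1 h
  · have h2 : ¬ WellOrderingRel p q := fun h2 => asymm_of WellOrderingRel h1 h2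
    rw [if_pos h1, if_neg h2, mul_one]

theorem fst_ne {p q : K × I} (h : p ≠ q) (h2 : p.2 = q.2) : p.1 - q.1 ≠ 0 := by
  intro h3
  exact h (Prod.ext (sub_eq_zero.1 h3) h2)

theorem cA_sub {p q : K × I} (h : p ≠ q) : cA p q * (p.1 - q.1) = if p.2 = q.2 then -1 else 0 := by
  unfold cA
  split_ifs with h2
  · have := fst_ne h h2
    field_simp
  · simp

theorem cA_sq {p q : K × I} : cA p q * cA p q + cD C p q =
    Qel C p.2 q.2 p.1 q.1 := by
  unfold cA cD
  split_ifs with h2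
  · rw [h2]; simp only [Qel, if_true]; ring
  · simp

theorem cA_braid {p q r : K × I} (h1 : p ≠ q) (h2 : p ≠ r) (h3 : q ≠ r) :
    cA q r * cA p q * cA q r + cD C q r * cA p r - (cA p q * cA q r * cA p q + cD C p q * cA p r)
    = if p.2 = r.2 then Qdiff C p.2 q.2 p.1 q.1 r.1 else 0 := by
  by_cases hpr : p.2 = r.2
  · rw [if_pos hpr]
    have hn := fst_ne h2 hpr
    by_cases hpq : p.2 = q.2
    · have hn2 := fst_ne h1 hpq
      have hqr : q.2 = r.2 := hpq.symm.trans hpr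
      have hn3 := fst_ne h3 hqr
      have : Qdiff C p.2 q.2 p.1 q.1 r.1 = 0 := by simp [Qdiff, hpq]
      rw [this]
      simp only [cA, cD, if_pos hpr, if_pos hpq, if_pos hqr]
      field_simp
      ring
    · have hqr : ¬ q.2 = r.2 := fun h => hpq (hpr.trans h.symm)
      have := Qdiff_mul C p.2 q.2 p.1 q.1 r.1
      rw [Qel_symm C p.2 q.2 r.1 q.1] at this
      simp only [cA, cD, if_pos hpr, if_neg hpq, if_neg hqr]
      rw [← hpr]
      field_simp
      linear_combination (-1 : K) * this
  · rw [if_neg hpr]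
    simp only [cA, if_neg hpr]
    by_cases hpq : p.2 = q.2
    · have hqr : ¬ q.2 = r.2 := fun h => hpr (hpq.trans h)
      simp [hqr]
    · simp [hpq]

theorem cA_mix1 {p q r : K × I} (h1 : p ≠ q) (h2 : p ≠ r) (h3 : q ≠ r) :
    cA q r * cA p q  = cA p q * cA p r + cA p r * cA q r := by
  unfold cA
  by_cases hpr : p.2 = r.2
  · have hn := fst_ne h2 hpr
    by_cases hpq : p.2 = q.2
    · have hn2 := fst_ne h1 hpq
      have hqr : q.2 = r.2 := hpq.symm.trans hpr
      have hn3 := fst_ne h3 hqr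
      simp only [if_pos hpr, if_pos hpq, if_pos hqr]
      field_simp
      ring
    · have hqr : ¬ q.2 = r.2 := fun h => hpq (hpr.trans h.symm)
      simp [hpq, hqr]
  · by_cases hpq : p.2 = q.2
    · have hqr : ¬ q.2 = r.2 := fun h => hpr (hpq.trans h)
      simp [hqr, hpr]
    · simp [hpq, hpr]

/-- Permuting the entries of an injective labelling. -/
def sw {n : ℕ} (σ : Fin n ↪ K × I) (a b : Fin n) : Fin n ↪ K × I :=
  (Equiv.swap a b).toEmbedding.trans σ

@[simp] theorem sw_apply {n : ℕ} (σ : Fin n ↪ K × I) (a b c : Fin n) :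
    sw σ a b c = σ (Equiv.swap a b c) := rfl

@[simp] theorem sw_sw {n : ℕ} (σ : Fin n ↪ K × I) (a b : Fin n) : sw (sw σ a b) a b = σ := by
  ext c : 1; simp

theorem sw_braid {n : ℕ} (σ : Fin n ↪ K × I) {a b c : Fin n} (hab : a ≠ b) (hac : a ≠ c)
    (hbc : b ≠ c) : sw (sw (sw σ b c) a b) b c = sw (sw (sw σ a b) b c) a b := by
  ext d : 1
  simp only [sw_apply]
  congr 1
  by_cases h1 : d = a
  · subst h1; simp [Equiv.swap_apply_of_ne_of_ne, hab, hac, hbc, hab.symm, hac.symm, hbc.symm]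
  by_cases h2 : d = b
  · subst h2; simp [Equiv.swap_apply_of_ne_of_ne, hab, hac, hbc, hab.symm, hac.symm, hbc.symm]
  by_cases h3 : d = c
  · subst h3; simp [Equiv.swap_apply_of_ne_of_ne, hab, hac, hbc, hab.symm, hac.symm, hbc.symm]
  simp [Equiv.swap_apply_of_ne_of_ne, h1, h2, h3]

theorem sw_comm {n : ℕ} (σ : Fin n ↪ K × I) {a b c d : Fin n} (hac : a ≠ c) (had : a ≠ d)
    (hbc : b ≠ c) (hbd : b ≠ d) : sw (sw σ a b) c d = sw (sw σ c d) a b := by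
  ext e : 1
  simp only [sw_apply]
  congr 1
  by_cases h1 : e = a
  · subst h1; simp [Equiv.swap_apply_of_ne_of_ne, *]
  by_cases h2 : e = b
  · subst h2; simp [Equiv.swap_apply_of_ne_of_ne, *]
  simp only [Equiv.swap_apply_of_ne_of_ne h1 h2]
  by_cases h3 : e = c
  · subst h3; simp [Equiv.swap_apply_of_ne_of_ne, had.symm, hbd.symm]
  by_cases h4 : e = d
  · subst h4; simp [Equiv.swap_apply_of_ne_of_ne, hac.symm, hbc.symm]
  simp [Equiv.swap_apply_of_ne_of_ne, h1, h2, h3, h4]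

variable (I K) in
/-- The representation space. -/
abbrev MM (n : ℕ) : Type := (Fin n ↪ K × I) → K

/-- Diagonal operators -/
def diagOp {n : ℕ} : MM I K n →ₐ[k] Module.End K (MM I K n) :=
  (Algebra.lmul K (MM I K n)).restrictScalars k

theorem diagOp_apply {n : ℕ} (f m : MM I K n) (σ) : diagOp (k := k) f m σ = f σ * m σ := rfl

/-- The operator of a simple transposition. -/
noncomputable def tauOp {n : ℕ} (a b : Fin n) : Module.End K (MM I K n) where
  toFun m σ := cA (σ a) (σ b) * m σ + cB C (σ a) (σ b) * m (sw σ a b)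
  map_add' m m' := by ext σ; simp only [Pi.add_apply]; ring
  map_smul' c m := by ext σ; simp only [Pi.smul_apply, smul_eq_mul, RingHom.id_apply]; ring

theorem tauOp_apply {n : ℕ} (a b : Fin n) (m : MM I K n) (σ) :
    tauOp C a b m σ = cA (σ a) (σ b) * m σ + cB C (σ a) (σ b) * m (sw σ a b) := rfl

theorem tauOp_sq {n : ℕ} {a b : Fin n} (hab : a ≠ b) (m : MM I K n) (σ) :
    tauOp C a b (tauOp C a b m) σ = Qel C (σ a).2 (σ b).2 (σ a).1 (σ b).1 * m σ := by
  have h : σ a ≠ σ b := fun h => hab (σ.injective h)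
  simp only [tauOp_apply, sw_apply, Equiv.swap_apply_left, Equiv.swap_apply_right, sw_sw]
  rw [← cA_sq, ← cB_mul C h, cA_neg (σ a) (σ b)]
  ring

theorem tauOp_comm {n : ℕ} {a b c d : Fin n} (hac : a ≠ c) (had : a ≠ d)
    (hbc : b ≠ c) (hbd : b ≠ d) (m : MM I K n) (σ) :
    tauOp C a b (tauOp C c d m) σ = tauOp C c d (tauOp C a b m) σ := by
  simp only [tauOp_apply, sw_apply, Equiv.swap_apply_of_ne_of_ne hac had,
    Equiv.swap_apply_of_ne_of_ne hbc hbd, Equiv.swap_apply_of_ne_of_ne hac.symm hbc.symm,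
    Equiv.swap_apply_of_ne_of_ne had.symm hbd.symm, sw_comm σ hac had hbc hbd]
  ring

theorem tauOp_braid {n : ℕ} {a b c : Fin n} (hab : a ≠ b) (hac : a ≠ c)
    (hbc : b ≠ c) (m : MM I K n) (σ) :
    tauOp C b c (tauOp C a b (tauOp C b c m)) σ - tauOp C a b (tauOp C b c (tauOp C a b m)) σ
    = (if (σ a).2 = (σ c).2 then Qdiff C (σ a).2 (σ b).2 (σ a).1 (σ b).1 (σ c).1 else 0) * m σ := by
  have h1 : σ a ≠ σ b := fun h => hab (σ.injective h)
  have h2 : σ a ≠ σ c := fun h => hac (σ.injective h)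
  have h3 : σ b ≠ σ c := fun h => hbc (σ.injective h)
  rw [← cA_braid C h1 h2 h3]
  simp only [tauOp_apply, sw_apply, Equiv.swap_apply_left, Equiv.swap_apply_right, sw_sw,
    Equiv.swap_apply_of_ne_of_ne hab hac, Equiv.swap_apply_of_ne_of_ne hac.symm hbc.symm,
    sw_braid σ hab hac hbc]
  rw [← cB_mul C h1, ← cB_mul C h3, cA_neg (σ a) (σ b), cA_neg (σ b) (σ c)]
  have e := cA_mix1 h1 h2 h3
  generalize cA (σ a) (σ b) = x at *
  generalize cA (σ b) (σ c) = y at *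
  generalize cA (σ a) (σ c) = z at *
  linear_combination (cB C (σ b) (σ c) * m (sw σ b c) - cB C (σ a) (σ b) * m (sw σ a b)) * e

end Calib
end KLR


namespace KLR

section Calib2

set_option linter.unusedSectionVars false
set_option linter.unusedSimpArgs false

variable {k : Type} [Field k] {I : Type} [Fintype I] [DecidableEq I] (C : CartanDatum k I)
variable {K : Type} [Field K] [Algebra k K]

/-- Colours of a labelling. -/
def col {n : ℕ} (σ : Fin n ↪ K × I) : Fin n → I := fun a => (σ a).2

/-- Colour indicator. -/
def colE {n : ℕ} (ν : Fin n → I) : MM I K n := fun σ => if col σ = ν then 1 else 0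
/-- Coordinate function. -/
def coX {n : ℕ} (a : Fin n) : MM I K n := fun σ => (σ a).1

theorem colE_apply {n : ℕ} (ν : Fin n → I) (m : MM I K n) (σ) :
    diagOp (k := k) (colE ν) m σ = if col σ = ν then m σ else 0 := by
  rw [diagOp_apply, colE]; split_ifs <;> simp

theorem col_sw {n : ℕ} (σ : Fin n ↪ K × I) (a b : Fin n) :
    col (sw σ a b) = col σ ∘ Equiv.swap a b := rfl

theorem comp_swap_eq_iff {n : ℕ} (f g : Fin n → I) (a b : Fin n) :
    f ∘ Equiv.swap a b = g ↔ f = g ∘ Equiv.swap a b := by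
  constructor
  · rintro rfl; ext; simp
  · rintro rfl; ext; simp

theorem Qel_pi {n : ℕ} (i j : I) (f g : MM I K n) (σ) :
    Qel C i j f g σ = Qel C i j (f σ) (g σ) :=
  map_Qel C (Pi.evalAlgHom k (fun _ : (Fin n ↪ K × I) => K) σ) i j f g
theorem Qdiff_pi {n : ℕ} (i j : I) (f g h : MM I K n) (σ) :
    Qdiff C i j f g h σ = Qdiff C i j (f σ) (g σ) (h σ) :=
  map_Qdiff C (Pi.evalAlgHom k (fun _ : (Fin n ↪ K × I) => K) σ) i j f g h

variable (K) in
/-- The calibrated representation. -/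
noncomputable def calData (n : ℕ) : RepData C n (Module.End K (MM I K n)) where
  e ν := diagOp (k := k) (colE ν)
  x a := diagOp (k := k) (coX a)
  t l h := tauOp C ⟨l, Nat.lt_of_succ_lt h⟩ ⟨l + 1, h⟩
  ee ν ν' := by
    rw [← map_mul]
    have : (colE ν * colE ν' : MM I K n) = if ν = ν' then colE ν else 0 := by
      funext σ
      split_ifs with h
      · subst h; simp [colE]
      · simp only [Pi.mul_apply, colE, Pi.zero_apply]
        split_ifs with h1 h2 <;> simp
        exact h (h1.symm.trans h2)
    rw [this]; split_ifs <;> simp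
  esum := by
    rw [← map_sum, ← map_one (diagOp (k := k))]
    congr 1
    funext σ
    simp [colE]
  xx a b := by rw [← map_mul, ← map_mul, mul_comm]
  xe a ν := by rw [← map_mul, ← map_mul, mul_comm]
  taue l h ν := by
    refine LinearMap.ext fun m => funext fun σ => ?_
    simp only [Module.End.mul_apply, tauOp_apply, colE_apply, col_sw, comp_swap_eq_iff]
    by_cases h2 : (σ ⟨l, Nat.lt_of_succ_lt h⟩).2 = (σ ⟨l + 1, h⟩).2
    · have : col σ ∘ Equiv.swap (⟨l, Nat.lt_of_succ_lt h⟩ : Fin n) ⟨l + 1, h⟩ = col σ := by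
        funext c
        simp only [Function.comp_apply, col, Equiv.swap_apply_def]
        split_ifs with h3 h4
        · rw [h3, h2]
        · rw [h4, h2]
        · rfl
      have h' : col σ = ν ∘ Equiv.swap (⟨l, Nat.lt_of_succ_lt h⟩ : Fin n) ⟨l + 1, h⟩ ↔ col σ = ν := by
        rw [← comp_swap_eq_iff, this]
      simp only [h']
      split_ifs <;> simp
    · have : cA (σ ⟨l, Nat.lt_of_succ_lt h⟩) (σ ⟨l + 1, h⟩) = 0 := by simp [cA, h2]
      rw [this]
      split_ifs <;> simp
  tautau l h l' h' H := by
    refine LinearMap.ext fun m => funext fun σ => ?_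
    simp only [Module.End.mul_apply]
    apply tauOp_comm <;> simp [Fin.ext_iff] <;> omega
  tausq l h ν := by
    refine LinearMap.ext fun m => funext fun σ => ?_
    rw [← map_Qel, pow_two]
    simp only [Module.End.mul_apply]
    rw [tauOp_sq C (by simp [Fin.ext_iff]), colE_apply, diagOp_apply, colE_apply]
    split_ifs with h2
    · rw [← h2]
      rw [Qel_pi]
      rfl
    · simp
  taux l h m ν := by
    refine LinearMap.ext fun v => funext fun σ => ?_
    have hne : (⟨l, Nat.lt_of_succ_lt h⟩ : Fin n) ≠ ⟨l + 1, h⟩ := by simp [Fin.ext_iff]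
    have hh := cA_sub (fun h => hne (σ.injective h))
    have hc1 : ∀ q, (coX q : MM I K n) σ = (σ q).1 := fun q => rfl
    have hc2 : ∀ q a b, (coX q : MM I K n) (sw σ a b) = (σ (Equiv.swap a b q)).1 := fun q a b => rfl
    have hif : ∀ (c : Prop) [Decidable c] (f g : Module.End K (MM I K n)), 
      (if c then f else g) v σ = if c then f v σ else g v σ := by
      intro c _ f g; split_ifs <;> rfl
    simp only [hif, Module.End.mul_apply, LinearMap.sub_apply, LinearMap.neg_apply, Pi.neg_apply,
      Pi.sub_apply, tauOp_apply, diagOp_apply, hc1, hc2]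
    by_cases h2 : col σ = ν
    · have e1 : (colE ν : MM I K n) σ = 1 := by simp [colE, h2]
      have e2 : ∀ a, ν a = (σ a).2 := fun a => by rw [← h2]; rfl
      rw [e1]
      generalize (colE ν : MM I K n) (sw σ ⟨l, Nat.lt_of_succ_lt h⟩ ⟨l + 1, h⟩) = w
      simp only [LinearMap.zero_apply, Pi.zero_apply, e2]
      by_cases h3 : m = ⟨l, Nat.lt_of_succ_lt h⟩
      · subst h3
        rw [Equiv.swap_apply_left]
        by_cases h5 : (σ ⟨l, Nat.lt_of_succ_lt h⟩).2 = (σ ⟨l + 1, h⟩).2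
        · rw [if_pos h5] at hh
          rw [if_pos ⟨rfl, h5⟩]
          linear_combination v σ * hh
        · rw [if_neg h5] at hh
          rw [if_neg (fun H => h5 H.2), if_neg (fun H => h5 H.2)]
          linear_combination v σ * hh
      · rw [if_neg (fun h => h3 h.1)]
        by_cases h4 : m = ⟨l + 1, h⟩
        · subst h4
          rw [Equiv.swap_apply_right]
          by_cases h5 : (σ ⟨l, Nat.lt_of_succ_lt h⟩).2 = (σ ⟨l + 1, h⟩).2
          · rw [if_pos h5] at hh
            rw [if_pos ⟨rfl, h5⟩]
            linear_combination - v σ * hh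
          · rw [if_neg h5] at hh
            rw [if_neg (fun H => h5 H.2)]
            linear_combination - v σ * hh
        · rw [Equiv.swap_apply_of_ne_of_ne h3 h4, if_neg (fun h => h4 h.1)]
          ring
    · have e0 : (colE ν : MM I K n) σ = 0 := by simp [colE, h2]
      rw [e0]
      simp only [zero_mul, mul_zero, neg_zero, LinearMap.zero_apply, Pi.zero_apply, ite_self,
        zero_add, Equiv.swap_swap]
      ring
  braid l h ν := by
    refine LinearMap.ext fun m => funext fun σ => ?_
    have hif : ∀ (c : Prop) [Decidable c] (f g : Module.End K (MM I K n)), 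
      (if c then f else g) m σ = if c then f m σ else g m σ := by
      intro c _ f g; split_ifs <;> rfl
    rw [← map_Qdiff]
    simp only [hif, Module.End.mul_apply, LinearMap.sub_apply, Pi.sub_apply]
    rw [tauOp_braid C (a := ⟨l, Nat.lt_of_succ_lt (Nat.lt_of_succ_lt h)⟩)
      (b := ⟨l + 1, Nat.lt_of_succ_lt h⟩) (c := ⟨l + 1 + 1, h⟩)
      (Fin.ne_of_val_ne (by simp)) (Fin.ne_of_val_ne (by change l ≠ l + 1 + 1; omega))
      (Fin.ne_of_val_ne (by simp)), diagOp_apply, diagOp_apply, diagOp_apply, LinearMap.zero_apply,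
      Pi.zero_apply]
    by_cases h2 : col σ = ν
    · have e1 : (colE ν : MM I K n) σ = 1 := by simp [colE, h2]
      subst h2
      rw [e1]
      by_cases h3 : (σ ⟨l, Nat.lt_of_succ_lt (Nat.lt_of_succ_lt h)⟩).2 = (σ ⟨l + 1 + 1, h⟩).2
      · rw [if_pos h3]
        refine Eq.trans ?_ (if_pos h3).symm
        rw [Qdiff_pi, one_mul]
        rfl
      · rw [if_neg h3, zero_mul]
        exact (if_neg h3).symm
    · have e0 : (colE ν : MM I K n) σ = 0 := by simp [colE, h2]
      simp [e0]

variable (K) in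
/-- The calibrated representation as an algebra map. -/
noncomputable def rho (n : ℕ) : Alg C n →ₐ[k] Module.End K (MM I K n) := (calData C K n).lift

theorem rho_Ee {n : ℕ} (ν : Fin n → I) (m : MM I K n) (σ) :
    rho C K n (Ee C ν) m σ = if col σ = ν then m σ else 0 := by
  rw [rho, RepData.lift_Ee]; exact colE_apply _ _ _
theorem rho_Xx {n : ℕ} (a : Fin n) (m : MM I K n) (σ) :
    rho C K n (Xx C a) m σ = (σ a).1 * m σ := by
  rw [rho, RepData.lift_Xx]; rfl
theorem rho_Tt {n : ℕ} (l : ℕ) (h : l + 1 < n) (m : MM I K n) (σ) :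
    rho C K n (Tt C l h) m σ = cA (σ ⟨l, Nat.lt_of_succ_lt h⟩) (σ ⟨l + 1, h⟩) * m σ
    + cB C (σ ⟨l, Nat.lt_of_succ_lt h⟩) (σ ⟨l + 1, h⟩) *
      m (sw σ ⟨l, Nat.lt_of_succ_lt h⟩ ⟨l + 1, h⟩) := by
  rw [rho, RepData.lift_Tt]; rfl

/-- Appending a label. -/
def snocE {n : ℕ} (ρ : Fin n ↪ K × I) (p : K × I) (h : p ∉ Set.range ρ) : Fin (n + 1) ↪ K × I :=
  ⟨Fin.snoc (α := fun _ => K × I) ρ p, by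
    rw [Fin.snoc_injective_iff]; exact ⟨ρ.injective, h⟩⟩

/-- Removing the last label. -/
def initE {n : ℕ} (ρ : Fin (n + 1) ↪ K × I) : Fin n ↪ K × I := Fin.castSuccEmb.trans ρ

@[simp] theorem initE_apply {n : ℕ} (ρ : Fin (n + 1) ↪ K × I) (a : Fin n) :
    initE ρ a = ρ a.castSucc := rfl
@[simp] theorem snocE_castSucc {n : ℕ} (ρ : Fin n ↪ K × I) (p : K × I) (h : p ∉ Set.range ρ)
    (a : Fin n) : snocE ρ p h a.castSucc = ρ a := Fin.snoc_castSucc (α := fun _ => K × I) _ _ _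
@[simp] theorem snocE_last {n : ℕ} (ρ : Fin n ↪ K × I) (p : K × I) (h : p ∉ Set.range ρ) :
    snocE ρ p h (Fin.last n) = p := Fin.snoc_last (α := fun _ => K × I) _ _
@[simp] theorem initE_snocE {n : ℕ} (ρ : Fin n ↪ K × I) (p : K × I) (h : p ∉ Set.range ρ) :
    initE (snocE ρ p h) = ρ := by ext a : 1; simp

theorem embE_ext {n : ℕ} {ρ ρ' : Fin (n + 1) ↪ K × I} (h1 : initE ρ = initE ρ')
    (h2 : ρ (Fin.last n) = ρ' (Fin.last n)) : ρ = ρ' := by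
  ext a : 1
  induction a using Fin.lastCases with
  | last => exact h2
  | cast a => exact DFunLike.congr_fun h1 a

open Classical in
/-- Restriction operator. -/
noncomputable def prE (n : ℕ) (p : K × I) : MM I K (n + 1) →ₗ[K] MM I K n where
  toFun m ρ := if h : p ∉ Set.range ρ then m (snocE ρ p h) else 0
  map_add' m m' := by ext ρ; simp only [Pi.add_apply]; split_ifs <;> simp
  map_smul' c m := by
    ext ρ; simp only [Pi.smul_apply, smul_eq_mul, RingHom.id_apply]; split_ifs <;> simp

open Classical in
/-- Extension operator. -/
noncomputable def snE (n : ℕ) (q : K × I) : MM I K n →ₗ[K] MM I K (n + 1) where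
  toFun m ρ := if ρ (Fin.last n) = q then m (initE ρ) else 0
  map_add' m m' := by ext ρ; simp only [Pi.add_apply]; split_ifs <;> simp
  map_smul' c m := by
    ext ρ; simp only [Pi.smul_apply, smul_eq_mul, RingHom.id_apply]; split_ifs <;> simp

theorem prE_pos {n : ℕ} {p : K × I} (m : MM I K (n + 1)) {ρ : Fin n ↪ K × I} (h : p ∉ Set.range ρ) :
    prE n p m ρ = m (snocE ρ p h) := dif_pos h
theorem prE_neg {n : ℕ} {p : K × I} (m : MM I K (n + 1)) {ρ : Fin n ↪ K × I} (h : ¬ p ∉ Set.range ρ) :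
    prE n p m ρ = 0 := dif_neg h
theorem snE_pos {n : ℕ} {q : K × I} (m : MM I K n) {ρ : Fin (n + 1) ↪ K × I} (h : ρ (Fin.last n) = q) :
    snE n q m ρ = m (initE ρ) := if_pos h
theorem snE_neg {n : ℕ} {q : K × I} (m : MM I K n) {ρ : Fin (n + 1) ↪ K × I} (h : ¬ ρ (Fin.last n) = q) :
    snE n q m ρ = 0 := if_neg h

theorem rho_sum_snoc {n : ℕ} (ν : Fin n → I) (m : MM I K (n + 1)) (σ) :
    rho C K (n + 1) (iota C n (Ee C ν)) m σ = if col (initE σ) = ν then m σ else 0 := by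
  rw [iota_Ee, map_sum, LinearMap.sum_apply, Finset.sum_apply]
  simp only [rho_Ee]
  have : ∀ l : I, (col σ = Fin.snoc ν l) ↔ (col (initE σ) = ν ∧ (σ (Fin.last n)).2 = l) := by
    intro l
    constructor
    · intro h
      constructor
      · funext a
        have := congrFun h a.castSucc
        rw [Fin.snoc_castSucc] at this; exact this
      · have := congrFun h (Fin.last n)
        rw [Fin.snoc_last] at this; exact this
    · rintro ⟨rfl, rfl⟩
      funext a
      induction a using Fin.lastCases with
      | last => rw [Fin.snoc_last]; rfl
      | cast a => rw [Fin.snoc_castSucc]; rfl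
  simp only [this]
  by_cases h : col (initE σ) = ν <;> simp [h]

theorem sw_snocE {n : ℕ} (ρ : Fin n ↪ K × I) (p : K × I) (h : p ∉ Set.range ρ) (a b : Fin n)
    (h' : p ∉ Set.range (sw ρ a b)) :
    sw (snocE ρ p h) a.castSucc b.castSucc = snocE (sw ρ a b) p h' := by
  ext c : 1
  induction c using Fin.lastCases with
  | last =>
    rw [sw_apply, Equiv.swap_apply_of_ne_of_ne, snocE_last, snocE_last]
    · exact (Fin.castSucc_lt_last a).ne'
    · exact (Fin.castSucc_lt_last b).ne'
  | cast c =>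
    rw [sw_apply, snocE_castSucc, sw_apply]
    have : Equiv.swap a.castSucc b.castSucc c.castSucc = (Equiv.swap a b c).castSucc := by
      simp only [Equiv.swap_apply_def, Fin.castSucc_inj]; split_ifs <;> rfl
    rw [this, snocE_castSucc]

theorem range_sw {n : ℕ} (ρ : Fin n ↪ K × I) (a b : Fin n) :
    Set.range (sw ρ a b) = Set.range ρ := by
  have : (sw ρ a b : Fin n → K × I) = ρ ∘ Equiv.swap a b := rfl
  rw [this, Set.range_comp, Equiv.range_eq_univ, Set.image_univ]

theorem initE_sw {n : ℕ} (ρ : Fin (n + 1) ↪ K × I) (a b : Fin n) :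
    initE (sw ρ a.castSucc b.castSucc) = sw (initE ρ) a b := by
  ext c : 1
  have : Equiv.swap a.castSucc b.castSucc c.castSucc = (Equiv.swap a b c).castSucc := by
      simp only [Equiv.swap_apply_def, Fin.castSucc_inj]; split_ifs <;> rfl
  simp [this]

theorem prE_iota {n : ℕ} (p : K × I) (r : Alg C n) (m : MM I K (n + 1)) :
    prE n p (rho C K (n + 1) (iota C n r) m) = rho C K n r (prE n p m) := by
  induction r using Alg_induct generalizing m with
  | hs c =>
    rw [AlgHom.commutes, AlgHom.commutes, AlgHom.commutes]
    simp only [Module.algebraMap_end_apply]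
    rw [← algebraMap_smul K c m, map_smul, algebraMap_smul]
  | he ν =>
    funext ρ
    rw [rho_Ee]
    by_cases h : p ∉ Set.range ρ
    · rw [prE_pos _ h, rho_sum_snoc, prE_pos _ h, initE_snocE]
    · rw [prE_neg _ h, prE_neg _ h]; simp
  | hx a =>
    funext ρ
    rw [rho_Xx, iota_Xx]
    by_cases h : p ∉ Set.range ρ
    · rw [prE_pos _ h, rho_Xx, prE_pos _ h, snocE_castSucc]
    · rw [prE_neg _ h, prE_neg _ h]; simp
  | ht l hl =>
    funext ρ
    rw [rho_Tt, iota_Tt]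
    by_cases h : p ∉ Set.range ρ
    · rw [prE_pos _ h, rho_Tt, prE_pos _ h, prE_pos _ (by rw [range_sw]; exact h),
        ← sw_snocE ρ p h]
      have h1 := snocE_castSucc ρ p h ⟨l, Nat.lt_of_succ_lt hl⟩
      have h2 := snocE_castSucc ρ p h ⟨l + 1, hl⟩
      simp only [Fin.castSucc_mk] at h1 h2
      rw [h1, h2]; rfl
    · rw [prE_neg _ h, prE_neg _ h, prE_neg _ (by rw [range_sw]; exact h)]; simp
  | hadd a b ha hb =>
    simp only [map_add, LinearMap.add_apply, ha, hb]
  | hmul a b ha hb =>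
    simp only [map_mul, Module.End.mul_apply, ha, hb]

theorem snE_iota {n : ℕ} (q : K × I) (r : Alg C n) (m : MM I K n) :
    rho C K (n + 1) (iota C n r) (snE n q m) = snE n q (rho C K n r m) := by
  induction r using Alg_induct generalizing m with
  | hs c =>
    rw [AlgHom.commutes, AlgHom.commutes, AlgHom.commutes]
    simp only [Module.algebraMap_end_apply]
    rw [← algebraMap_smul K c m, map_smul, algebraMap_smul]
  | he ν =>
    funext ρ
    rw [rho_sum_snoc]
    by_cases h : ρ (Fin.last n) = q
    · rw [snE_pos _ h, snE_pos _ h, rho_Ee]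
    · rw [snE_neg _ h, snE_neg _ h]; simp
  | hx a =>
    funext ρ
    rw [iota_Xx, rho_Xx]
    by_cases h : ρ (Fin.last n) = q
    · rw [snE_pos _ h, snE_pos _ h, rho_Xx, initE_apply]
    · rw [snE_neg _ h, snE_neg _ h]; simp
  | ht l hl =>
    funext ρ
    rw [iota_Tt, rho_Tt]
    have e : sw ρ (⟨l, Nat.lt_of_succ_lt hl⟩ : Fin n).castSucc (⟨l + 1, hl⟩ : Fin n).castSucc
      (Fin.last n) = ρ (Fin.last n) := by
      rw [sw_apply, Equiv.swap_apply_of_ne_of_ne]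
      · exact (Fin.castSucc_lt_last _).ne'
      · exact (Fin.castSucc_lt_last _).ne'
    by_cases h : ρ (Fin.last n) = q
    · rw [snE_pos _ h, snE_pos _ h, rho_Tt, ← initE_sw]
      have e' := snE_pos m (e.trans h)
      simp only [Fin.castSucc_mk] at e' ⊢
      rw [e']; rfl
    · have e' := snE_neg m (fun h2 => h (e.symm.trans h2))
      simp only [Fin.castSucc_mk] at e'
      rw [snE_neg _ h, snE_neg _ h, e']; simp
  | hadd a b ha hb =>
    simp only [map_add, LinearMap.add_apply, ha, hb]
  | hmul a b ha hb =>
    simp only [map_mul, Module.End.mul_apply, ha, hb]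

theorem prE_XL {n : ℕ} (p : K × I) (m : MM I K (n + 1)) :
    prE n p (rho C K (n + 1) (XL C n) m) = p.1 • prE n p m := by
  funext ρ
  rw [Pi.smul_apply]
  by_cases h : p ∉ Set.range ρ
  · rw [prE_pos _ h, prE_pos _ h, XL, rho_Xx, snocE_last]; rfl
  · rw [prE_neg _ h, prE_neg _ h, smul_zero]

theorem prE_XL_pow {n : ℕ} (p : K × I) (a : ℕ) (m : MM I K (n + 1)) :
    prE n p (rho C K (n + 1) (XL C n ^ a) m) = p.1 ^ a • prE n p m := by
  induction a with
  | zero => simp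
  | succ a ih => rw [pow_succ', map_mul, Module.End.mul_apply, prE_XL, ih, smul_smul, ← pow_succ']

theorem rho_EL {n : ℕ} (l : I) (m : MM I K (n + 1)) (σ) :
    rho C K (n + 1) (EL C n l) m σ = if (σ (Fin.last n)).2 = l then m σ else 0 := by
  rw [EL, map_sum, LinearMap.sum_apply, Finset.sum_apply]
  simp only [rho_Ee]
  have : ∀ ν : Fin n → I, (col σ = Fin.snoc ν l) ↔ (ν = col (initE σ) ∧ (σ (Fin.last n)).2 = l) := by
    intro ν
    have : col σ = Fin.snoc (α := fun _ => I) (col (initE σ)) (σ (Fin.last n)).2 := by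
      funext a
      induction a using Fin.lastCases with
      | last => rw [Fin.snoc_last]; rfl
      | cast a => rw [Fin.snoc_castSucc]; rfl
    rw [this, snoc_ext_iff, eq_comm (a := ν)]
  simp only [this]
  by_cases h : (σ (Fin.last n)).2 = l <;> simp [h]

theorem prE_EL {n : ℕ} (p : K × I) (l : I) (m : MM I K (n + 1)) :
    prE n p (rho C K (n + 1) (EL C n l) m) = if p.2 = l then prE n p m else 0 := by
  funext ρ
  by_cases h : p ∉ Set.range ρ
  · rw [prE_pos _ h, rho_EL, snocE_last]
    split_ifs
    · rw [prE_pos _ h]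
    · rfl
  · rw [prE_neg _ h]; split_ifs
    · rw [prE_neg _ h]
    · rfl

theorem prE_TL_snE {n : ℕ} {p q : K × I} (hpq : p ≠ q) (m : MM I K (n + 1)) :
    prE (n + 1) p (rho C K (n + 2) (TL C n) (snE (n + 1) q m)) =
      cB C q p • snE n q (prE n p m) := by
  funext ρ
  rw [Pi.smul_apply]
  have hsw : ∀ h, sw (snocE ρ p h) (Fin.last n).castSucc (Fin.last (n + 1)) (Fin.last (n + 1))
      = ρ (Fin.last n) := by
    intro h
    rw [sw_apply, Equiv.swap_apply_right, snocE_castSucc]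
  by_cases h : p ∉ Set.range ρ
  · rw [prE_pos _ h]
    refine (rho_Tt C _ _ _ _).trans ?_
    change _ * snE (n + 1) q m (snocE ρ p h) + cB C (snocE ρ p h (Fin.last n).castSucc) 
      (snocE ρ p h (Fin.last (n + 1))) * snE (n + 1) q m
      (sw (snocE ρ p h) (Fin.last n).castSucc (Fin.last (n + 1))) = _
    rw [snE_neg m (ρ := snocE ρ p h) (by rw [snocE_last]; exact hpq), mul_zero, zero_add,
      snocE_castSucc, snocE_last]
    by_cases h2 : ρ (Fin.last n) = q
    · rw [snE_pos _ ((hsw h).trans h2), snE_pos _ h2, h2]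
      have h3 : p ∉ Set.range (initE ρ) := by
        rintro ⟨a, rfl⟩
        exact h ⟨a.castSucc, rfl⟩
      rw [prE_pos _ h3, smul_eq_mul]
      congr 2
      apply embE_ext
      · ext a : 1
        rw [initE_snocE, initE_apply, initE_apply, sw_apply, initE_apply,
          Equiv.swap_apply_of_ne_of_ne]
        · exact snocE_castSucc _ _ _ _
        · simp [Fin.ext_iff]; omega
        · simp [Fin.ext_iff]; omega
      · rw [initE_apply, sw_apply, Equiv.swap_apply_left, snocE_last, snocE_last]
    · rw [snE_neg _ (fun h3 => h2 ((hsw h).symm.trans h3)), snE_neg _ h2, mul_zero, smul_zero]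
  · rw [prE_neg _ h]
    by_cases h2 : ρ (Fin.last n) = q
    · rw [snE_pos _ h2, prE_neg, smul_zero]
      intro h3
      apply h
      rintro ⟨a, rfl⟩
      induction a using Fin.lastCases with
      | last => exact hpq h2
      | cast a => exact h3 ⟨a, rfl⟩
    · rw [snE_neg _ h2, smul_zero]

end Calib2
end KLR


namespace KLR

section Free

set_option linter.unusedSectionVars false
set_option linter.unusedSimpArgs false

variable {k : Type} [Field k] {I : Type} [Fintype I] [DecidableEq I] (C : CartanDatum k I)
variable {K : Type} [Field K] [Algebra k K]

theorem Qel_finite {i j : I} (hij : i ≠ j) (v : K) : {y : K | Qel C i j y v = 0}.Finite := by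
  set P : Polynomial K := Qel C i j (Polynomial.X : Polynomial K) (Polynomial.C v) with hP
  have hev : ∀ y, P.eval y = Qel C i j y v := by
    intro y
    have := map_Qel C ((Polynomial.aeval (R := K) y).restrictScalars k) i j
      (Polynomial.X : Polynomial K) (Polynomial.C v)
    simpa [hP] using this
  have hco : P.coeff (-(C.a i j)).toNat = algebraMap k K (C.t i j (-(C.a i j)).toNat 0) := by
    rw [hP, Qel, if_neg hij, Polynomial.finsetSum_coeff,
      Finset.sum_eq_single (-(C.a i j)).toNat, Polynomial.finsetSum_coeff, Finset.sum_eq_single 0]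
    · have h1 := C.a_nonpos i j hij
      have h2 : (((-(C.a i j)).toNat : ℕ) : ℤ) = -(C.a i j) := Int.toNat_of_nonneg (by omega)
      rw [if_pos (by rw [h2]; simp)]
      simp [Algebra.smul_def]
    · intro q _ hq
      rw [if_neg]
      · simp
      · intro h
        have h1 := C.a_nonpos i j hij
        have h2 : (((-(C.a i j)).toNat : ℕ) : ℤ) = -(C.a i j) := Int.toNat_of_nonneg (by omega)
        rw [h2] at h
        have h3 := C.d_pos j
        have h4 : C.d j * (q : ℤ) = 0 := by linarith
        rcases mul_eq_zero.1 h4 with h5 | h5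
        · omega
        · exact hq (by exact_mod_cast h5)
    · intro h; simp at h
    · intro p _ hp
      rw [Polynomial.finsetSum_coeff]
      refine Finset.sum_eq_zero fun q _ => ?_
      split_ifs
      · rw [Polynomial.coeff_smul, ← Polynomial.C_pow, Polynomial.coeff_mul_C, Polynomial.coeff_X_pow,
          if_neg (Ne.symm hp)]
        simp
      · simp
    · intro h; simp at h
  have hP0 : P ≠ 0 := by
    intro h
    rw [h, Polynomial.coeff_zero] at hco
    exact C.t_lead i j hij ((map_eq_zero _).1 hco.symm)
  refine (P.rootSet_finite K).subset fun y hy => ?_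
  rw [Polynomial.mem_rootSet]
  refine ⟨hP0, ?_⟩
  rw [Polynomial.coe_aeval_eq_eval, hev]; exact hy

theorem cB_finite (i : I) (q : K × I) : {y : K | (y, i) = q ∨ cB C q (y, i) = 0}.Finite := by
  have h1 : {y : K | (y, i) = q}.Finite :=
    (Set.finite_singleton q.1).subset fun y hy => by
      have : (y, i) = q := hy
      simp [← this]
  by_cases h : i = q.2
  · refine h1.subset ?_
    rintro y (hy | hy)
    · exact hy
    · by_contra hne
      have h2 := cB_mul C (K := K) (p := q) (q := (y, i)) (Ne.symm hne)
      rw [hy, zero_mul, cD, if_pos h.symm] at h2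
      have h3 := fst_ne (K := K) (p := q) (q := (y, i)) (Ne.symm hne) h.symm
      have h4 : (q.1 - y)⁻¹ ^ 2 = 0 := by linear_combination h2
      exact inv_ne_zero h3 (pow_eq_zero_iff (two_ne_zero) |>.1 h4)
  · refine (h1.union (Qel_finite C h q.1)).subset ?_
    rintro y (hy | hy)
    · exact Or.inl hy
    · by_cases hne : (y, i) = q
      · exact Or.inl hne
      · right
        have h2 := cB_mul C (K := K) (p := q) (q := (y, i)) (Ne.symm hne)
        rw [hy, zero_mul, cD, if_neg (Ne.symm h)] at h2
        change Qel C i q.2 y q.1 = 0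
        rw [Qel_symm, ← h2]

theorem generic_finite {n : ℕ} (i : I) (σ : Fin n ↪ K × I) :
    {y : K | ¬ ((y, i) ∉ Set.range σ ∧ ∀ a, cB C (σ a) (y, i) ≠ 0)}.Finite := by
  refine (Set.finite_iUnion fun a : Fin n => cB_finite C i (σ a)).subset fun y hy => ?_
  simp only [Set.mem_ofPred_eq, not_and_or, not_not, not_forall] at hy
  rcases hy with ⟨a, ha⟩ | ⟨a, ha⟩
  · exact Set.mem_iUnion.2 ⟨a, Or.inl ha.symm⟩
  · exact Set.mem_iUnion.2 ⟨a, Or.inr ha⟩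

open Classical in
/-- Delta functions. -/
noncomputable def sg {n : ℕ} (σ : Fin n ↪ K × I) : MM I K n := fun ρ => if ρ = σ then 1 else 0

/-- Zero or a delta function. -/
def IsSg {n : ℕ} (v : MM I K n) : Prop := v = 0 ∨ ∃ σ, v = sg σ

theorem snE_sg {n : ℕ} (q : K × I) (σ : Fin n ↪ K × I) (h : q ∉ Set.range σ) :
    snE n q (sg σ) = sg (snocE σ q h) := by
  funext ρ
  by_cases h1 : ρ (Fin.last n) = q
  · rw [snE_pos _ h1, sg, sg]
    have : initE ρ = σ ↔ ρ = snocE σ q h := by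
      constructor
      · intro h2; exact embE_ext (by rw [h2, initE_snocE]) (by rw [h1, snocE_last])
      · rintro rfl; simp
    by_cases h3 : initE ρ = σ
    · rw [if_pos h3, if_pos (this.1 h3)]
    · rw [if_neg h3, if_neg (fun h4 => h3 (this.2 h4))]
  · rw [snE_neg _ h1, sg, if_neg]
    rintro rfl
    exact h1 (snocE_last _ _ _)

theorem IsSg_snE {n : ℕ} (q : K × I) {v : MM I K n} (hv : IsSg v) : IsSg (snE n q v) := by
  rcases hv with rfl | ⟨σ, rfl⟩
  · left; simp
  · by_cases h : q ∉ Set.range σ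
    · right; exact ⟨_, snE_sg q σ h⟩
    · left
      funext ρ
      by_cases h1 : ρ (Fin.last n) = q
      · rw [snE_pos _ h1, sg, if_neg, Pi.zero_apply]
        rintro rfl
        rw [not_not] at h
        obtain ⟨a, ha⟩ := h
        rw [← h1, initE_apply] at ha
        exact absurd (ρ.injective ha) (Fin.castSucc_lt_last a).ne
      · rw [snE_neg _ h1, Pi.zero_apply]

theorem prE_snE_ne {n : ℕ} {p q : K × I} (h : p ≠ q) (m : MM I K n) : prE n p (snE n q m) = 0 := by
  funext ρ
  by_cases h1 : p ∉ Set.range ρ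
  · rw [prE_pos _ h1, snE_neg _ (by rw [snocE_last]; exact h)]; rfl
  · rw [prE_neg _ h1]; rfl

theorem prE_snE_sg {n : ℕ} {p : K × I} {σ : Fin n ↪ K × I} (h : p ∉ Set.range σ) :
    prE n p (snE n p (sg σ)) = sg σ := by
  funext ρ
  by_cases h1 : p ∉ Set.range ρ
  · rw [prE_pos _ h1, snE_pos _ (by rw [snocE_last]), initE_snocE]
  · rw [prE_neg _ h1, sg, if_neg]
    rintro rfl
    exact h1 h

theorem tri (p : K × I) : ∀ (n : ℕ) (σ : Fin n ↪ K × I), p ∉ Set.range σ →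
    (∀ a, cB C (σ a) p ≠ 0) → ∀ b ≤ n, ∃ v : MM I K (n + 1), IsSg v ∧ ∃ c : K, c ≠ 0 ∧
      (∀ b' ≤ n, b < b' → prE n p (rho C K (n + 1) (tt C n b') v) = 0) ∧
      prE n p (rho C K (n + 1) (tt C n b) v) = c • sg σ := by
  have base : ∀ (n : ℕ) (σ : Fin n ↪ K × I), p ∉ Set.range σ →
    ∃ v : MM I K (n + 1), IsSg v ∧ ∃ c : K, c ≠ 0 ∧
      (∀ b' ≤ n, n < b' → prE n p (rho C K (n + 1) (tt C n b') v) = 0) ∧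
      prE n p (rho C K (n + 1) (tt C n n) v) = c • sg σ := by
    intro n σ h
    refine ⟨snE n p (sg σ), IsSg_snE p (Or.inr ⟨σ, rfl⟩), 1, one_ne_zero, ?_, ?_⟩
    · intro b' h1 h2; omega
    · rw [tt_self, map_one, Module.End.one_apply, prE_snE_sg h, one_smul]
  intro n
  induction n with
  | zero =>
    intro σ h _ b hb
    obtain rfl : b = 0 := by omega
    exact base 0 σ h
  | succ n ih =>
    intro σ h hB b hb
    rcases Nat.lt_or_ge n b with hlt | hle
    · obtain rfl : b = n + 1 := by omega
      exact base _ σ h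
    · have hpq : p ≠ σ (Fin.last n) := fun h' => h ⟨_, h'.symm⟩
      have h3 : p ∉ Set.range (initE σ) := by
        rintro ⟨a, ha⟩
        exact h ⟨a.castSucc, ha⟩
      obtain ⟨v, hv, c, hc, h1, h2⟩ := ih (initE σ) h3 (fun a => hB _) b hle
      have key : ∀ b' ≤ n, prE (n + 1) p (rho C K (n + 2) (tt C (n + 1) b')
          (snE (n + 1) (σ (Fin.last n)) v)) = cB C (σ (Fin.last n)) p •
          snE n (σ (Fin.last n)) (prE n p (rho C K (n + 1) (tt C n b') v)) := by
        intro b' hb'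
        rw [tt_succ hb', map_mul, Module.End.mul_apply, snE_iota, prE_TL_snE C hpq]
      refine ⟨snE (n + 1) (σ (Fin.last n)) v, IsSg_snE _ hv, cB C (σ (Fin.last n)) p * c,
        mul_ne_zero (hB _) hc, ?_, ?_⟩
      · intro b' hb' hbb'
        rcases Nat.lt_or_ge n b' with hlt | hle'
        · obtain rfl : b' = n + 1 := by omega
          rw [tt_self, map_one, Module.End.one_apply, prE_snE_ne hpq]
        · rw [key b' hle', h1 b' hle' hbb', map_zero, smul_zero]
      · have hr : σ (Fin.last n) ∉ Set.range (initE σ) := by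
          rintro ⟨a, ha⟩
          exact absurd (σ.injective ha) (Fin.castSucc_lt_last a).ne
        rw [key b hle, h2, map_smul, smul_smul, snE_sg _ _ hr]
        congr 2
        exact embE_ext (by simp) (by simp)

/-- The basis map for the left module structure. -/
noncomputable def LL (n : ℕ) : ((Fin (n + 1) × I × ℕ) →₀ Alg C n) →ₗ[k] Alg C (n + 1) :=
  Finsupp.lsum k fun t => (LinearMap.mulRight k
    (XL C n ^ t.2.2 * (EL C n t.2.1 * tt C n t.1))) ∘ₗ (iota C n).toLinearMap

theorem LL_single (n : ℕ) (b : Fin (n + 1)) (l : I) (a : ℕ) (r : Alg C n) :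
    LL C n (Finsupp.single (b, l, a) r) = iota C n r * (XL C n ^ a * (EL C n l * tt C n b)) := by
  rw [LL, Finsupp.lsum_single]; rfl

theorem LL_surj (n : ℕ) : Function.Surjective (LL C n) := by
  rw [← LinearMap.range_eq_top, eq_top_iff]
  intro z _
  have := SL_top n z
  rw [SL] at this
  refine Submodule.span_le.2 ?_ this
  rintro _ ⟨r, a, l, b, hb, rfl⟩
  exact ⟨_, LL_single C n ⟨b, by omega⟩ l a r⟩

variable (K) in
/-- Faithfulness on delta functions. -/
def Faithful (n : ℕ) : Prop :=
  ∀ r : Alg C n, (∀ σ : Fin n ↪ K × I, rho C K n r (sg σ) = 0) → r = 0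

theorem prE_LL {n : ℕ} (p : K × I) (F) (v : MM I K (n + 1)) :
    prE n p (rho C K (n + 1) (LL C n F) v) = F.sum fun t r =>
      if p.2 = t.2.1 then p.1 ^ t.2.2 • rho C K n r (prE n p (rho C K (n + 1) (tt C n t.1) v))
      else 0 := by
  rw [LL, Finsupp.lsum_apply, Finsupp.sum, map_sum, LinearMap.sum_apply, map_sum, Finsupp.sum]
  refine Finset.sum_congr rfl fun t _ => ?_
  simp only [LinearMap.comp_apply, LinearMap.mulRight_apply, AlgHom.toLinearMap_apply, map_mul,
    Module.End.mul_apply]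
  rw [prE_iota, prE_XL_pow, prE_EL]
  split_ifs
  · rw [map_smul]
  · simp

theorem LL_faithful [Infinite K] {n : ℕ} (hf : Faithful C K n) (F)
    (h : ∀ σ : Fin (n + 1) ↪ K × I, rho C K (n + 1) (LL C n F) (sg σ) = 0) : F = 0 := by
  have h' : ∀ v : MM I K (n + 1), IsSg v → rho C K (n + 1) (LL C n F) v = 0 := by
    rintro v (rfl | ⟨σ, rfl⟩)
    · simp
    · exact h σ
  suffices H : ∀ (m : ℕ) (b : Fin (n + 1)), (b : ℕ) = m → ∀ (i : I) (a : ℕ), F (b, i, a) = 0 by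
    ext ⟨b, i, a⟩ 
    exact H b b rfl i a
  intro m
  induction m using Nat.strong_induction_on with
  | _ m ih =>
  rintro b rfl i a
  apply hf
  intro σ
  funext ρ
  set P : Polynomial K := F.sum fun t r =>
    if t.1 = b ∧ t.2.1 = i then Polynomial.monomial t.2.2 (rho C K n r (sg σ) ρ) else 0 with hP
  have hco : P.coeff a = rho C K n (F (b, i, a)) (sg σ) ρ := by
    rw [hP, Finsupp.sum, Polynomial.finsetSum_coeff, Finset.sum_eq_single (b, i, a)]
    · simp
    · rintro ⟨b', l, a'⟩ _ hne
      split_ifs with h1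
      · obtain ⟨h1, h2⟩ := h1
        simp only at h1 h2
        subst h1 h2
        rw [Polynomial.coeff_monomial, if_neg]
        rintro rfl; exact hne rfl
      · simp
    · intro h1
      rw [Finsupp.notMem_support_iff] at h1
      simp [h1]
  rw [← hco]
  have hP0 : P = 0 := by
    apply Polynomial.eq_zero_of_infinite_isRoot
    refine (Set.Infinite.mono ?_ (generic_finite C i σ).infinite_compl)
    intro y hy
    rw [Set.mem_compl_iff, Set.mem_ofPred_eq, not_not] at hy
    obtain ⟨hy1, hy2⟩ := hy
    obtain ⟨v, hv, c, hc, h1, h2⟩ := tri C (y, i) n σ hy1 hy2 b (Nat.lt_succ_iff.1 b.2)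
    have h3 := prE_LL C (y, i) F v
    rw [h' v hv, map_zero] at h3
    have h4 := congrFun h3 ρ
    change P.eval y = 0
    apply mul_left_cancel₀ hc
    rw [mul_zero]
    refine Eq.trans ?_ h4.symm
    rw [hP, Finsupp.sum, Finsupp.sum, Polynomial.eval_finsetSum, Finset.mul_sum, Finset.sum_apply]
    refine Finset.sum_congr rfl fun t ht => ?_
    obtain ⟨b', l, a'⟩ := t
    simp only
    by_cases h5 : i = l
    · subst h5
      rw [if_pos rfl]
      rcases lt_trichotomy b' b with h6 | h6 | h6
      · rw [Finsupp.mem_support_iff] at ht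
        exact absurd (ih b' h6 b' rfl i a') ht
      · subst h6
        rw [if_pos ⟨rfl, rfl⟩, h2]
        simp only [Polynomial.eval_monomial, map_smul, Pi.smul_apply, smul_eq_mul]
        ring
      · rw [if_neg (fun h7 => h6.ne' h7.1), h1 b' (Nat.lt_succ_iff.1 b'.2) h6]
        simp
    · rw [if_neg (fun h6 => h5 h6.2.symm), if_neg h5]
      simp
  rw [hP0]; simp

theorem Alg0 (r : Alg C 0) : ∃ c : k, r = algebraMap k _ c := by
  induction r using Alg_induct with
  | hs c => exact ⟨c, rfl⟩
  | he ν =>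
    refine ⟨1, ?_⟩
    rw [map_one, ← Ee_sum (C := C), Fintype.sum_subsingleton _ ν]
  | hx a => exact a.elim0
  | ht l h => omega
  | hadd a b ha hb =>
    obtain ⟨c, rfl⟩ := ha; obtain ⟨d, rfl⟩ := hb; exact ⟨c + d, by simp⟩
  | hmul a b ha hb =>
    obtain ⟨c, rfl⟩ := ha; obtain ⟨d, rfl⟩ := hb; exact ⟨c * d, by simp⟩

theorem faithful [Infinite K] (n : ℕ) : Faithful C K n := by
  induction n with
  | zero =>
    intro r h
    obtain ⟨c, rfl⟩ := Alg0 C r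
    let σ : Fin 0 ↪ K × I := ⟨Fin.elim0, fun a => a.elim0⟩
    have := congrFun (h σ) σ
    rw [AlgHom.commutes, Module.algebraMap_end_apply, Pi.smul_apply, sg, if_pos rfl,
      Algebra.smul_def, mul_one] at this
    have : c = 0 := (map_eq_zero _).1 this
    rw [this, map_zero]
  | succ n ih =>
    intro r h
    obtain ⟨F, rfl⟩ := LL_surj C n r
    rw [LL_faithful C ih F h, map_zero]

/-- Freeness of `R(n+1)` as a left module over `R(n)`. -/
theorem LL_inj (n : ℕ) : Function.Injective (LL C n) := by
  intro F G h
  have h1 : (F - G) + G = F := by ext t; simp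
  have h2 : LL C n (F - G) = 0 := by
    have h3 := (LL C n).map_add (F - G) G
    rw [h1, h] at h3
    simpa using h3
  have h3 : F - G = 0 := by
    refine LL_faithful C (faithful C (K := AlgebraicClosure k) n) (F - G) ?_
    intro σ
    rw [h2]; simp
  rw [← h1, h3, zero_add]

end Free
end KLR


namespace KLR

section Cyc

set_option linter.unusedSectionVars false
set_option linter.unusedSimpArgs false

variable {k : Type} [Field k] {I : Type} [Fintype I] [DecidableEq I] {C : CartanDatum k I}

theorem lin_mem {A B : Type} [Ring A] [Algebra k A] [Ring B] [Algebra k B] (f : A →ₗ[k] B)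
    {s : Set A} {T : Submodule k B} (h : ∀ g ∈ s, f g ∈ T) {z : A}
    (hz : z ∈ Submodule.span k s) : f z ∈ T :=
  (Submodule.span_le (p := T.comap f)).2 h hz

variable (C) in
/-- Elements commuting with the last idempotents. -/
def Zc (n : ℕ) : Subalgebra k (Alg C (n + 1)) := Subalgebra.centralizer k (Set.range (EL C n))

theorem mem_Zc {n : ℕ} {z : Alg C (n + 1)} : z ∈ Zc C n ↔ ∀ i, EL C n i * z = z * EL C n i := by
  rw [Zc, Subalgebra.mem_centralizer_iff]
  exact ⟨fun h i => h _ ⟨i, rfl⟩, by rintro h _ ⟨i, rfl⟩; exact h i⟩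

theorem iota_Zc {n : ℕ} (r : Alg C n) : iota C n r ∈ Zc C n :=
  mem_Zc.2 fun i => (EL_comm r i).eq.symm
theorem XL_Zc {n : ℕ} : XL C n ∈ Zc C n := mem_Zc.2 fun i => (XL_EL_comm i).eq.symm
theorem EL_Zc {n : ℕ} (l : I) : EL C n l ∈ Zc C n := by
  refine mem_Zc.2 fun i => ?_
  rw [EL_mul, EL_mul]
  by_cases h : i = l
  · rw [if_pos h, if_pos h.symm, h]
  · rw [if_neg h, if_neg (Ne.symm h)]
theorem Del_Zc {n : ℕ} : Del C n ∈ Zc C (n + 1) :=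
  Subalgebra.sum_mem _ fun a _ => Subalgebra.mul_mem _ (iota_Zc _) (EL_Zc _)

theorem SA_Zc {n : ℕ} {z : Alg C (n + 1)} (h : z ∈ SA C n) : z ∈ Zc C n := by
  refine (Submodule.span_le (p := (Zc C n).toSubmodule)).2 ?_ h
  rintro _ ⟨r, a, l, rfl⟩
  exact Subalgebra.mul_mem _ (iota_Zc _) (Subalgebra.mul_mem _ (Subalgebra.pow_mem _ XL_Zc _) (EL_Zc _))

theorem Zc_kill {n : ℕ} {z : Alg C (n + 1)} (h : z ∈ Zc C n) {i j : I} (hij : i ≠ j) :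
    EL C n i * (z * EL C n j) = 0 := by
  rw [← mul_assoc, mem_Zc.1 h, mul_assoc, EL_mul, if_neg hij, mul_zero]

variable (C) in
/-- Span of the elements `E_i ι(w) τ ι(v) E_j`. -/
def TS (n : ℕ) (i j : I) (S : Set (Alg C (n + 1) × Alg C (n + 1))) : Submodule k (Alg C (n + 2)) :=
  Submodule.span k {z | ∃ w v, (w, v) ∈ S ∧ z = EL C (n + 1) i * (iota C (n + 1) w * (TL C n *
    (iota C (n + 1) v * EL C (n + 1) j)))}

theorem mem_TS {n : ℕ} {i j : I} {S} {w v : Alg C (n + 1)} (h : (w, v) ∈ S) :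
    EL C (n + 1) i * (iota C (n + 1) w * (TL C n * (iota C (n + 1) v * EL C (n + 1) j)))
      ∈ TS C n i j S := Submodule.subset_span ⟨w, v, h, rfl⟩

/-- Closure of the index set under multiplication -/
def BiSt {n : ℕ} (S : Set (Alg C n × Alg C n)) : Prop :=
  ∀ w v, (w, v) ∈ S → ∀ r r' s s', (r * w * r', s * v * s') ∈ S

section
variable {n : ℕ} {i j : I} (hij : i ≠ j) {S : Set (Alg C (n + 1) × Alg C (n + 1))} (hS : BiSt S)
include hS

theorem TS_iota_left (r : Alg C (n + 1)) : iota C (n + 1) r ∈ LStab (TS C n i j S) := by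
  intro t ht
  refine lin_mem (LinearMap.mulLeft k (iota C (n + 1) r)) ?_ ht
  rintro _ ⟨w, v, h, rfl⟩
  rw [LinearMap.mulLeft_apply, (EL_comm r i).left_comm, ← mul_assoc (iota C (n + 1) r), ← map_mul]
  exact mem_TS (by simpa using hS w v h r 1 1 1)

theorem TS_iota_right (r : Alg C (n + 1)) : ∀ t ∈ TS C n i j S,
    t * iota C (n + 1) r ∈ TS C n i j S := by
  intro t ht
  refine lin_mem (LinearMap.mulRight k (iota C (n + 1) r)) ?_ ht
  rintro _ ⟨w, v, h, rfl⟩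
  simp only [LinearMap.mulRight_apply, mul_assoc]
  rw [← (EL_comm r j).eq, ← mul_assoc (iota C (n + 1) v), ← map_mul]
  exact mem_TS (by simpa using hS w v h 1 1 1 r)

omit hS in
theorem TS_EL_left (l : I) : EL C (n + 1) l ∈ LStab (TS C n i j S) := by
  intro t ht
  refine lin_mem (LinearMap.mulLeft k (EL C (n + 1) l)) ?_ ht
  rintro _ ⟨w, v, h, rfl⟩
  rw [LinearMap.mulLeft_apply, ← mul_assoc, EL_mul]
  split_ifs with h1
  · rw [h1]; exact mem_TS h
  · rw [zero_mul]; exact Submodule.zero_mem _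

omit hS in
theorem TS_EL_right (l : I) : ∀ t ∈ TS C n i j S, t * EL C (n + 1) l ∈ TS C n i j S := by
  intro t ht
  refine lin_mem (LinearMap.mulRight k (EL C (n + 1) l)) ?_ ht
  rintro _ ⟨w, v, h, rfl⟩
  simp only [LinearMap.mulRight_apply, mul_assoc]
  rw [EL_mul]
  split_ifs with h1
  · exact mem_TS h
  · simp

include hij

theorem TS_XL_left : XL C (n + 1) ∈ LStab (TS C n i j S) := by
  intro t ht
  refine lin_mem (LinearMap.mulLeft k (XL C (n + 1))) ?_ ht
  rintro _ ⟨w, v, h, rfl⟩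
  rw [LinearMap.mulLeft_apply, (XL_EL_comm i).left_comm, (XL_comm w).symm.left_comm,
    ← mul_assoc (XL C (n + 1)), TL_iXL, add_mul, mul_add, mul_add]
  refine Submodule.add_mem _ ?_ ?_
  · rw [mul_assoc, ← mul_assoc (iota C (n + 1) (XL C n)), ← map_mul]
    exact mem_TS (by simpa using hS w v h 1 1 (XL C n) 1)
  · have := Zc_kill (Subalgebra.mul_mem _ (iota_Zc w) (Subalgebra.mul_mem _ Del_Zc (iota_Zc v))) hij
    simp only [mul_assoc] at this
    rw [this]; exact Submodule.zero_mem _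

theorem TS_XL_right : ∀ t ∈ TS C n i j S, t * XL C (n + 1) ∈ TS C n i j S := by
  intro t ht
  refine lin_mem (LinearMap.mulRight k (XL C (n + 1))) ?_ ht
  rintro _ ⟨w, v, h, rfl⟩
  simp only [LinearMap.mulRight_apply, mul_assoc]
  rw [← (XL_EL_comm j).eq, (XL_comm v).left_comm, ← mul_assoc (TL C n), TL_XL, add_mul, mul_add,
    mul_add]
  refine Submodule.add_mem _ ?_ ?_
  · rw [mul_assoc, ← mul_assoc (iota C (n + 1) w), ← map_mul]
    exact mem_TS (by simpa using hS w v h 1 (XL C n) 1 1)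
  · have := Zc_kill (Subalgebra.mul_mem _ (iota_Zc w) (Subalgebra.mul_mem _ Del_Zc (iota_Zc v))) hij
    simp only [mul_assoc] at this
    rw [this]; exact Submodule.zero_mem _

theorem TS_SA_left {c : Alg C (n + 2)} (hc : c ∈ SA C (n + 1)) : c ∈ LStab (TS C n i j S) := by
  refine (Submodule.span_le (p := (LStab (TS C n i j S)).toSubmodule)).2 ?_ hc
  rintro _ ⟨r, a, l, rfl⟩
  exact Subalgebra.mul_mem _ (TS_iota_left hS _) (Subalgebra.mul_mem _
    (Subalgebra.pow_mem _ (TS_XL_left hij hS) _) (TS_EL_left _))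

theorem TS_SA_right {c : Alg C (n + 2)} (hc : c ∈ SA C (n + 1)) {t} (ht : t ∈ TS C n i j S) :
    t * c ∈ TS C n i j S := by
  refine lin_mem (LinearMap.mulLeft k t) ?_ hc
  rintro _ ⟨r, a, l, rfl⟩
  rw [LinearMap.mulLeft_apply, ← mul_assoc, ← mul_assoc]
  refine TS_EL_right _ _ ?_
  have h2 := TS_iota_right hS r t ht
  generalize t * iota C (n + 1) r = t' at *
  induction a with
  | zero => simpa using h2
  | succ a ih => rw [pow_succ, ← mul_assoc]; exact TS_XL_right hij hS _ ih

end

theorem TS_top {n : ℕ} {i j : I} (hij : i ≠ j) (z : Alg C (n + 2)) :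
    EL C (n + 1) i * (z * EL C (n + 1) j) ∈ TS C n i j Set.univ := by
  obtain ⟨a, ha, b, hb, rfl⟩ := Submodule.mem_sup.1 (SAB_top n z)
  rw [add_mul, mul_add]
  refine Submodule.add_mem _ ?_ ?_
  · rw [Zc_kill (SA_Zc ha) hij]; exact Submodule.zero_mem _
  · refine lin_mem (LinearMap.mulLeft k (EL C (n + 1) i) ∘ₗ LinearMap.mulRight k (EL C (n + 1) j))
      ?_ hb
    rintro _ ⟨r, r', l, rfl⟩
    simp only [LinearMap.comp_apply, LinearMap.mulRight_apply, LinearMap.mulLeft_apply, mul_assoc]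
    rw [EL_mul]
    split_ifs with h
    · subst h; exact mem_TS trivial
    · simp

variable (C) in
/-- The cyclotomic element. -/
noncomputable def aa (Λ : I → ℕ) (n : ℕ) : Alg C n :=
  if h : 0 < n then ∑ ν : Fin n → I, Xx C (⟨0, h⟩ : Fin n) ^ (Λ (ν ⟨0, h⟩)) * Ee C ν else 0

theorem aa_Ee (Λ : I → ℕ) {n : ℕ} (ν : Fin (n + 1) → I) :
    aa C Λ (n + 1) * Ee C ν = Xx C 0 ^ Λ (ν 0) * Ee C ν := by
  rw [aa, dif_pos (Nat.succ_pos n), Finset.sum_mul, Finset.sum_eq_single ν]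
  · rw [mul_assoc, Ee_mul, if_pos rfl]; rfl
  · intro μ _ h
    rw [mul_assoc, Ee_mul, if_neg h, mul_zero]
  · simp

theorem iota_aa (Λ : I → ℕ) (n : ℕ) : iota C (n + 1) (aa C Λ (n + 1)) = aa C Λ (n + 2) := by
  apply Ee_ext
  intro ν
  rw [aa_Ee, aa, dif_pos (Nat.succ_pos n), map_sum, Finset.sum_mul, Finset.sum_eq_single (Fin.init ν)]
  · rw [map_mul, mul_assoc, iota_Ee_Ee, if_pos rfl, map_pow, iota_Xx]; rfl
  · intro μ _ h
    rw [map_mul, mul_assoc, iota_Ee_Ee, if_neg h, mul_zero]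
  · simp

variable (C) in
/-- The cyclotomic ideal. -/
def Id (Λ : I → ℕ) (n : ℕ) : Submodule k (Alg C n) :=
  Submodule.span k {z | ∃ u v, z = u * (aa C Λ n * v)}

theorem Id_left {Λ : I → ℕ} {n : ℕ} (r : Alg C n) {z} (h : z ∈ Id C Λ n) : r * z ∈ Id C Λ n := by
  refine lin_mem (LinearMap.mulLeft k r) ?_ h
  rintro _ ⟨u, v, rfl⟩
  exact Submodule.subset_span ⟨r * u, v, by simp [mul_assoc]⟩
theorem Id_right {Λ : I → ℕ} {n : ℕ} (r : Alg C n) {z} (h : z ∈ Id C Λ n) : z * r ∈ Id C Λ n := by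
  refine lin_mem (LinearMap.mulRight k r) ?_ h
  rintro _ ⟨u, v, rfl⟩
  exact Submodule.subset_span ⟨u, v * r, by simp [mul_assoc]⟩
theorem aa_Id {Λ : I → ℕ} {n : ℕ} : aa C Λ n ∈ Id C Λ n :=
  Submodule.subset_span ⟨1, 1, by simp⟩

theorem Id_iota {Λ : I → ℕ} {n : ℕ} {z} (h : z ∈ Id C Λ (n + 1)) :
    iota C (n + 1) z ∈ Id C Λ (n + 2) := by
  refine lin_mem (iota C (n + 1)).toLinearMap ?_ h
  rintro _ ⟨u, v, rfl⟩
  rw [AlgHom.toLinearMap_apply, map_mul, map_mul, iota_aa]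
  exact Id_left _ (Id_right _ aa_Id)

variable (C) in
/-- Pairs with a component in the cyclotomic ideal. -/
def SI (Λ : I → ℕ) (n : ℕ) : Set (Alg C n × Alg C n) := {p | p.1 ∈ Id C Λ n ∨ p.2 ∈ Id C Λ n}

theorem SI_st (Λ : I → ℕ) (n : ℕ) : BiSt (SI C Λ n) := by
  rintro w v (h | h) r r' s s'
  · exact Or.inl (Id_right _ (Id_left _ h))
  · exact Or.inr (Id_right _ (Id_left _ h))

theorem TS_aa_left {Λ : I → ℕ} {n : ℕ} {i j : I} {t} (h : t ∈ TS C n i j Set.univ) :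
    iota C (n + 1) (aa C Λ (n + 1)) * t ∈ TS C n i j (SI C Λ (n + 1)) := by
  refine lin_mem (LinearMap.mulLeft k _) ?_ h
  rintro _ ⟨w, v, h, rfl⟩
  rw [LinearMap.mulLeft_apply, (EL_comm _ i).left_comm, ← mul_assoc (iota C (n + 1) _), ← map_mul]
  exact mem_TS (Or.inl (Id_right _ aa_Id))

theorem TS_aa_right {Λ : I → ℕ} {n : ℕ} {i j : I} {t} (h : t ∈ TS C n i j Set.univ) :
    t * iota C (n + 1) (aa C Λ (n + 1)) ∈ TS C n i j (SI C Λ (n + 1)) := by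
  refine lin_mem (LinearMap.mulRight k _) ?_ h
  rintro _ ⟨w, v, h, rfl⟩
  simp only [LinearMap.mulRight_apply, mul_assoc]
  rw [← (EL_comm _ j).eq, ← mul_assoc (iota C (n + 1) v), ← map_mul]
  exact mem_TS (Or.inr (Id_left _ aa_Id))

theorem EτyτE {n : ℕ} (i j : I) (y : Alg C (n + 1)) :
    EL C (n + 1) i * (TL C n * (iota C (n + 1) y * (TL C n * EL C (n + 1) j))) =
    TL C n * (iota C (n + 1) (EL C n i * (y * EL C n j)) * TL C n) := by
  rw [← mul_assoc, EL_TL, TL_EL]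
  simp only [map_mul, mul_assoc]

theorem cyc_step {Λ : I → ℕ} {n : ℕ} {i j : I} (hij : i ≠ j)
    (H : ∀ y ∈ Id C Λ (n + 1), EL C (n + 1) i * (TL C n * (iota C (n + 1) y *
      (TL C n * EL C (n + 1) j))) ∈ TS C n i j (SI C Λ (n + 1)))
    {z : Alg C (n + 2)} (hz : z ∈ Id C Λ (n + 2)) :
    EL C (n + 1) i * (z * EL C (n + 1) j) ∈ TS C n i j (SI C Λ (n + 1)) := by
  refine lin_mem (LinearMap.mulLeft k (EL C (n + 1) i) ∘ₗ LinearMap.mulRight k (EL C (n + 1) j))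
      ?_ hz
  rintro _ ⟨u, u', rfl⟩
  simp only [LinearMap.comp_apply, LinearMap.mulRight_apply, LinearMap.mulLeft_apply]
  rw [← iota_aa]
  obtain ⟨a, ha, b, hb, rfl⟩ := Submodule.mem_sup.1 (SAB_top n u)
  rw [add_mul, add_mul, mul_add]
  refine Submodule.add_mem _ ?_ ?_
  · simp only [mul_assoc]
    rw [← mul_assoc, mem_Zc.1 (SA_Zc ha), mul_assoc, (EL_comm _ i).symm.left_comm]
    exact TS_SA_left hij (SI_st _ _) ha _ (TS_aa_left (TS_top hij _))
  obtain ⟨c, hc, d, hd, rfl⟩ := Submodule.mem_sup.1 (SAB_top n u')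
  rw [mul_add, mul_add, add_mul, mul_add]
  refine Submodule.add_mem _ ?_ ?_
  · have := TS_SA_right hij (SI_st _ _) hc (TS_aa_right (Λ := Λ) (TS_top hij b))
    simp only [mul_assoc] at this ⊢
    rwa [← mem_Zc.1 (SA_Zc hc), (EL_comm _ j).left_comm]
  · refine lin_mem (LinearMap.mulLeft k (EL C (n + 1) i) ∘ₗ LinearMap.mulRight k
      (EL C (n + 1) j) ∘ₗ LinearMap.mulRight k (iota C (n + 1) (aa C Λ (n + 1)) * d)) ?_ hb
    rintro _ ⟨r, r', l, rfl⟩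
    simp only [LinearMap.comp_apply, LinearMap.mulRight_apply, LinearMap.mulLeft_apply]
    refine lin_mem (LinearMap.mulLeft k (EL C (n + 1) i) ∘ₗ LinearMap.mulRight k
      (EL C (n + 1) j) ∘ₗ LinearMap.mulLeft k (iota C (n + 1) r * (TL C n * (iota C (n + 1) r' *
      EL C (n + 1) l))) ∘ₗ LinearMap.mulLeft k (iota C (n + 1) (aa C Λ (n + 1)))) ?_ hd
    rintro _ ⟨s, s', m, rfl⟩
    simp only [LinearMap.comp_apply, LinearMap.mulRight_apply, LinearMap.mulLeft_apply]
    have h1 := H (r' * (aa C Λ (n + 1) * s)) (Id_left _ (Id_right _ aa_Id))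
    have h2 := TS_EL_right m _ (TS_iota_right (SI_st _ _) (EL C n l * s') _ 
      (TS_iota_left (SI_st _ _) r _ h1))
    convert h2 using 1
    simp only [map_mul, mul_assoc]
    rw [(EL_comm r i).left_comm, (EL_comm _ l).symm.left_comm, (EL_comm _ l).symm.left_comm,
      ← mul_assoc (EL C (n + 1) l) (TL C n), EL_TL, (EL_comm _ j).symm.left_comm, 
      (EL_comm _ j).symm.left_comm, mem_Zc.1 (EL_Zc m) j]
    simp only [mul_assoc]

theorem cyc_main (Λ : I → ℕ) {i j : I} (hij : i ≠ j) : ∀ (n : ℕ) {z : Alg C (n + 2)},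
    z ∈ Id C Λ (n + 2) →
    EL C (n + 1) i * (z * EL C (n + 1) j) ∈ TS C n i j (SI C Λ (n + 1)) := by
  intro n
  induction n with
  | zero =>
    intro z hz
    refine cyc_step hij ?_ hz
    intro y _
    rw [EτyτE, Zc_kill (SA_Zc (SA_top1 y)) hij]
    simp
  | succ n ih =>
    intro z hz
    refine cyc_step hij ?_ hz
    intro y hy
    rw [EτyτE]
    refine TLTL_mem ?_ _ (ih hy)
    rintro _ ⟨w, v, h, rfl⟩
    have e : TL C (n + 1) * (iota C (n + 2) (EL C (n + 1) i * (iota C (n + 1) w * (TL C n *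
      (iota C (n + 1) v * EL C (n + 1) j)))) * TL C (n + 1)) = 
      EL C (n + 2) i * ((iota C (n + 2) (iota C (n + 1) w) * 
      ((TL C (n + 1) * iota C (n + 2) (TL C n) * TL C (n + 1)) * 
      iota C (n + 2) (iota C (n + 1) v))) * EL C (n + 2) j) := by
      simp only [map_mul, mul_assoc]
      rw [← mul_assoc (TL C (n + 1)) (iota C (n + 2) (EL C (n + 1) i)), ← EL_TL, ← TL_EL,
        mul_assoc, (TL_comm v).left_comm, (TL_comm w).left_comm]
    rw [e, sub_eq_iff_eq_add.1 (TL_braid (C := C) (n := n)), add_mul, mul_add, add_mul, mul_add]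
    refine Submodule.add_mem _ ?_ ?_
    · rw [Zc_kill _ hij]
      · exact Submodule.zero_mem _
      · refine Subalgebra.mul_mem _ (iota_Zc _) (Subalgebra.mul_mem _ (Subalgebra.sum_mem _ 
          fun a _ => Subalgebra.sum_mem _ fun b _ => ?_) (iota_Zc _))
        exact Subalgebra.mul_mem _ (Qdiff_mem _ _ _ (iota_Zc _) (iota_Zc _) XL_Zc)
          (Subalgebra.mul_mem _ (iota_Zc _) (Subalgebra.mul_mem _ (iota_Zc _) (EL_Zc _)))
    · have : (iota C (n + 1) w * TL C n, TL C n * iota C (n + 1) v) ∈ SI C Λ (n + 2) := by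
        rcases h with h | h
        · exact Or.inl (Id_right _ (Id_iota h))
        · exact Or.inr (Id_left _ (Id_iota h))
      have := mem_TS (i := i) (j := j) this
      simpa only [map_mul, mul_assoc] using this

end Cyc
end KLR


namespace KLR

section Quot

set_option linter.unusedSectionVars false
set_option linter.unusedSimpArgs false

variable {k : Type} [Field k] {I : Type} [Fintype I] [DecidableEq I] {C : CartanDatum k I}

theorem addA_comm (β : I → ℕ) (i j : I) : addA (addA β i) j = addA (addA β j) i := by
  funext l; simp only [addA]; omega

theorem addA_inj {β γ : I → ℕ} {i : I} (h : addA β i = addA γ i) : β = γ := by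
  funext l
  have := congrFun h l
  simp only [addA] at this
  omega

theorem content_snoc {n : ℕ} (ν : Fin n → I) (i : I) :
    content (Fin.snoc ν i : Fin (n + 1) → I) = addA (content ν) i := by
  funext l
  simp only [content, addA, Finset.card_filter]
  rw [Fin.sum_univ_castSucc]
  simp only [Fin.snoc_castSucc, Fin.snoc_last]
  by_cases h : i = l
  · simp [h]
  · simp [h, Ne.symm h]

theorem content_comp {n : ℕ} (ν : Fin n → I) (σ : Equiv.Perm (Fin n)) :
    content (ν ∘ σ) = content ν := by
  funext l
  simp only [content, Finset.card_filter]
  exact Equiv.sum_comp σ (fun a => if ν a = l then 1 else 0)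

theorem eIdem_Ee {n : ℕ} (β : I → ℕ) (ν : Fin n → I) :
    eIdem C n β * Ee C ν = if content ν = β then Ee C ν else 0 := by
  rw [eIdem, Finset.sum_mul]
  simp only [Ee_mul]
  rw [Finset.sum_ite_eq' (seqs β n) ν]
  simp [seqs]

theorem Ee_eIdem {n : ℕ} (β : I → ℕ) (ν : Fin n → I) :
    Ee C ν * eIdem C n β = if content ν = β then Ee C ν else 0 := by
  rw [eIdem, Finset.mul_sum]
  simp only [Ee_mul]
  rw [Finset.sum_ite_eq (seqs β n) ν]
  simp [seqs]

theorem eIdem_comm {n : ℕ} (β : I → ℕ) (r : Alg C n) : Commute r (eIdem C n β) := by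
  induction r using Alg_induct with
  | hs c => exact Algebra.commutes c _
  | he ν => exact (Ee_eIdem β ν).trans (eIdem_Ee β ν).symm
  | hx a =>
    exact Commute.sum_right _ _ _ fun ν _ => Xx_Ee a ν
  | ht l h =>
    refine Ee_ext fun ν => ?_
    rw [mul_assoc, eIdem_Ee, mul_assoc, Tt_Ee, ← mul_assoc, eIdem_Ee, content_comp]
    by_cases hc : content ν = β
    · rw [if_pos hc, if_pos hc, Tt_Ee]
    · rw [if_neg hc, if_neg hc, mul_zero, zero_mul]
  | hadd a b ha hb => exact ha.add_left hb
  | hmul a b ha hb => exact ha.mul_left hb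

theorem eIdem_mul_self {n : ℕ} (β : I → ℕ) : eIdem C n β * eIdem C n β = eIdem C n β := by
  refine Ee_ext fun ν => ?_
  rw [mul_assoc, eIdem_Ee]
  by_cases hc : content ν = β
  · rw [if_pos hc, eIdem_Ee, if_pos hc]
  · rw [if_neg hc, mul_zero]

theorem eR_eq {n : ℕ} (β : I → ℕ) (i : I) : eR C n β i = EL C n i * eIdem C (n + 1) (addA β i) := by
  refine Ee_ext fun ν => ?_
  rw [mul_assoc, eIdem_Ee, eR, Finset.sum_mul]
  simp only [Ee_mul]
  rw [Finset.sum_ite_eq' _ ν]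
  by_cases hc : content ν = addA β i
  · rw [if_pos hc, EL_Ee]
    by_cases h : ν (Fin.last n) = i <;> simp [seqs, hc, h]
  · simp [seqs, hc]

theorem iota_eIdem {n : ℕ} (β : I → ℕ) (i : I) :
    iota C n (eIdem C n β) * EL C n i = EL C n i * eIdem C (n + 1) (addA β i) := by
  refine Ee_ext fun ν => ?_
  rw [mul_assoc, mul_assoc, eIdem_Ee, EL_Ee]
  by_cases h : ν (Fin.last n) = i
  · rw [if_pos h, eIdem, map_sum, Finset.sum_mul]
    simp only [iota_Ee_Ee]
    rw [Finset.sum_ite_eq' _ (Fin.init ν)]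
    have hc : content ν = addA (content (Fin.init ν)) i := by
      conv_lhs => rw [← Fin.snoc_init_self ν, content_snoc, h]
    rw [hc]
    by_cases h2 : content (Fin.init ν) = β
    · rw [h2, if_pos rfl, if_pos (by simp [seqs, h2]), EL_Ee, if_pos h]
    · rw [if_neg (by simp [seqs, h2]), if_neg (fun h3 => h2 (addA_inj h3)), mul_zero]
  · rw [if_neg h, mul_zero]
    by_cases hc : content ν = addA β i
    · rw [if_pos hc, EL_Ee, if_neg h]
    · rw [if_neg hc, mul_zero]

theorem toCB_mk (Λ : I → ℕ) {n : ℕ} {β : I → ℕ} (x : FA k I n) :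
    toCB C Λ (β := β) (RingQuot.mkAlgHom k (Rel C n) x) = RingQuot.mkAlgHom k (CRel C Λ n β) x := by
  simp [toCB, toB, toC]

theorem toCB_surj (Λ : I → ℕ) {n : ℕ} {β : I → ℕ} :
    Function.Surjective (toCB C Λ (n := n) (β := β)) := by
  intro y
  obtain ⟨x, rfl⟩ := RingQuot.mkAlgHom_surjective k (CRel C Λ n β) y
  exact ⟨_, toCB_mk Λ x⟩

theorem toCB_eIdem (Λ : I → ℕ) {n : ℕ} {β : I → ℕ} : toCB C Λ (β := β) (eIdem C n β) = 1 := by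
  have h : eIdem C n β = RingQuot.mkAlgHom k (Rel C n) (∑ ν ∈ seqs β n, ge k ν) := by
    rw [map_sum]; rfl
  rw [h, toCB_mk, RingQuot.mkAlgHom_rel k CRel.unit, map_one]

theorem aa_eIdem (Λ : I → ℕ) {n : ℕ} {β : I → ℕ} :
    RingQuot.mkAlgHom k (Rel C n) (aLamF Λ n β) = aa C Λ n * eIdem C n β := by
  cases n with
  | zero => simp [aLamF, aa]
  | succ n =>
    rw [aLamF, dif_pos (Nat.succ_pos n), map_sum, eIdem, Finset.mul_sum]
    refine Finset.sum_congr rfl fun ν _ => ?_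
    rw [aa_Ee, map_mul, map_pow]; rfl

theorem toCB_aa (Λ : I → ℕ) {n : ℕ} {β : I → ℕ} : toCB C Λ (β := β) (aa C Λ n) = 0 := by
  have : toCB C Λ (β := β) (aa C Λ n * eIdem C n β) = 0 := by
    rw [← aa_eIdem, toCB_mk, RingQuot.mkAlgHom_rel k CRel.cyc, map_zero]
  rwa [map_mul, toCB_eIdem, mul_one] at this

theorem toCB_Id {Λ : I → ℕ} {n : ℕ} {β : I → ℕ} {z} (h : z ∈ Id C Λ n) :
    toCB C Λ (β := β) z = 0 := by
  have := lin_mem (T := ⊥) (toCB C Λ (β := β)).toLinearMap (s := {z | ∃ u v, z = u * (aa C Λ n * v)})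
    (by rintro _ ⟨u, v, rfl⟩; simp [toCB_aa]) h
  simpa using this

/-- The two-sided ideal defining the cyclotomic quotient. -/
def Jd (C : CartanDatum k I) (Λ : I → ℕ) (n : ℕ) (β : I → ℕ) : Ideal (Alg C n) where
  carrier := {z | z * eIdem C n β ∈ Id C Λ n}
  add_mem' {a b} ha hb := by
    rw [Set.mem_ofPred_eq] at ha hb ⊢
    rw [add_mul]; exact Submodule.add_mem _ ha hb
  zero_mem' := by
    rw [Set.mem_ofPred_eq, zero_mul]; exact Submodule.zero_mem _
  smul_mem' c x hx := by
    rw [Set.mem_ofPred_eq] at hx ⊢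
    rw [smul_eq_mul, mul_assoc]; exact Id_left _ hx

theorem mem_Jd {Λ : I → ℕ} {n : ℕ} {β : I → ℕ} {z : Alg C n} :
    z ∈ Jd C Λ n β ↔ z * eIdem C n β ∈ Id C Λ n := Iff.rfl

instance Jd_two (Λ : I → ℕ) (n : ℕ) (β : I → ℕ) : (Jd C Λ n β).IsTwoSided where
  mul_mem_of_left b h := by
    rw [mem_Jd] at h ⊢
    rw [mul_assoc, (eIdem_comm β b).eq, ← mul_assoc]
    exact Id_right _ h

theorem toCB_ker {Λ : I → ℕ} {n : ℕ} {β : I → ℕ} {z : Alg C n} (h : toCB C Λ (β := β) z = 0) :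
    z * eIdem C n β ∈ Id C Λ n := by
  let q : FA k I n →ₐ[k] (Alg C n ⧸ Jd C Λ n β) :=
    (Ideal.Quotient.mkₐ k (Jd C Λ n β)).comp (RingQuot.mkAlgHom k (Rel C n))
  have hq : ∀ x y, CRel C Λ n β x y → q x = q y := by
    intro x y hxy
    cases hxy with
    | base hb =>
      exact congrArg (Ideal.Quotient.mkₐ k (Jd C Λ n β)) (RingQuot.mkAlgHom_rel k hb)
    | unit =>
      change Ideal.Quotient.mk (Jd C Λ n β) _ = Ideal.Quotient.mk (Jd C Λ n β) _
      rw [Ideal.Quotient.eq, mem_Jd]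
      have h : RingQuot.mkAlgHom k (Rel C n) (∑ ν ∈ seqs β n, ge k ν) = eIdem C n β := by
        rw [map_sum]; rfl
      change (RingQuot.mkAlgHom k (Rel C n) _ - RingQuot.mkAlgHom k (Rel C n) _) * _ ∈ _
      rw [h, map_one, sub_mul, eIdem_mul_self, one_mul, sub_self]
      exact Submodule.zero_mem _
    | cyc =>
      change Ideal.Quotient.mk (Jd C Λ n β) _ = Ideal.Quotient.mk (Jd C Λ n β) _
      rw [Ideal.Quotient.eq, mem_Jd]
      change (RingQuot.mkAlgHom k (Rel C n) _ - RingQuot.mkAlgHom k (Rel C n) _) * _ ∈ _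
      rw [aa_eIdem, map_zero, sub_zero]
      exact Id_right _ (Id_right _ aa_Id)
  let Q : cAlg C Λ n β →ₐ[k] (Alg C n ⧸ Jd C Λ n β) := RingQuot.liftAlgHom k ⟨q, fun x y h => hq x y h⟩
  obtain ⟨x, rfl⟩ := RingQuot.mkAlgHom_surjective k (Rel C n) z
  rw [toCB_mk] at h
  have h2 : Q (RingQuot.mkAlgHom k (CRel C Λ n β) x) = q x := RingQuot.liftAlgHom_mkAlgHom_apply k q hq x
  rw [h, map_zero] at h2
  exact mem_Jd.1 (Ideal.Quotient.eq_zero_iff_mem.1 h2.symm)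

theorem toCB_eR (Λ : I → ℕ) {n : ℕ} {β γ : I → ℕ} {i : I} (h : γ = addA β i) :
    toCB C Λ (β := γ) (eR C n β i) = toCB C Λ (β := γ) (EL C n i) := by
  subst h
  rw [eR_eq, map_mul, toCB_eIdem, mul_one]

theorem up_eq {Λ : I → ℕ} {n : ℕ} {β γ : I → ℕ} {i : I} (h : γ = addA β i)
    {φ : cAlg C Λ n β →ₙₐ[k] cAlg C Λ (n + 1) γ} (hφ : IsUpRc C Λ i φ) (w : Alg C n) :
    φ (toCB C Λ w) = toCB C Λ (iota C n w * EL C n i) := by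
  have h1 : φ 1 = toCB C Λ (EL C n i) := by
    rw [← map_one (toCB C Λ (n := n) (β := β)), ← Ee_sum, map_sum, map_sum, EL, map_sum]
    exact Finset.sum_congr rfl fun ν _ => hφ.1 ν
  induction w using Alg_induct with
  | hs c =>
    rw [Algebra.algebraMap_eq_smul_one, map_smul, map_smul, map_one, map_smul, h1, map_one,
      smul_mul_assoc, one_mul, map_smul]
  | he ν =>
    rw [hφ.1, Ee_eq (Fin.snoc ν i)]
    simp [Fin.init_snoc]
  | hx a => rw [hφ.2.1, map_mul, toCB_eR Λ h, ← map_mul, iota_Xx]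
  | ht l hl => rw [hφ.2.2, map_mul, toCB_eR Λ h, ← map_mul, iota_Tt]
  | hadd a b ha hb => simp only [map_add, add_mul, ha, hb]
  | hmul a b ha hb =>
    rw [map_mul, map_mul, ha, hb, ← map_mul, map_mul (iota C n)]
    congr 1
    rw [mul_assoc, mul_assoc, ← (EL_comm b i).left_comm, EL_mul, if_pos rfl]

theorem up_one {Λ : I → ℕ} {n : ℕ} {β γ : I → ℕ} {i : I} (h : γ = addA β i)
    {φ : cAlg C Λ n β →ₙₐ[k] cAlg C Λ (n + 1) γ} (hφ : IsUpRc C Λ i φ) :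
    φ 1 = toCB C Λ (EL C n i) := by
  have := up_eq h hφ 1
  rwa [map_one (toCB C Λ), map_one (iota C n), one_mul] at this

end Quot
end KLR


namespace KLR

section Ker

open scoped TensorProduct

set_option linter.unusedSectionVars false
set_option linter.unusedSimpArgs false

variable {k : Type} [Field k] {I : Type} [Fintype I] [DecidableEq I] {C : CartanDatum k I}

section Abs
variable {S V W U : Type} [Ring S] [Algebra k S] [Ring V] [Algebra k V] [Ring W] [Algebra k W]
  [Ring U] [Algebra k U]

/-- The map `w ⊗ v ↦ ψ(w) t φ(v)`. -/
noncomputable def fmap (ψ : W →ₙₐ[k] U) (φ : V →ₙₐ[k] U) (t : U) : W ⊗[k] V →ₗ[k] U :=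
  LinearMap.mul' k U ∘ₗ TensorProduct.map (LinearMap.mulRight k t ∘ₗ (ψ : W →ₗ[k] U)) (φ : V →ₗ[k] U)

theorem fmap_tmul (ψ : W →ₙₐ[k] U) (φ : V →ₙₐ[k] U) (t : U) (w : W) (v : V) :
    fmap ψ φ t (w ⊗ₜ v) = ψ w * t * φ v := rfl

/-- The balancing relations. -/
def Krel (φi : S →ₙₐ[k] V) (φj : S →ₙₐ[k] W) : Submodule k (W ⊗[k] V) :=
  Submodule.span k ({z | ∃ w s v, z = (w * φj s) ⊗ₜ[k] v - w ⊗ₜ[k] (φi s * v)} ∪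
    {z | ∃ w v, z = w ⊗ₜ[k] v - w ⊗ₜ[k] (φi 1 * v)})

theorem Krel_one {φi : S →ₙₐ[k] V} {φj : S →ₙₐ[k] W} (w : W) (v : V) :
    w ⊗ₜ[k] v - w ⊗ₜ[k] (φi 1 * v) ∈ Krel φi φj := Submodule.subset_span (Or.inr ⟨w, v, rfl⟩)
theorem Krel_bal {φi : S →ₙₐ[k] V} {φj : S →ₙₐ[k] W} (w : W) (s : S) (v : V) :
    (w * φj s) ⊗ₜ[k] v - w ⊗ₜ[k] (φi s * v) ∈ Krel φi φj :=
  Submodule.subset_span (Or.inl ⟨w, s, v, rfl⟩)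
theorem Krel_one' {φi : S →ₙₐ[k] V} {φj : S →ₙₐ[k] W} (w : W) (v : V) :
    w ⊗ₜ[k] v - (w * φj 1) ⊗ₜ[k] v ∈ Krel φi φj := by
  have := Submodule.sub_mem _ (Krel_one (φi := φi) (φj := φj) w v) (Krel_bal w 1 v)
  simpa using this

/-- Free-level relations. -/
def KK {A₀ A : Type} [Ring A₀] [Algebra k A₀] [Ring A] [Algebra k A] (f : A₀ →ₐ[k] A) (E : A) :
    Submodule k (A ⊗[k] A) :=
  Submodule.span k ({z | ∃ w s v, z = (w * f s) ⊗ₜ[k] v - w ⊗ₜ[k] (f s * v)} ∪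
    {z | ∃ w v, z = w ⊗ₜ[k] v - w ⊗ₜ[k] (E * v)})

theorem KK_a {A₀ A : Type} [Ring A₀] [Algebra k A₀] [Ring A] [Algebra k A] {f : A₀ →ₐ[k] A} {E : A}
    {P : Submodule k (A ⊗[k] A)} (hP : KK f E ≤ P) {w : A} {s : A₀} {v : A}
    (h : (w * f s) ⊗ₜ[k] v ∈ P) : w ⊗ₜ[k] (f s * v) ∈ P := by
  have h4 : (w * f s) ⊗ₜ[k] v - w ⊗ₜ[k] (f s * v) ∈ P :=
    hP (Submodule.subset_span (Or.inl ⟨_, _, _, rfl⟩))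
  exact (Submodule.sub_mem_iff_right _ h).1 h4

theorem KK_b {A₀ A : Type} [Ring A₀] [Algebra k A₀] [Ring A] [Algebra k A] {f : A₀ →ₐ[k] A} {E : A}
    {w v : A} (h : E * v = 0) : w ⊗ₜ[k] v ∈ KK f E := by
  have h3 : w ⊗ₜ[k] v - w ⊗ₜ[k] (E * v) ∈ KK f E := Submodule.subset_span (Or.inr ⟨_, _, rfl⟩)
  rwa [h, TensorProduct.tmul_zero, sub_zero] at h3

theorem KK_le {A₀ A : Type} [Ring A₀] [Algebra k A₀] [Ring A] [Algebra k A] {f : A₀ →ₐ[k] A} {E : A}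
    {B : Type} [AddCommGroup B] [Module k B] (g : A ⊗[k] A →ₗ[k] B) (P : Submodule k B)
    (h1 : ∀ w s v, g ((w * f s) ⊗ₜ[k] v) - g (w ⊗ₜ[k] (f s * v)) ∈ P)
    (h2 : ∀ w v, g (w ⊗ₜ[k] v) - g (w ⊗ₜ[k] (E * v)) ∈ P) {z} (hz : z ∈ KK f E) : g z ∈ P := by
  have : KK f E ≤ P.comap g := by
    refine Submodule.span_le.2 ?_
    rintro _ (⟨w, s, v, rfl⟩ | ⟨w, v, rfl⟩)
    · rw [SetLike.mem_coe, Submodule.mem_comap, map_sub]; exact h1 w s v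
    · rw [SetLike.mem_coe, Submodule.mem_comap, map_sub]; exact h2 w v
  exact this hz

end Abs

variable (C) in
/-- The free level map. -/
noncomputable def ft (n : ℕ) (i j : I) : Alg C (n + 1) ⊗[k] Alg C (n + 1) →ₗ[k] Alg C (n + 2) :=
  LinearMap.mul' k (Alg C (n + 2)) ∘ₗ TensorProduct.map
    (LinearMap.mulRight k (TL C n) ∘ₗ LinearMap.mulLeft k (EL C (n + 1) i) ∘ₗ
      (iota C (n + 1)).toLinearMap)
    (LinearMap.mulRight k (EL C (n + 1) j) ∘ₗ (iota C (n + 1)).toLinearMap)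

theorem ft_tmul {n : ℕ} {i j : I} (w v : Alg C (n + 1)) : ft C n i j (w ⊗ₜ v) =
    EL C (n + 1) i * (iota C (n + 1) w * (TL C n * (iota C (n + 1) v * EL C (n + 1) j))) := by
  have : ft C n i j (w ⊗ₜ v) = (EL C (n + 1) i * iota C (n + 1) w * TL C n) *
    (iota C (n + 1) v * EL C (n + 1) j) := rfl
  rw [this]
  simp only [mul_assoc]

theorem TL_EE {n : ℕ} {i j : I} (hij : i ≠ j) (a : ℕ) :
    TL C n * (iota C (n + 1) (XL C n) ^ a * (iota C (n + 1) (EL C n i) * EL C (n + 1) j)) =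
    XL C (n + 1) ^ a * (TL C n * (iota C (n + 1) (EL C n i) * EL C (n + 1) j)) := by
  induction a with
  | zero => simp
  | succ a ih =>
    have hD : Del C n * (iota C (n + 1) (XL C n) ^ a * (iota C (n + 1) (EL C n i) * EL C (n + 1) j)) = 0 := by
      have h0 : Del C n * (iota C (n + 1) (EL C n i) * EL C (n + 1) j) = 0 := by
        refine Ee_ext fun ν => ?_
        rw [mul_assoc, mul_assoc, EL_Ee, zero_mul]
        by_cases h : ν (Fin.last (n + 1)) = j
        · rw [if_pos h, iota_EL_Ee]
          by_cases h2 : ν (Fin.last n).castSucc = i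
          · rw [if_pos h2, Del_Ee, if_neg]
            rw [h, h2]; exact hij
          · rw [if_neg h2, mul_zero]
        · rw [if_neg h, mul_zero, mul_zero]
      have h1 : Commute (iota C (n + 1) (XL C n) ^ a)
          (iota C (n + 1) (EL C n i) * EL C (n + 1) j) := by
        refine Commute.pow_left (Commute.mul_right ?_ (EL_comm _ j)) a
        exact (XL_EL_comm i).map (iota C (n + 1))
      rw [h1.eq, ← mul_assoc, h0, zero_mul]
    rw [pow_succ', mul_assoc, ← mul_assoc (TL C n), eq_sub_of_add_eq (TL_iXL (C := C) (n := n)).symm,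
      sub_mul, hD, sub_zero, mul_assoc, ih, pow_succ', mul_assoc]

theorem ft_basis {n : ℕ} {i j : I} (hij : i ≠ j) (w : Alg C (n + 1)) (a b : ℕ) (hb : b ≤ n) :
    ft C n i j (w ⊗ₜ (XL C n ^ a * (EL C n i * tt C n b))) =
    iota C (n + 1) (w * EL C n j) * (XL C (n + 1) ^ a * (EL C (n + 1) i * tt C (n + 1) b)) := by
  rw [ft_tmul, tt_succ hb]
  have e1 : TL C n * (iota C (n + 1) (XL C n ^ a * (EL C n i * tt C n b)) * EL C (n + 1) j) =
      XL C (n + 1) ^ a * (TL C n * (iota C (n + 1) (EL C n i) * EL C (n + 1) j)) *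
        iota C (n + 1) (tt C n b) := by
    rw [← TL_EE hij]
    simp only [map_mul, map_pow, mul_assoc]
    rw [(EL_comm (tt C n b) j).eq]
  have e2 : TL C n * (iota C (n + 1) (EL C n i) * EL C (n + 1) j) =
      iota C (n + 1) (EL C n j) * (EL C (n + 1) i * TL C n) := by
    rw [(EL_comm _ j).eq, ← mul_assoc, TL_EL, EL_TL, mul_assoc]
  rw [e1, e2]
  have e3 : EL C (n + 1) i * EL C (n + 1) i = EL C (n + 1) i := by rw [EL_mul, if_pos rfl]
  have c1 : Commute (EL C (n + 1) i) (XL C (n + 1) ^ a) := (XL_EL_comm i).symm.pow_right a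
  have c2 : Commute (iota C (n + 1) (EL C n j)) (XL C (n + 1) ^ a) := (XL_comm _).pow_right a
  simp only [map_mul, mul_assoc]
  rw [← (EL_comm w i).left_comm, c1.left_comm, ← (EL_comm (EL C n j) i).left_comm,
    ← mul_assoc (EL C (n + 1) i) (EL C (n + 1) i), e3, ← c2.left_comm]

/-- Normal forms modulo the balancing relations. -/
noncomputable def gg (C : CartanDatum k I) (n : ℕ) (i : I) : ((Fin (n + 1) × ℕ) →₀ Alg C (n + 1)) →ₗ[k]
    (Alg C (n + 1) ⊗[k] Alg C (n + 1)) :=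
  Finsupp.lsum k fun t => (TensorProduct.mk k (Alg C (n + 1)) (Alg C (n + 1))).flip
    (XL C n ^ t.2 * (EL C n i * tt C n t.1))

theorem gg_single (n : ℕ) (i : I) (b : Fin (n + 1)) (a : ℕ) (w : Alg C (n + 1)) :
    gg C n i (Finsupp.single (b, a) w) = w ⊗ₜ (XL C n ^ a * (EL C n i * tt C n b)) := by
  rw [gg, Finsupp.lsum_single]; rfl

variable (C) in
/-- Free-level relations. -/
noncomputable def Kf (n : ℕ) (i : I) : Submodule k (Alg C (n + 1) ⊗[k] Alg C (n + 1)) := KK (iota C n) (EL C n i)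

theorem ft_Kf {n : ℕ} {i j : I} {z} (hz : z ∈ Kf C n i) : ft C n i j z = 0 := by
  refine (Submodule.mem_bot k).1 (KK_le (ft C n i j) ⊥ ?_ ?_ hz)
  · intro w s v
    rw [Submodule.mem_bot, ft_tmul, ft_tmul, sub_eq_zero]
    simp only [map_mul, mul_assoc]
    rw [(TL_comm s).left_comm]
  · intro w v
    rw [Submodule.mem_bot, ft_tmul, ft_tmul, sub_eq_zero]
    simp only [map_mul, mul_assoc]
    rw [← mul_assoc (TL C n) (iota C (n + 1) (EL C n i)), ← EL_TL, mul_assoc,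
      (EL_comm w i).left_comm, ← mul_assoc (EL C (n + 1) i) (EL C (n + 1) i), EL_mul, if_pos rfl,
      ← (EL_comm w i).left_comm]

theorem Kf_normal (n : ℕ) (i : I) (z : Alg C (n + 1) ⊗[k] Alg C (n + 1)) :
    ∃ m, ∃ a ∈ Kf C n i, a + gg C n i m = z := by
  have key : Kf C n i ⊔ LinearMap.range (gg C n i) = ⊤ := by
    rw [eq_top_iff]
    intro z _
    induction z using TensorProduct.induction_on with
    | zero => exact Submodule.zero_mem _
    | add x y hx hy => exact Submodule.add_mem _ (hx trivial) (hy trivial)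
    | tmul w v =>
      have h1 : SL C n ≤ (Kf C n i ⊔ LinearMap.range (gg C n i)).comap
          (TensorProduct.mk k (Alg C (n + 1)) (Alg C (n + 1)) w) := by
        refine Submodule.span_le.2 ?_
        rintro _ ⟨r, a, l, b, hb, rfl⟩
        rw [SetLike.mem_coe, Submodule.mem_comap, TensorProduct.mk_apply]
        have h2 : (w * iota C n r) ⊗ₜ[k] (XL C n ^ a * (EL C n l * tt C n b)) ∈
            Kf C n i ⊔ LinearMap.range (gg C n i) := by
          by_cases hl : l = i
          · subst hl
            refine Submodule.mem_sup_right ⟨Finsupp.single (⟨b, by omega⟩, a) (w * iota C n r), ?_⟩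
            rw [gg_single]
          · refine Submodule.mem_sup_left ?_
            refine KK_b ?_
            have c1 : Commute (EL C n i) (XL C n ^ a) := (XL_EL_comm i).symm.pow_right a
            rw [c1.left_comm, ← mul_assoc (EL C n i), EL_mul, if_neg (Ne.symm hl), zero_mul,
              mul_zero]
        exact KK_a le_sup_left h2
      exact h1 (SL_top n v)
  have hz : z ∈ Kf C n i ⊔ LinearMap.range (gg C n i) := key ▸ trivial
  obtain ⟨a, ha, _, ⟨m, rfl⟩, h⟩ := Submodule.mem_sup.1 hz
  exact ⟨m, a, ha, h⟩

theorem ft_gg {n : ℕ} {i j : I} (hij : i ≠ j) (m : (Fin (n + 1) × ℕ) →₀ Alg C (n + 1)) :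
    ft C n i j (gg C n i m) = LL C (n + 1) (m.sum fun t w =>
      Finsupp.single (t.1.castSucc, i, t.2) (w * EL C n j)) := by
  rw [Finsupp.sum, map_sum]
  conv_lhs => rw [← Finsupp.sum_single m, Finsupp.sum, map_sum, map_sum]
  refine Finset.sum_congr rfl fun t _ => ?_
  obtain ⟨b, a⟩ := t
  rw [gg_single, LL_single, ft_basis hij _ _ _ (by omega)]; rfl

theorem gg_zero {n : ℕ} {i j : I} (hij : i ≠ j) (m : (Fin (n + 1) × ℕ) →₀ Alg C (n + 1))
    (h : ft C n i j (gg C n i m) = 0) (t) : m t * EL C n j = 0 := by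
  rw [ft_gg hij] at h
  have h1 := LL_inj C (n + 1) (h.trans (LL C (n + 1)).map_zero.symm)
  have h2 := DFunLike.congr_fun h1 (t.1.castSucc, i, t.2)
  rw [Finsupp.sum_apply, Finsupp.sum, Finsupp.zero_apply] at h2
  rw [Finset.sum_eq_single t] at h2
  · simpa using h2
  · rintro ⟨b, a⟩ _ hne
    rw [Finsupp.single_apply, if_neg]
    intro he
    apply hne
    obtain ⟨b', a'⟩ := t
    simp only [Prod.mk.injEq, Fin.castSucc_inj] at he
    rw [he.1, he.2.2]
  · intro ht
    rw [Finsupp.notMem_support_iff.1 ht]; simp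

end Ker
end KLR


namespace KLR

section Ker2

open scoped TensorProduct

set_option linter.unusedSectionVars false
set_option linter.unusedSimpArgs false

variable {k : Type} [Field k] {I : Type} [Fintype I] [DecidableEq I] {C : CartanDatum k I}

theorem lin_sub {M N : Type} [AddCommMonoid M] [Module k M] [AddCommGroup N] [Module k N]
    (f : M →ₗ[k] N) (x y : M) : f (x + (-1 : k) • y) = f x - f y := by
  rw [map_add, map_smul, neg_smul, one_smul, sub_eq_add_neg]

variable (C) in
/-- The image of the last crossing. -/
noncomputable def tq (Λ : I → ℕ) (n : ℕ) (γ : I → ℕ) (i j : I) : cAlg C Λ (n + 2) γ :=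
  toCB C Λ (EL C (n + 1) i * (TL C n * EL C (n + 1) j))

variable {Λ β : I → ℕ} {i j : I} {n : ℕ}
    {φiS : cAlg C Λ n β →ₙₐ[k] cAlg C Λ (n + 1) (addA β i)} (hφiS : IsUpRc C Λ i φiS)
    {φjS : cAlg C Λ n β →ₙₐ[k] cAlg C Λ (n + 1) (addA β j)} (hφjS : IsUpRc C Λ j φjS)
    {φjV : cAlg C Λ (n + 1) (addA β i) →ₙₐ[k] cAlg C Λ (n + 2) (addA (addA β i) j)}
    (hφjV : IsUpRc C Λ j φjV)
    {ψ : cAlg C Λ (n + 1) (addA β j) →ₙₐ[k] cAlg C Λ (n + 2) (addA (addA β i) j)}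
    (hψ : IsUpRc C Λ i ψ)

variable (C Λ β i j n) in
/-- The projection on tensor products. -/
noncomputable def PP : (Alg C (n + 1) ⊗[k] Alg C (n + 1)) →ₗ[k]
    (cAlg C Λ (n + 1) (addA β j) ⊗[k] cAlg C Λ (n + 1) (addA β i)) :=
  TensorProduct.map (toCB C Λ).toLinearMap (toCB C Λ).toLinearMap

theorem PP_tmul (w v : Alg C (n + 1)) : PP C Λ β i j n (w ⊗ₜ v) = toCB C Λ w ⊗ₜ toCB C Λ v := rfl

theorem PP_surj : Function.Surjective (PP C Λ β i j n) :=
  TensorProduct.map_surjective (toCB_surj Λ) (toCB_surj Λ)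

theorem fmap_tmul_q (hφjV : IsUpRc C Λ j φjV) (hψ : IsUpRc C Λ i ψ) (w v : Alg C (n + 1)) :
    ψ (toCB C Λ w) * tq C Λ n _ i j * φjV (toCB C Λ v) = toCB C Λ (ft C n i j (w ⊗ₜ v)) := by
  rw [up_eq (addA_comm β i j) hψ, up_eq rfl hφjV, tq, ← map_mul, ← map_mul, ft_tmul]
  congr 1
  simp only [mul_assoc]
  rw [← mul_assoc (EL C (n + 1) i) (EL C (n + 1) i), EL_mul, if_pos rfl, (EL_comm w i).left_comm,
    ← (EL_comm v j).left_comm, EL_mul, if_pos rfl]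

theorem fmap_PP (hφjV : IsUpRc C Λ j φjV) (hψ : IsUpRc C Λ i ψ) (z) :
    fmap ψ φjV (tq C Λ n _ i j) (PP C Λ β i j n z) = toCB C Λ (ft C n i j z) := by
  have : (fmap ψ φjV (tq C Λ n _ i j)) ∘ₗ (PP C Λ β i j n) =
      (toCB C Λ).toLinearMap ∘ₗ (ft C n i j) := by
    refine TensorProduct.ext' fun w v => ?_
    exact fmap_tmul_q hφjV hψ w v
  exact LinearMap.congr_fun this z

theorem PP_Kf (hφiS : IsUpRc C Λ i φiS) (hφjS : IsUpRc C Λ j φjS) {z} (hz : z ∈ Kf C n i) :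
    PP C Λ β i j n z ∈ Krel φiS φjS := by
  refine KK_le (PP C Λ β i j n) (Krel φiS φjS) ?_ ?_ hz
  · intro w s v
    rw [PP_tmul, PP_tmul]
    have h1 := Krel_one' (φi := φiS) (φj := φjS) (toCB C Λ (w * iota C n s)) (toCB C Λ v)
    have h2 := Krel_bal (φi := φiS) (φj := φjS) (toCB C Λ w) (toCB C Λ s) (toCB C Λ v)
    have h3 := Krel_one (φi := φiS) (φj := φjS) (toCB C Λ w) (toCB C Λ (iota C n s * v))
    have e1 : toCB C Λ (w * iota C n s) * φjS 1 = toCB C Λ w * φjS (toCB C Λ s) := by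
      rw [up_one rfl hφjS, ← map_mul, mul_assoc, map_mul, ← up_eq rfl hφjS]
    have e2 : φiS 1 * toCB C Λ (iota C n s * v) = φiS (toCB C Λ s) * toCB C Λ v := by
      rw [up_one rfl hφiS, ← map_mul, ← mul_assoc, ← (EL_comm s i).eq, map_mul, ← up_eq rfl hφiS]
    rw [e1] at h1
    rw [e2] at h3
    have := Submodule.sub_mem _ (Submodule.add_mem _ h1 h2) h3
    convert this using 1
    abel
  · intro w v
    rw [PP_tmul, PP_tmul]
    have h3 := Krel_one (φi := φiS) (φj := φjS) (toCB C Λ w) (toCB C Λ v)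
    rw [up_one rfl hφiS, ← map_mul] at h3
    exact h3

theorem PP_free (hij : i ≠ j) (hφiS : IsUpRc C Λ i φiS) (hφjS : IsUpRc C Λ j φjS) {z}
    (hz : ft C n i j z = 0) : PP C Λ β i j n z ∈ Krel φiS φjS := by
  obtain ⟨m, y, hm, hy⟩ := Kf_normal n i z
  have hP : PP C Λ β i j n z = PP C Λ β i j n y + PP C Λ β i j n (gg C n i m) := by
    rw [← hy]; exact (PP C Λ β i j n).map_add _ _
  rw [hP]
  refine Submodule.add_mem _ (PP_Kf hφiS hφjS hm) ?_
  have h1 := ft_Kf (j := j) hm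
  have h2 : ft C n i j z = ft C n i j y + ft C n i j (gg C n i m) := by
    rw [← hy]; exact (ft C n i j).map_add _ _
  rw [hz, h1, zero_add] at h2
  replace h2 := h2.symm
  have h3 := gg_zero hij m h2
  rw [← Finsupp.sum_single m, Finsupp.sum, map_sum, map_sum]
  refine Submodule.sum_mem _ fun t _ => ?_
  obtain ⟨b, a⟩ := t
  rw [gg_single, PP_tmul]
  have h4 := Krel_one' (φi := φiS) (φj := φjS) (toCB C Λ (m (b, a)))
    (toCB C Λ (XL C n ^ a * (EL C n i * tt C n b)))
  rw [up_one rfl hφjS, ← map_mul, h3, map_zero, TensorProduct.zero_tmul, sub_zero] at h4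
  exact h4

theorem PP_SI {z : Alg C (n + 2)} (hz : z ∈ TS C n i j (SI C Λ (n + 1))) :
    ∃ z', ft C n i j z' = z ∧ PP C Λ β i j n z' = 0 := by
  induction hz using Submodule.span_induction with
  | mem x hx =>
    obtain ⟨w, v, h, rfl⟩ := hx
    refine ⟨w ⊗ₜ v, ft_tmul w v, ?_⟩
    rw [PP_tmul]
    rcases h with h | h
    · rw [toCB_Id h, TensorProduct.zero_tmul]
    · rw [toCB_Id h, TensorProduct.tmul_zero]
  | zero => exact ⟨0, (ft C n i j).map_zero, (PP C Λ β i j n).map_zero⟩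
  | add x y _ _ hx hy =>
    obtain ⟨a, rfl, ha⟩ := hx
    obtain ⟨b, rfl, hb⟩ := hy
    exact ⟨a + b, (ft C n i j).map_add a b, ((PP C Λ β i j n).map_add a b).trans (by rw [ha, hb, add_zero])⟩
  | smul c x _ hx =>
    obtain ⟨a, rfl, ha⟩ := hx
    exact ⟨c • a, (ft C n i j).map_smul c a, ((PP C Λ β i j n).map_smul c a).trans (by rw [ha, smul_zero])⟩

theorem ft_eIdem (z) : ∃ z', PP C Λ β i j n z' = PP C Λ β i j n z ∧
    ft C n i j z' = ft C n i j z * eIdem C (n + 2) (addA (addA β i) j) := by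
  induction z using TensorProduct.induction_on with
  | zero =>
    exact ⟨0, rfl, (ft C n i j).map_zero.trans (by rw [(ft C n i j).map_zero, zero_mul])⟩
  | tmul w v =>
    refine ⟨w ⊗ₜ (v * eIdem C (n + 1) (addA β i)), ?_, ?_⟩
    · rw [PP_tmul, PP_tmul, map_mul, toCB_eIdem, mul_one]
    · rw [ft_tmul, ft_tmul]
      simp only [map_mul, mul_assoc]
      rw [iota_eIdem]
  | add x y hx hy =>
    obtain ⟨a, ha, ha'⟩ := hx
    obtain ⟨b, hb, hb'⟩ := hy
    refine ⟨a + b, ((PP C Λ β i j n).map_add a b).trans (((PP C Λ β i j n).map_add x y).trans ?_).symm,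
      ((ft C n i j).map_add a b).trans ?_⟩
    · rw [ha, hb]
    · rw [ha', hb', ← add_mul]; congr 1
      exact ((ft C n i j).map_add x y).symm

theorem ker_main (hij : i ≠ j) (hφiS : IsUpRc C Λ i φiS) (hφjS : IsUpRc C Λ j φjS)
    (hφjV : IsUpRc C Λ j φjV) (hψ : IsUpRc C Λ i ψ) (z)
    (hz : fmap ψ φjV (tq C Λ n _ i j) z = 0) : z ∈ Krel φiS φjS := by
  obtain ⟨z, rfl⟩ := PP_surj z
  rw [fmap_PP hφjV hψ] at hz
  have h1 := toCB_ker hz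
  obtain ⟨z2, hz2, hf2⟩ := ft_eIdem (Λ := Λ) (β := β) z
  rw [← hf2] at h1
  have h2 := cyc_main Λ hij n h1
  have h3 : EL C (n + 1) i * (ft C n i j z2 * EL C (n + 1) j) = ft C n i j z2 := by
    have : (LinearMap.mulLeft k (EL C (n + 1) i) ∘ₗ LinearMap.mulRight k (EL C (n + 1) j)) ∘ₗ
        ft C n i j = ft C n i j := by
      refine TensorProduct.ext' fun w v => ?_
      change EL C (n + 1) i * (ft C n i j (w ⊗ₜ[k] v) * EL C (n + 1) j) = ft C n i j (w ⊗ₜ[k] v)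
      rw [ft_tmul]
      simp only [mul_assoc]
      rw [EL_mul, if_pos rfl, ← mul_assoc (EL C (n + 1) i) (EL C (n + 1) i), EL_mul, if_pos rfl]
    exact LinearMap.congr_fun this z2
  rw [h3] at h2
  obtain ⟨z', h4, h5⟩ := PP_SI (β := β) h2
  have h6 : ft C n i j (z2 + (-1 : k) • z') = 0 := (lin_sub (ft C n i j) z2 z').trans (by rw [h4, sub_self])
  have h7 := PP_free (β := β) hij hφiS hφjS h6
  have h8 : PP C Λ β i j n (z2 + (-1 : k) • z') = PP C Λ β i j n z :=
    ((PP C Λ β i j n).map_add _ _).trans (by rw [hz2, (PP C Λ β i j n).map_smul, h5, smul_zero, add_zero])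
  rwa [h8] at h7

theorem tq_bal (hφiS : IsUpRc C Λ i φiS) (hφjS : IsUpRc C Λ j φjS)
    (hφjV : IsUpRc C Λ j φjV) (hψ : IsUpRc C Λ i ψ) (s : cAlg C Λ n β) :
    ψ (φjS s) * tq C Λ n _ i j = tq C Λ n _ i j * φjV (φiS s) := by
  obtain ⟨s, rfl⟩ := toCB_surj Λ s
  rw [up_eq rfl hφjS, up_eq rfl hφiS, up_eq rfl hφjV, up_eq (addA_comm β i j) hψ, tq, ← map_mul, ← map_mul]
  congr 1
  simp only [map_mul, mul_assoc]
  have e3 : ∀ (l : I) (x : Alg C (n + 2)), EL C (n + 1) l * (EL C (n + 1) l * x) = EL C (n + 1) l * x := by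
    intro l x
    rw [← mul_assoc, EL_mul, if_pos rfl]
  have e4 : ∀ (l : I) (x : Alg C (n + 2)), iota C (n + 1) (EL C n l) * (iota C (n + 1) (EL C n l) * x)
      = iota C (n + 1) (EL C n l) * x := by
    intro l x
    rw [← mul_assoc, ← map_mul, EL_mul, if_pos rfl]
  have e5 : ∀ l, EL C (n + 1) l * EL C (n + 1) l = EL C (n + 1) l := by
    intro l
    rw [EL_mul, if_pos rfl]
  rw [e3, TL_EL, ← (EL_comm (EL C n j) i).left_comm, e4,
    (EL_comm (EL C n j) i).left_comm, ← TL_EL]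
  rw [← (EL_comm _ j).left_comm, ← (EL_comm _ j).left_comm, e5, ← (TL_comm s).left_comm,
    ← (EL_comm (iota C n s) i).left_comm, ← mul_assoc (TL C n), ← EL_TL, mul_assoc, e3]

theorem tq_e (hφiS : IsUpRc C Λ i φiS) (hφjV : IsUpRc C Λ j φjV) :
    tq C Λ n _ i j * φjV (φiS 1) = tq C Λ n _ i j := by
  rw [up_one rfl hφiS, up_eq rfl hφjV, tq, ← map_mul]
  congr 1
  simp only [mul_assoc]
  rw [(EL_comm _ j).eq, ← mul_assoc (EL C (n + 1) j) (EL C (n + 1) j), EL_mul, if_pos rfl,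
    ← (EL_comm _ j).eq, ← mul_assoc (TL C n), ← EL_TL, mul_assoc, ← mul_assoc, EL_mul, if_pos rfl]

theorem tq_one (hψ : IsUpRc C Λ i ψ) : ψ 1 * tq C Λ n _ i j = tq C Λ n _ i j := by
  rw [up_one (addA_comm β i j) hψ, tq, ← map_mul, ← mul_assoc, EL_mul, if_pos rfl]

theorem fmap_surj (hij : i ≠ j) (hφjV : IsUpRc C Λ j φjV) (hψ : IsUpRc C Λ i ψ) (u) :
    ∃ z, fmap ψ φjV (tq C Λ n _ i j) z = ψ 1 * u * φjV 1 := by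
  obtain ⟨u, rfl⟩ := toCB_surj Λ u
  have h : TS C n i j Set.univ ≤ LinearMap.range (ft C n i j) := by
    refine Submodule.span_le.2 ?_
    rintro _ ⟨w, v, -, rfl⟩
    exact ⟨w ⊗ₜ v, ft_tmul w v⟩
  obtain ⟨z, hz⟩ := h (TS_top hij u)
  refine ⟨PP C Λ β i j n z, ?_⟩
  rw [fmap_PP hφjV hψ, hz, up_one (addA_comm β i j) hψ, up_one rfl hφjV, ← map_mul, ← map_mul,
    mul_assoc]

theorem homog_mem {M : Type} [AddCommGroup M] [Module k M] {A D : ℤ → Submodule k M}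
    (hA : DirectSum.IsInternal A) (hD : ∀ c, D c ≤ A c) {y : M} {c : ℤ} (hy : y ∈ A c)
    (hy' : y ∈ ⨆ c, D c) : y ∈ D c := by
  classical
  letI := hA.chooseDecomposition
  have key : ∀ c, ((DirectSum.decompose A y c : A c) : M) ∈ D c := by
    intro c
    refine Submodule.iSup_induction D (motive := fun y => ((DirectSum.decompose A y c : A c) : M) ∈ D c)
      hy' ?_ ?_ ?_
    · intro c' x hx
      by_cases h : c' = c
      · subst h
        rw [DirectSum.decompose_of_mem_same A (hD _ hx)]; exact hx
      · rw [DirectSum.decompose_of_mem_ne A (hD _ hx) h]; exact Submodule.zero_mem _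
    · simp
    · intro x y hx hy
      rw [DirectSum.decompose_add]
      exact Submodule.add_mem _ hx hy
  have := key c
  rwa [DirectSum.decompose_of_mem_same A hy] at this

theorem eRdeg {n : ℕ} {A : Type} [Ring A] [Algebra k A] {p : Alg C (n + 1) →ₐ[k] A}
    {𝒜 : ℤ → Submodule k A} (h : IsKLRGrading C p 𝒜) (i : I) : p (EL C n i) ∈ 𝒜 0 := by
  rw [EL, map_sum]
  exact Submodule.sum_mem _ fun ν _ => h.2.1 _

theorem up_graded {n : ℕ} {β γ : I → ℕ} {i : I} (h : γ = addA β i)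
    {φ : cAlg C Λ n β →ₙₐ[k] cAlg C Λ (n + 1) γ} (hφ : IsUpRc C Λ i φ)
    {𝒜 : ℤ → Submodule k (cAlg C Λ n β)} (h𝒜 : IsKLRGrading C (toCB C Λ) 𝒜)
    {ℬ : ℤ → Submodule k (cAlg C Λ (n + 1) γ)} (hℬ : IsKLRGrading C (toCB C Λ) ℬ)
    {c : ℤ} {x} (hx : x ∈ 𝒜 c) : φ x ∈ ℬ c := by
  let D : ℤ → Submodule k (cAlg C Λ n β) := fun c => 𝒜 c ⊓ (ℬ c).comap (φ : cAlg C Λ n β →ₗ[k] _)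
  have hDm : ∀ {c x}, x ∈ D c ↔ x ∈ 𝒜 c ∧ φ x ∈ ℬ c := Iff.rfl
  have e0 : ∀ ν : Fin n → I, toCB C Λ (Ee C ν) ∈ D 0 := fun ν =>
    hDm.2 ⟨h𝒜.2.1 ν, by rw [hφ.1]; exact hℬ.2.1 _⟩
  have hE : ∀ (g : Alg C n), (∀ ν, ∃ c, toCB C Λ (g * Ee C ν) ∈ D c) →
      toCB C Λ g ∈ ⨆ c, D c := by
    intro g hg
    rw [← mul_one g, ← Ee_sum, Finset.mul_sum, map_sum]
    refine Submodule.sum_mem _ fun ν _ => ?_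
    obtain ⟨c, hc⟩ := hg ν
    exact Submodule.mem_iSup_of_mem c hc
  have hmul : ∀ a b, a ∈ ⨆ c, D c → b ∈ ⨆ c, D c → a * b ∈ ⨆ c, D c := by
    intro a b ha hb
    refine Submodule.iSup_induction D (motive := fun a => a * b ∈ ⨆ c, D c) ha ?_ ?_ ?_
    · intro c a ha
      refine Submodule.iSup_induction D (motive := fun b => a * b ∈ ⨆ c, D c) hb ?_ ?_ ?_
      · intro c' b hb
        refine Submodule.mem_iSup_of_mem (c + c') (hDm.2 ⟨h𝒜.1.2.1 ha.1 hb.1, ?_⟩)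
        rw [map_mul]
        exact hℬ.1.2.1 ha.2 hb.2
      · rw [mul_zero]; exact Submodule.zero_mem _
      · intro x y hx hy; rw [mul_add]; exact Submodule.add_mem _ hx hy
    · rw [zero_mul]; exact Submodule.zero_mem _
    · intro x y hx hy; rw [add_mul]; exact Submodule.add_mem _ hx hy
  have htop : ∀ w : Alg C n, toCB C Λ w ∈ ⨆ c, D c := by
    intro w
    induction w using Alg_induct with
    | hs c =>
      rw [Algebra.algebraMap_eq_smul_one, map_smul]
      refine Submodule.smul_mem _ _ (hE 1 fun ν => ⟨0, ?_⟩)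
      rw [one_mul]; exact e0 ν
    | he ν => exact Submodule.mem_iSup_of_mem 0 (e0 ν)
    | hx a =>
      refine hE _ fun ν => ⟨_, hDm.2 ⟨h𝒜.2.2.1 a ν, ?_⟩⟩
      have := hℬ.2.2.1 a.castSucc (Fin.snoc ν i)
      rw [Fin.snoc_castSucc] at this
      rw [map_mul, map_mul, hφ.1, hφ.2.1, map_mul, toCB_eR Λ h, mul_assoc, ← map_mul, ← map_mul,
        EL_Ee, if_pos (by simp)]
      exact this
    | ht l hl =>
      refine hE _ fun ν => ⟨_, hDm.2 ⟨h𝒜.2.2.2 l hl ν, ?_⟩⟩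
      have := hℬ.2.2.2 l (Nat.lt_succ_of_lt hl) (Fin.snoc ν i)
      rw [snoc_lt ν i l _ (by omega), snoc_lt ν i (l + 1) _ hl] at this
      rw [map_mul, map_mul, hφ.1, hφ.2.2, map_mul, toCB_eR Λ h, mul_assoc, ← map_mul, ← map_mul,
        EL_Ee, if_pos (by simp)]
      exact this
    | hadd a b ha hb => rw [map_add]; exact Submodule.add_mem _ ha hb
    | hmul a b ha hb => rw [map_mul]; exact hmul _ _ ha hb
  obtain ⟨w, rfl⟩ := toCB_surj Λ x
  exact (hDm.1 (homog_mem (D := D) h𝒜.1.2.2 (fun c => inf_le_left) hx (htop w))).2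

theorem tq_deg {γ : I → ℕ} {𝒜 : ℤ → Submodule k (cAlg C Λ (n + 2) γ)}
    (h : IsKLRGrading C (toCB C Λ) 𝒜) : tq C Λ n γ i j ∈ 𝒜 (-(B C i j)) := by
  rw [tq, ← mul_one (EL C (n + 1) i * _), ← Ee_sum, Finset.mul_sum, map_sum]
  refine Submodule.sum_mem _ fun ν _ => ?_
  rw [mul_assoc, mul_assoc, EL_Ee, ← mul_assoc, EL_TL]
  by_cases h1 : ν (Fin.last (n + 1)) = j
  · rw [if_pos h1, mul_assoc, iota_EL_Ee]
    by_cases h2 : ν (Fin.last n).castSucc = i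
    · rw [if_pos h2, ← h1, ← h2]
      exact h.2.2.2 n (by omega) ν
    · rw [if_neg h2, mul_zero, map_zero]; exact Submodule.zero_mem _
  · rw [if_neg h1, mul_zero, map_zero]; exact Submodule.zero_mem _

end Ker2
end KLR


namespace KLR

section Abstract

open scoped TensorProduct

set_option linter.unusedSectionVars false
set_option linter.unusedSimpArgs false

variable {k : Type} [Field k]

section OTs
variable {S B M : Type} [Ring S] [Algebra k S] [Ring B] [Algebra k B]
  [AddCommGroup M] [Module k M] [Module S M] [IsScalarTower k S M] {φ : S →ₙₐ[k] B}

/-- `OTmk` as a linear map. -/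
noncomputable def otL (φ : S →ₙₐ[k] B) : B ⊗[k] M →ₗ[k] OT k S B M φ :=
  ((TRel k S B M φ).mkQ).restrictScalars k

theorem otL_eq (z : B ⊗[k] M) : otL φ z = OTmk k S B M φ z := rfl

theorem otL_surj : Function.Surjective (otL (M := M) φ) := Submodule.Quotient.mk_surjective _

theorem otL_bal (b : B) (r : S) (m : M) : otL φ ((b * φ r) ⊗ₜ[k] m) = otL φ (b ⊗ₜ[k] (r • m)) :=
  (Submodule.Quotient.eq _).2 (Submodule.subset_span ⟨b, r, m, rfl⟩)

theorem otL_smul (b : B) (z : B ⊗[k] M) : otL φ (b • z) = b • otL φ z := rfl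

theorem otL_smul_tmul (b a : B) (m : M) : b • otL φ (a ⊗ₜ[k] m) = otL φ ((b * a) ⊗ₜ[k] m) := rfl

theorem ot_ind {P : OT k S B M φ → Prop} (h0 : P 0) (hadd : ∀ x y, P x → P y → P (x + y))
    (ht : ∀ b m, P (otL φ (b ⊗ₜ[k] m))) (x) : P x := by
  obtain ⟨z, rfl⟩ := otL_surj x
  induction z using TensorProduct.induction_on with
  | zero => rw [map_zero]; exact h0
  | tmul b m => exact ht b m
  | add x y hx hy => rw [map_add]; exact hadd _ _ hx hy

variable {Z : Type} [AddCommGroup Z] [Module k Z]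

theorem ot_ker (f : B ⊗[k] M →ₗ[k] Z)
    (hf : ∀ b r m, f ((b * φ r) ⊗ₜ[k] m) = f (b ⊗ₜ[k] (r • m))) :
    (TRel k S B M φ).restrictScalars k ≤ LinearMap.ker f := by
  have key : ∀ z ∈ TRel k S B M φ, ∀ b : B, f (b • z) = 0 := by
    intro z hz
    refine Submodule.span_induction (p := fun z _ => ∀ b : B, f (b • z) = 0) ?_ ?_ ?_ ?_ hz
    · rintro _ ⟨a, r, m, rfl⟩ b
      rw [smul_sub, TensorProduct.smul_tmul', TensorProduct.smul_tmul', map_sub, smul_eq_mul,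
        smul_eq_mul, ← mul_assoc, hf, sub_self]
    · intro b; rw [smul_zero, map_zero]
    · intro x y _ _ hx hy b; rw [smul_add, map_add, hx, hy, add_zero]
    · intro a x _ hx b; rw [← mul_smul]; exact hx _
  intro z hz
  have := key z hz 1
  rwa [one_smul] at this

/-- Lifting to the balanced tensor product. -/
noncomputable def otLift (f : B ⊗[k] M →ₗ[k] Z)
    (hf : ∀ b r m, f ((b * φ r) ⊗ₜ[k] m) = f (b ⊗ₜ[k] (r • m))) : OT k S B M φ →ₗ[k] Z :=
  (Submodule.liftQ _ f (ot_ker f hf)) ∘ₗ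
    (Submodule.Quotient.restrictScalarsEquiv k (TRel k S B M φ)).symm.toLinearMap

theorem otLift_L (f : B ⊗[k] M →ₗ[k] Z)
    (hf : ∀ b r m, f ((b * φ r) ⊗ₜ[k] m) = f (b ⊗ₜ[k] (r • m))) (z) :
    otLift f hf (otL φ z) = f z := rfl

end OTs

variable {S V W U : Type} [Ring S] [Algebra k S] [Ring V] [Algebra k V] [Ring W] [Algebra k W]
  [Ring U] [Algebra k U] {φi : S →ₙₐ[k] V} {φj : S →ₙₐ[k] W} {φ : V →ₙₐ[k] U} {ψ : W →ₙₐ[k] U}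
  {t : U} {e : V} {e' : U}

section Mods
variable {N : Type} [AddCommGroup N] [Module k N] [Module V N] [IsScalarTower k V N]

theorem ksmul_comm (c : k) (v : V) (n : N) : v • c • n = c • v • n := by
  rw [← algebraMap_smul V c n, ← mul_smul, ← Algebra.commutes, mul_smul, algebraMap_smul]

variable (N) in
/-- The action as bilinear map. -/
noncomputable def actL : V →ₗ[k] N →ₗ[k] N :=
  LinearMap.mk₂ k (fun v n => v • n) (fun a b n => add_smul a b n) (fun c a n => smul_assoc c a n)
    (fun a m n => smul_add a m n) (fun c a n => ksmul_comm c a n)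

theorem eSub_mem (n : N) : e • n ∈ eSub k V N e := ⟨n, rfl⟩

theorem eSub_fix (he : e * e = e) (x : eSub k V N e) : e • (x : N) = x := by
  obtain ⟨_, n, rfl⟩ := x
  show e • e • n = e • n
  rw [← mul_smul, he]

/-- Projection on `eN`. -/
noncomputable def eProj (e : V) : N →ₗ[k] eSub k V N e := (eMap k V N e).rangeRestrict

theorem eProj_val (n : N) : ((eProj (k := k) e n : eSub k V N e) : N) = e • n := rfl

variable [Module S (eSub k V N e)] [IsScalarTower k S (eSub k V N e)]

/-- pre-map. -/
noncomputable def pre (φ : V →ₙₐ[k] U) (ψ : W →ₙₐ[k] U) (t : U) (e : V) :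
    W ⊗[k] (eSub k V N e) →ₗ[k] OT k V U N φ :=
  otL φ ∘ₗ TensorProduct.map (LinearMap.mulRight k t ∘ₗ (ψ : W →ₗ[k] U)) (eSub k V N e).subtype

theorem pre_tmul (w : W) (x : eSub k V N e) :
    pre φ ψ t e (w ⊗ₜ x) = otL φ ((ψ w * t) ⊗ₜ[k] (x : N)) := rfl

variable (hc : ∀ (r : S) (x : eSub k V N e), ((r • x : eSub k V N e) : N) = φi r • (x : N))
  (bal : ∀ s, ψ (φj s) * t = t * φ (φi s)) (he : e = φi 1) (he' : e' = ψ 1) (te : t * φ (φi 1) = t)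
  (t1 : ψ 1 * t = t)

include hc bal in
theorem pre_bal (b : W) (r : S) (m : eSub k V N e) :
    pre φ ψ t e ((b * φj r) ⊗ₜ m) = pre φ ψ t e (b ⊗ₜ (r • m)) := by
  rw [pre_tmul, pre_tmul, map_mul, mul_assoc, bal, ← mul_assoc, otL_bal, hc]

/-- The forward map. -/
noncomputable def fwd (hc : ∀ (r : S) (x : eSub k V N e), ((r • x : eSub k V N e) : N) = φi r • (x : N))
    (bal : ∀ s, ψ (φj s) * t = t * φ (φi s)) :
    OT k S W (eSub k V N e) φj →ₗ[k] OT k V U N φ :=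
  otLift (pre φ ψ t e) (pre_bal hc bal)

theorem fwd_tmul (w : W) (x : eSub k V N e) :
    fwd hc bal (otL φj (w ⊗ₜ x)) = otL φ ((ψ w * t) ⊗ₜ[k] (x : N)) := rfl

theorem fwd_smul (w : W) (x) : fwd hc bal (w • x) = ψ w • fwd hc bal x := by
  induction x using ot_ind with
  | h0 => rw [smul_zero, map_zero, smul_zero]
  | hadd x y hx hy => rw [smul_add, map_add, map_add, hx, hy, smul_add]
  | ht b m => rw [otL_smul_tmul, fwd_tmul, fwd_tmul, otL_smul_tmul, map_mul, mul_assoc]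

include he' in
theorem fwd_mem (x) : fwd hc bal x ∈ eSub k U (OT k V U N φ) e' := by
  refine ⟨fwd hc bal x, ?_⟩
  show e' • fwd hc bal x = fwd hc bal x
  rw [he', ← fwd_smul, one_smul]

/-- The map `w ⊗ v ↦ (n ↦ w ⊗ e v n)`. -/
noncomputable def GG (N : Type) [AddCommGroup N] [Module k N] [Module V N] [IsScalarTower k V N]
    (e : V) [Module S (eSub k V N e)] [IsScalarTower k S (eSub k V N e)] (φj : S →ₙₐ[k] W) :
    W ⊗[k] V →ₗ[k] N →ₗ[k] OT k S W (eSub k V N e) φj :=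
  TensorProduct.lift (LinearMap.mk₂ k
    (fun w v => otL φj ∘ₗ TensorProduct.mk k W (eSub k V N e) w ∘ₗ eProj e ∘ₗ actL N v)
    (fun a b v => by ext n; simp [TensorProduct.add_tmul])
    (fun c a v => by
      ext n
      show otL φj ((c • a) ⊗ₜ[k] eProj (k := k) e (v • n)) = c • otL φj (a ⊗ₜ[k] eProj (k := k) e (v • n))
      rw [← TensorProduct.smul_tmul', map_smul])
    (fun a v w => by ext n; simp [TensorProduct.tmul_add])
    (fun c a v => by ext n; simp))

theorem GG_tmul (w : W) (v : V) (n : N) :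
    GG N e φj (w ⊗ₜ v) n = otL φj (w ⊗ₜ eProj e (v • n)) := rfl

theorem GG_mul (z : W ⊗[k] V) (v : V) (n : N) :
    GG N e φj (TensorProduct.map LinearMap.id (LinearMap.mulRight k v) z) n = GG N e φj z (v • n) := by
  induction z using TensorProduct.induction_on with
  | zero => simp
  | tmul a b =>
    rw [TensorProduct.map_tmul, GG_tmul, GG_tmul, LinearMap.mulRight_apply, mul_smul]; rfl
  | add x y hx hy => rw [map_add, map_add, map_add, LinearMap.add_apply, LinearMap.add_apply, hx, hy]

theorem fmap_mul (z : W ⊗[k] V) (v : V) :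
    fmap ψ φ t (TensorProduct.map LinearMap.id (LinearMap.mulRight k v) z) = fmap ψ φ t z * φ v := by
  induction z using TensorProduct.induction_on with
  | zero => simp
  | tmul a b =>
    rw [TensorProduct.map_tmul, fmap_tmul, fmap_tmul, LinearMap.mulRight_apply, map_mul, mul_assoc,
      LinearMap.id_apply, mul_assoc, mul_assoc]
  | add x y hx hy => rw [map_add, map_add, map_add, hx, hy, add_mul]

include hc he in
theorem GG_krel {z : W ⊗[k] V} (hz : z ∈ Krel φi φj) : GG N e φj z = 0 := by
  have hee : e * e = e := by rw [he, ← map_mul, mul_one]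
  have : Krel φi φj ≤ LinearMap.ker (GG N e φj) := by
    refine Submodule.span_le.2 ?_
    rintro _ (⟨w, s, v, rfl⟩ | ⟨w, v, rfl⟩)
    · rw [SetLike.mem_coe, LinearMap.mem_ker, map_sub, sub_eq_zero]
      ext n
      rw [GG_tmul, GG_tmul, otL_bal]
      congr 2
      apply Subtype.ext
      rw [hc, eProj_val, eProj_val, ← mul_smul, ← mul_smul, ← mul_smul, he, ← map_mul, mul_one,
        ← mul_assoc, ← map_mul, one_mul]
    · rw [SetLike.mem_coe, LinearMap.mem_ker, map_sub, sub_eq_zero]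
      ext n
      rw [GG_tmul, GG_tmul]
      congr 2
      apply Subtype.ext
      rw [eProj_val, eProj_val, ← he, mul_smul, ← mul_smul e e, hee]
  exact this hz

variable (ker : ∀ z, fmap ψ φ t z = 0 → z ∈ Krel φi φj)
  (surj : ∀ u, ∃ z, fmap ψ φ t z = ψ 1 * u * φ 1)

include hc he ker in
theorem GG_eq {z z' : W ⊗[k] V} (h : fmap ψ φ t z = fmap ψ φ t z') : GG N e φj z = GG N e φj z' := by
  rw [← sub_eq_zero, ← map_sub]
  refine GG_krel hc he (ker _ ?_)
  rw [map_sub, h, sub_self]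

include surj in
theorem exP : ∃ P : U →ₗ[k] W ⊗[k] V, ∀ u, fmap ψ φ t (P u) = ψ 1 * u * φ 1 := by
  let g : U →ₗ[k] LinearMap.range (fmap ψ φ t) :=
    (LinearMap.mulRight k (φ 1) ∘ₗ LinearMap.mulLeft k (ψ 1)).codRestrict _ surj
  obtain ⟨P, hP⟩ := Module.projective_lifting_property (fmap ψ φ t).rangeRestrict g
    (LinearMap.surjective_rangeRestrict _)
  exact ⟨P, fun u => congrArg Subtype.val (LinearMap.congr_fun hP u)⟩

include hc he ker surj in
/-- Existence of the inverse. -/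
theorem exTheta : ∃ Θ : OT k V U N φ →ₗ[k] OT k S W (eSub k V N e) φj,
    ∀ z u n, fmap ψ φ t z = ψ 1 * u * φ 1 → Θ (otL φ (u ⊗ₜ n)) = GG N e φj z n := by
  obtain ⟨P, hP⟩ := exP surj
  refine ⟨otLift (TensorProduct.lift (GG N e φj ∘ₗ P)) ?_, ?_⟩
  · intro u v n
    rw [TensorProduct.lift.tmul, TensorProduct.lift.tmul, LinearMap.comp_apply, LinearMap.comp_apply,
      ← GG_mul]
    refine LinearMap.congr_fun (GG_eq hc he ker ?_) n
    rw [fmap_mul, hP, hP, mul_assoc, mul_assoc, mul_assoc, mul_assoc, ← map_mul, ← map_mul, mul_one,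
      one_mul]
  · intro z u n h
    rw [otLift_L, TensorProduct.lift.tmul, LinearMap.comp_apply]
    exact LinearMap.congr_fun (GG_eq hc he ker (by rw [hP, h])) n

include t1 te in
theorem theta_fwd
    (hc : ∀ (r : S) (x : eSub k V N e), ((r • x : eSub k V N e) : N) = φi r • (x : N))
    (bal : ∀ s, ψ (φj s) * t = t * φ (φi s)) (he : e = φi 1) {Θ : OT k V U N φ →ₗ[k] OT k S W (eSub k V N e) φj}
    (hΘ : ∀ z u n, fmap ψ φ t z = ψ 1 * u * φ 1 → Θ (otL φ (u ⊗ₜ n)) = GG N e φj z n) (x) :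
    Θ (fwd hc bal x) = x := by
  have hee : e * e = e := by rw [he, ← map_mul, mul_one]
  induction x using ot_ind with
  | h0 => rw [map_zero, map_zero]
  | hadd x y hx hy => rw [map_add, map_add, hx, hy]
  | ht b m =>
    rw [fwd_tmul, hΘ (b ⊗ₜ 1), GG_tmul, one_smul]
    · congr 2
      exact Subtype.ext (eSub_fix hee m)
    · rw [fmap_tmul, ← mul_assoc, ← map_mul, one_mul]

theorem fwd_GG (he : e = φi 1) (te : t * φ (φi 1) = t) (z n) :
    fwd hc bal (GG N e φj z n) = otL φ (fmap ψ φ t z ⊗ₜ[k] n) := by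
  induction z using TensorProduct.induction_on with
  | zero => simp
  | tmul w v =>
    rw [GG_tmul, fwd_tmul, fmap_tmul, eProj_val, ← otL_bal, ← otL_bal, he, mul_assoc (ψ w), te]
  | add x y hx hy => rw [map_add, LinearMap.add_apply, map_add, map_add, TensorProduct.add_tmul, map_add, hx, hy]

theorem fwd_theta (he : e = φi 1) (te : t * φ (φi 1) = t)
    (surj : ∀ u, ∃ z, fmap ψ φ t z = ψ 1 * u * φ 1)
    {Θ : OT k V U N φ →ₗ[k] OT k S W (eSub k V N e) φj}
    (hΘ : ∀ z u n, fmap ψ φ t z = ψ 1 * u * φ 1 → Θ (otL φ (u ⊗ₜ n)) = GG N e φj z n) (y) :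
    fwd hc bal (Θ y) = ψ 1 • y := by
  induction y using ot_ind with
  | h0 => rw [map_zero, map_zero, smul_zero]
  | hadd x y hx hy => rw [map_add, map_add, hx, hy, smul_add]
  | ht u n =>
    obtain ⟨z, hz⟩ := surj u
    rw [hΘ z u n hz, fwd_GG hc bal he te, hz, otL_bal, one_smul, otL_smul_tmul]

/-- The equivalence. -/
noncomputable def theEquiv [Module W (eSub k U (OT k V U N φ) e')]
    (hc : ∀ (r : S) (x : eSub k V N e), ((r • x : eSub k V N e) : N) = φi r • (x : N))
    (hd : ∀ (w : W) (x : eSub k U (OT k V U N φ) e'),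
      ((w • x : eSub k U (OT k V U N φ) e') : OT k V U N φ) = ψ w • (x : OT k V U N φ))
    (bal : ∀ s, ψ (φj s) * t = t * φ (φi s)) (he : e = φi 1) (he' : e' = ψ 1)
    (te : t * φ (φi 1) = t)
    (t1 : ψ 1 * t = t) (ker : ∀ z, fmap ψ φ t z = 0 → z ∈ Krel φi φj)
    (surj : ∀ u, ∃ z, fmap ψ φ t z = ψ 1 * u * φ 1) :
    OT k S W (eSub k V N e) φj ≃ₗ[W] eSub k U (OT k V U N φ) e' :=
  LinearEquiv.ofBijective
    { toFun := fun x => ⟨fwd hc bal x, fwd_mem hc bal he' x⟩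
      map_add' := fun x y => Subtype.ext (map_add _ _ _)
      map_smul' := fun w x => Subtype.ext ((fwd_smul hc bal w x).trans (hd w ⟨fwd hc bal x, fwd_mem hc bal he' x⟩).symm) } (by
    obtain ⟨Θ, hΘ⟩ := exTheta (N := N) hc he ker surj
    constructor
    · intro x y h
      have h' : fwd hc bal x = fwd hc bal y := congrArg Subtype.val h
      rw [← theta_fwd te t1 hc bal he hΘ x, h', theta_fwd te t1 hc bal he hΘ y]
    · intro y
      refine ⟨Θ y, Subtype.ext ?_⟩
      show fwd hc bal (Θ y) = y
      rw [fwd_theta hc bal he te surj hΘ, ← he']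
      exact eSub_fix (by rw [he', ← map_mul, mul_one]) y)

theorem theEquiv_val [Module W (eSub k U (OT k V U N φ) e')]
    (hc : ∀ (r : S) (x : eSub k V N e), ((r • x : eSub k V N e) : N) = φi r • (x : N))
    (hd : ∀ (w : W) (x : eSub k U (OT k V U N φ) e'),
      ((w • x : eSub k U (OT k V U N φ) e') : OT k V U N φ) = ψ w • (x : OT k V U N φ))
    (bal : ∀ s, ψ (φj s) * t = t * φ (φi s)) (he : e = φi 1) (he' : e' = ψ 1)
    (te : t * φ (φi 1) = t)
    (t1 : ψ 1 * t = t) (ker : ∀ z, fmap ψ φ t z = 0 → z ∈ Krel φi φj)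
    (surj : ∀ u, ∃ z, fmap ψ φ t z = ψ 1 * u * φ 1) (x) :
    (theEquiv hc hd bal he he' te t1 ker surj x : OT k V U N φ) = fwd hc bal x := rfl

section Gr
variable {AV : ℤ → Submodule k V} {AW : ℤ → Submodule k W} {AU : ℤ → Submodule k U}
  (hAV : IsAlgGrading k AV) (hAW : IsAlgGrading k AW) (hAU : IsAlgGrading k AU)
  (gφ : ∀ {c x}, x ∈ AV c → φ x ∈ AU c) (gψ : ∀ {c x}, x ∈ AW c → ψ x ∈ AU c)
  {b : ℤ} (gt : t ∈ AU (-b)) (ge : e ∈ AV 0)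

include hAU gψ gt in
theorem fwd_gr {grN : ℤ → Submodule k N} {m : ℤ} {x}
    (hx : x ∈ otGr k S W (eSub k V N e) φj AW (eSubGr k V N e grN) (m + b)) :
    fwd hc bal x ∈ otGr k V U N φ AU grN m := by
  have : otGr k S W (eSub k V N e) φj AW (eSubGr k V N e grN) (m + b) ≤
      (otGr k V U N φ AU grN m).comap (fwd hc bal) := by
    refine Submodule.span_le.2 ?_
    rintro _ ⟨c₁, c₂, w, x, hc12, hw, hx, rfl⟩
    refine Submodule.subset_span ⟨c₁ + -b, c₂, _, _, ?_, hAU.2.1 (gψ hw) gt, hx, fwd_tmul hc bal w x⟩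
    omega
  exact this hx

/-- homogeneous pieces of the image of `fmap`. -/
def DD (ψ : W →ₙₐ[k] U) (φ : V →ₙₐ[k] U) (t : U) (AW : ℤ → Submodule k W) (AV : ℤ → Submodule k V)
    (b c : ℤ) : Submodule k U :=
  Submodule.span k {u | ∃ c₁ c₂ w v, c₁ + c₂ - b = c ∧ w ∈ AW c₁ ∧ v ∈ AV c₂ ∧
    u = fmap ψ φ t (w ⊗ₜ v)}

include hAV hAW in
theorem DD_range (z) : fmap ψ φ t z ∈ ⨆ c, DD ψ φ t AW AV b c := by
  induction z using TensorProduct.induction_on with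
  | zero => rw [map_zero]; exact Submodule.zero_mem _
  | add x y hx hy => rw [map_add]; exact Submodule.add_mem _ hx hy
  | tmul w v =>
    have hw : w ∈ ⨆ c, AW c := by rw [hAW.2.2.submodule_iSup_eq_top]; trivial
    have hv : v ∈ ⨆ c, AV c := by rw [hAV.2.2.submodule_iSup_eq_top]; trivial
    refine Submodule.iSup_induction AW (motive := fun w => fmap ψ φ t (w ⊗ₜ v) ∈ ⨆ c, DD ψ φ t AW AV b c)
      hw ?_ ?_ ?_
    · intro c w hw
      refine Submodule.iSup_induction AV (motive := fun v => fmap ψ φ t (w ⊗ₜ v) ∈ ⨆ c, DD ψ φ t AW AV b c)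
        hv ?_ ?_ ?_
      · intro c' v hv
        exact Submodule.mem_iSup_of_mem (c + c' - b) (Submodule.subset_span ⟨c, c', w, v, rfl, hw, hv, rfl⟩)
      · rw [TensorProduct.tmul_zero, map_zero]; exact Submodule.zero_mem _
      · intro x y hx hy; rw [TensorProduct.tmul_add, map_add]; exact Submodule.add_mem _ hx hy
    · rw [TensorProduct.zero_tmul, map_zero]; exact Submodule.zero_mem _
    · intro x y hx hy; rw [TensorProduct.add_tmul, map_add]; exact Submodule.add_mem _ hx hy

include hAV hAW hAU gφ gψ gt ge in
theorem theta_gr (surj : ∀ u, ∃ z, fmap ψ φ t z = ψ 1 * u * φ 1)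
    {Θ : OT k V U N φ →ₗ[k] OT k S W (eSub k V N e) φj}
    (hΘ : ∀ z u n, fmap ψ φ t z = ψ 1 * u * φ 1 → Θ (otL φ (u ⊗ₜ n)) = GG N e φj z n)
    {grN : ℤ → Submodule k N} (hN : IsModGrading k AV grN) {m : ℤ} {y}
    (hy : y ∈ otGr k V U N φ AU grN m) :
    Θ y ∈ otGr k S W (eSub k V N e) φj AW (eSubGr k V N e grN) (m + b) := by
  suffices h : otGr k V U N φ AU grN m ≤
      (otGr k S W (eSub k V N e) φj AW (eSubGr k V N e grN) (m + b)).comap Θ from h hy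
  refine Submodule.span_le.2 ?_
  rintro _ ⟨c₁, c₂, u, n, hc12, hu, hn, rfl⟩
  have h1 : ψ 1 * u * φ 1 ∈ AU c₁ := by
    have := hAU.2.1 (hAU.2.1 (gψ hAW.1) hu) (gφ hAV.1)
    rwa [zero_add, add_zero] at this
  have hD : ∀ c, DD ψ φ t AW AV b c ≤ AU c := by
    intro c
    refine Submodule.span_le.2 ?_
    rintro _ ⟨d₁, d₂, w, v, hd, hw, hv, rfl⟩
    have := hAU.2.1 (hAU.2.1 (gψ hw) gt) (gφ hv)
    rw [show d₁ + -b + d₂ = c by omega] at this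
    exact this
  have h2 : ψ 1 * u * φ 1 ∈ DD ψ φ t AW AV b c₁ := by
    refine homog_mem (D := DD ψ φ t AW AV b) hAU.2.2 hD h1 ?_
    obtain ⟨z, hz⟩ := surj u
    rw [← hz]
    exact DD_range hAV hAW z
  have h3 : ∀ y ∈ DD ψ φ t AW AV b c₁, ∃ z, fmap ψ φ t z = y ∧
      GG N e φj z n ∈ otGr k S W (eSub k V N e) φj AW (eSubGr k V N e grN) (m + b) := by
    intro y hy
    refine Submodule.span_induction (p := fun y _ => ∃ z, fmap ψ φ t z = y ∧
      GG N e φj z n ∈ otGr k S W (eSub k V N e) φj AW (eSubGr k V N e grN) (m + b)) ?_ ?_ ?_ ?_ hy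
    · rintro _ ⟨d₁, d₂, w, v, hd, hw, hv, rfl⟩
      refine ⟨_, rfl, ?_⟩
      rw [GG_tmul]
      refine Submodule.subset_span ⟨d₁, 0 + (d₂ + c₂), w, _, by omega, hw, ?_, rfl⟩
      exact hN.2 ge (hN.2 hv hn)
    · exact ⟨0, map_zero _, by rw [map_zero]; exact Submodule.zero_mem _⟩
    · rintro x y _ _ ⟨a, rfl, ha⟩ ⟨a', rfl, ha'⟩
      exact ⟨a + a', map_add _ _ _, by rw [map_add]; exact Submodule.add_mem _ ha ha'⟩
    · rintro c x _ ⟨a, rfl, ha⟩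
      exact ⟨c • a, map_smul _ _ _, by rw [map_smul]; exact Submodule.smul_mem _ _ ha⟩
  obtain ⟨z, hz, hz'⟩ := h3 _ h2
  show Θ (otL φ (u ⊗ₜ n)) ∈ otGr k S W (eSub k V N e) φj AW (eSubGr k V N e grN) (m + b)
  rw [hΘ z u n hz]
  exact hz'

include hAV hAW hAU gφ gψ gt ge te t1 ker surj in
theorem fwd_gr_iff (he : e = φi 1) {grN : ℤ → Submodule k N} (hN : IsModGrading k AV grN) {m : ℤ} {x} :
    x ∈ otGr k S W (eSub k V N e) φj AW (eSubGr k V N e grN) (m + b) ↔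
    fwd hc bal x ∈ otGr k V U N φ AU grN m := by
  refine ⟨fwd_gr hc bal hAU gψ gt, fun h => ?_⟩
  obtain ⟨Θ, hΘ⟩ := exTheta (N := N) hc he ker surj
  rw [← theta_fwd te t1 hc bal he hΘ x]
  exact theta_gr hAV hAW hAU gφ gψ gt ge surj hΘ hN h

end Gr
end Mods
end Abstract
end KLR

open KLR TensorProduct in
set_option maxHeartbeats 1000000 in
/-- For `i ≠ j` there is a natural isomorphism of graded modules
`q^{-(α_i,α_j)} F_j^Λ E_i^Λ N ≅ E_i^Λ F_j^Λ N`. -/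
theorem FjLambda_EiLambda_commute {k : Type} [Field k] {I : Type} [Fintype I]
    [DecidableEq I] (C : CartanDatum k I) (Λ : I → ℕ) (β : I → ℕ) (i j : I)
    (hij : i ≠ j) (n : ℕ) (hn : ht I β = n)
    -- the homomorphism through which `E_i^Λ N` is an `R^Λ(β)`-module
    (φiS : cAlg C Λ n β →ₙₐ[k] cAlg C Λ (n + 1) (addA β i)) (hφiS : IsUpRc C Λ i φiS)
    -- the homomorphism through which `F_j^Λ` (over `β`) is formed
    (φjS : cAlg C Λ n β →ₙₐ[k] cAlg C Λ (n + 1) (addA β j)) (hφjS : IsUpRc C Λ j φjS)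
    -- the homomorphism through which `F_j^Λ` (over `β+α_i`) is formed
    (φjV : cAlg C Λ (n + 1) (addA β i) →ₙₐ[k] cAlg C Λ (n + 2) (addA (addA β i) j))
    (hφjV : IsUpRc C Λ j φjV)
    -- the homomorphism through which `E_i^Λ` (over `β+α_j`) acts
    (ψ : cAlg C Λ (n + 1) (addA β j) →ₙₐ[k] cAlg C Λ (n + 2) (addA (addA β i) j))
    (hψ : IsUpRc C Λ i ψ) :
    ∃ Φ : ∀ (N : Type) [AddCommGroup N] [Module k N]
        [Module (cAlg C Λ (n + 1) (addA β i)) N]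
        [IsScalarTower k (cAlg C Λ (n + 1) (addA β i)) N]
        (d1 : EData k N (eRc C Λ n β i) φiS)
        (d2 : EData k (OT k (cAlg C Λ (n + 1) (addA β i))
            (cAlg C Λ (n + 2) (addA (addA β i) j)) N φjV)
          (toCB C Λ (β := addA (addA β i) j) (eR C (n + 1) (addA β j) i)) ψ),
        (letI := d1.inst; letI := d1.tower; letI := d2.inst;
          (OT k (cAlg C Λ n β) (cAlg C Λ (n + 1) (addA β j))
              ↥(eSub k (cAlg C Λ (n + 1) (addA β i)) N (eRc C Λ n β i)) φjS
            ≃ₗ[cAlg C Λ (n + 1) (addA β j)]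
          ↥(eSub k (cAlg C Λ (n + 2) (addA (addA β i) j))
              (OT k (cAlg C Λ (n + 1) (addA β i))
                (cAlg C Λ (n + 2) (addA (addA β i) j)) N φjV)
              (toCB C Λ (β := addA (addA β i) j) (eR C (n + 1) (addA β j) i))))),
      -- gradedness: `Φ` shifts degrees by `(α_i, α_j)`
      (∀ (𝒜V : ℤ → Submodule k (cAlg C Λ (n + 1) (addA β i)))
        (_ : IsKLRGrading C (toCB C Λ) 𝒜V)
        (𝒜W : ℤ → Submodule k (cAlg C Λ (n + 1) (addA β j)))
        (_ : IsKLRGrading C (toCB C Λ) 𝒜W)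
        (𝒜U : ℤ → Submodule k (cAlg C Λ (n + 2) (addA (addA β i) j)))
        (_ : IsKLRGrading C (toCB C Λ) 𝒜U)
        (N : Type) (_ : AddCommGroup N) (_ : Module k N)
        (_ : Module (cAlg C Λ (n + 1) (addA β i)) N)
        (_ : IsScalarTower k (cAlg C Λ (n + 1) (addA β i)) N)
        (d1 : EData k N (eRc C Λ n β i) φiS)
        (d2 : EData k (OT k (cAlg C Λ (n + 1) (addA β i))
            (cAlg C Λ (n + 2) (addA (addA β i) j)) N φjV)
          (toCB C Λ (β := addA (addA β i) j) (eR C (n + 1) (addA β j) i)) ψ),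
        letI := d1.inst; letI := d1.tower; letI := d2.inst;
        ∀ (grN : ℤ → Submodule k N) (_ : IsModGrading k 𝒜V grN) (m : ℤ)
        (x : OT k (cAlg C Λ n β) (cAlg C Λ (n + 1) (addA β j))
          ↥(eSub k (cAlg C Λ (n + 1) (addA β i)) N (eRc C Λ n β i)) φjS),
        (x ∈ otGr k (cAlg C Λ n β) (cAlg C Λ (n + 1) (addA β j))
            ↥(eSub k (cAlg C Λ (n + 1) (addA β i)) N (eRc C Λ n β i)) φjS 𝒜W
            (eSubGr k (cAlg C Λ (n + 1) (addA β i)) N (eRc C Λ n β i) grN)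
            (m + B C i j) ↔
          Φ N d1 d2 x ∈ eSubGr k (cAlg C Λ (n + 2) (addA (addA β i) j))
            (OT k (cAlg C Λ (n + 1) (addA β i))
              (cAlg C Λ (n + 2) (addA (addA β i) j)) N φjV)
            (toCB C Λ (β := addA (addA β i) j) (eR C (n + 1) (addA β j) i))
            (otGr k (cAlg C Λ (n + 1) (addA β i))
              (cAlg C Λ (n + 2) (addA (addA β i) j)) N φjV 𝒜U grN) m)) ∧
      -- naturality in `N`
      (∀ (N N' : Type) (_ : AddCommGroup N) (_ : Module k N)
        (_ : Module (cAlg C Λ (n + 1) (addA β i)) N)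
        (_ : IsScalarTower k (cAlg C Λ (n + 1) (addA β i)) N)
        (_ : AddCommGroup N') (_ : Module k N')
        (_ : Module (cAlg C Λ (n + 1) (addA β i)) N')
        (_ : IsScalarTower k (cAlg C Λ (n + 1) (addA β i)) N')
        (d1 : EData k N (eRc C Λ n β i) φiS)
        (d2 : EData k (OT k (cAlg C Λ (n + 1) (addA β i))
            (cAlg C Λ (n + 2) (addA (addA β i) j)) N φjV)
          (toCB C Λ (β := addA (addA β i) j) (eR C (n + 1) (addA β j) i)) ψ)
        (d1' : EData k N' (eRc C Λ n β i) φiS)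
        (d2' : EData k (OT k (cAlg C Λ (n + 1) (addA β i))
            (cAlg C Λ (n + 2) (addA (addA β i) j)) N' φjV)
          (toCB C Λ (β := addA (addA β i) j) (eR C (n + 1) (addA β j) i)) ψ),
        letI := d1.inst; letI := d1.tower; letI := d2.inst;
        letI := d1'.inst; letI := d1'.tower; letI := d2'.inst;
        ∀ (f : N →ₗ[cAlg C Λ (n + 1) (addA β i)] N')
        -- the induced map `E_i^Λ f`
        (gE : ↥(eSub k (cAlg C Λ (n + 1) (addA β i)) N (eRc C Λ n β i)) →ₗ[k]
              ↥(eSub k (cAlg C Λ (n + 1) (addA β i)) N' (eRc C Λ n β i)))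
        (_ : ∀ x, (gE x).val = f x.val)
        -- the induced map `F_j^Λ E_i^Λ f`
        (gFE : OT k (cAlg C Λ n β) (cAlg C Λ (n + 1) (addA β j))
            ↥(eSub k (cAlg C Λ (n + 1) (addA β i)) N (eRc C Λ n β i)) φjS →ₗ[k]
          OT k (cAlg C Λ n β) (cAlg C Λ (n + 1) (addA β j))
            ↥(eSub k (cAlg C Λ (n + 1) (addA β i)) N' (eRc C Λ n β i)) φjS)
        (_ : ∀ (b : cAlg C Λ (n + 1) (addA β j))
            (x : ↥(eSub k (cAlg C Λ (n + 1) (addA β i)) N (eRc C Λ n β i))),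
          gFE (OTmk k (cAlg C Λ n β) (cAlg C Λ (n + 1) (addA β j))
              ↥(eSub k (cAlg C Λ (n + 1) (addA β i)) N (eRc C Λ n β i)) φjS (b ⊗ₜ[k] x))
            = OTmk k (cAlg C Λ n β) (cAlg C Λ (n + 1) (addA β j))
              ↥(eSub k (cAlg C Λ (n + 1) (addA β i)) N' (eRc C Λ n β i)) φjS
              (b ⊗ₜ[k] gE x))
        -- the induced map `F_j^Λ f`
        (gF : OT k (cAlg C Λ (n + 1) (addA β i))
            (cAlg C Λ (n + 2) (addA (addA β i) j)) N φjV →ₗ[k]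
          OT k (cAlg C Λ (n + 1) (addA β i))
            (cAlg C Λ (n + 2) (addA (addA β i) j)) N' φjV)
        (_ : ∀ (b : cAlg C Λ (n + 2) (addA (addA β i) j)) (m : N),
          gF (OTmk k (cAlg C Λ (n + 1) (addA β i))
              (cAlg C Λ (n + 2) (addA (addA β i) j)) N φjV (b ⊗ₜ[k] m))
            = OTmk k (cAlg C Λ (n + 1) (addA β i))
              (cAlg C Λ (n + 2) (addA (addA β i) j)) N' φjV (b ⊗ₜ[k] f m))
        -- the induced map `E_i^Λ F_j^Λ f`
        (gEF : ↥(eSub k (cAlg C Λ (n + 2) (addA (addA β i) j))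
            (OT k (cAlg C Λ (n + 1) (addA β i))
              (cAlg C Λ (n + 2) (addA (addA β i) j)) N φjV)
            (toCB C Λ (β := addA (addA β i) j) (eR C (n + 1) (addA β j) i))) →ₗ[k]
          ↥(eSub k (cAlg C Λ (n + 2) (addA (addA β i) j))
            (OT k (cAlg C Λ (n + 1) (addA β i))
              (cAlg C Λ (n + 2) (addA (addA β i) j)) N' φjV)
            (toCB C Λ (β := addA (addA β i) j) (eR C (n + 1) (addA β j) i))))
        (_ : ∀ x, (gEF x).val = gF x.val),
        ∀ z, Φ N' d1' d2' (gFE z) = gEF (Φ N d1 d2 z)) := by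
  have he : eRc C Λ n β i = φiS 1 := by
    rw [up_one rfl hφiS]; exact toCB_eR Λ rfl
  have he' : toCB C Λ (β := addA (addA β i) j) (eR C (n + 1) (addA β j) i) = ψ 1 := by
    rw [up_one (addA_comm β i j) hψ]; exact toCB_eR Λ (addA_comm β i j)
  have bal := tq_bal hφiS hφjS hφjV hψ
  have te := tq_e hφiS hφjV
  have t1 := tq_one hψ
  have ker := ker_main hij hφiS hφjS hφjV hψ
  have surj := fmap_surj hij hφjV hψ
  refine ⟨fun N _ _ _ _ d1 d2 => @theEquiv k _ _ _ _ _ _ _ _ _ _ _ _ _ φiS φjS φjV ψ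
    (tq C Λ n _ i j) _ _ N _ _ _ _ d1.inst d1.tower d2.inst d1.compat d2.compat bal he he' te t1
    ker surj, ?_, ?_⟩
  · intro 𝒜V hV 𝒜W hW 𝒜U hU N _ _ _ _ d1 d2
    letI := d1.inst
    letI := d1.tower
    letI := d2.inst
    intro grN hN m x
    refine fwd_gr_iff d1.compat bal te t1 ker surj hV.1 hW.1 hU.1
      (fun hx => up_graded rfl hφjV hV hU hx) (fun hx => up_graded (addA_comm β i j) hψ hW hU hx)
      (tq_deg hU) ?_ he hN
    rw [he, up_one rfl hφiS]
    exact eRdeg hV i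
  · intro N N' _ _ _ _ _ _ _ _ d1 d2 d1' d2'
    letI := d1.inst
    letI := d1.tower
    letI := d2.inst
    letI := d1'.inst
    letI := d1'.tower
    letI := d2'.inst
    intro f gE hgE gFE hgFE gF hgF gEF hgEF z
    apply Subtype.ext
    rw [hgEF]
    show fwd d1'.compat bal (gFE z) = gF (fwd d1.compat bal z)
    induction z using ot_ind with
    | h0 => rw [map_zero, map_zero, map_zero, map_zero]
    | hadd x y hx hy => rw [map_add, map_add, map_add, map_add, hx, hy]
    | ht b m =>
      refine (congrArg (fwd d1'.compat bal) (hgFE b m)).trans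
        ((fwd_tmul d1'.compat bal b (gE m)).trans ?_)
      refine Eq.trans ?_ (congrArg gF (fwd_tmul d1.compat bal b m)).symm
      rw [hgE]
      exact (hgF _ _).symm
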